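/- arXiv:2509.11710 — 5 statements merged into one kernel-verified Lean document; each statement's English description precedes it below -/
import Mathlib

section
/- Let d ≥ 2. For every ε > 0 there exists a compact set E ⊆ ℝ^d such that the Hausdorff dimension of E is strictly greater than d/2 − ε and yet the dot product set Π(E) has one-dimensional Lebesgue measure zero. -/
/-!
Write the coordinates in base `2`, and let all digits vanish in the gaps `k! ≤ i < 2 * k! + k`. With
`N = 2 ^ k!`, each coordinate is then within `N ^ (-2) * 2 ^ (-k)` of an integer multiple of
`1 / N`, so a dot product of two such points is within `O(N ^ (-2) * 2 ^ (-k))` of one of `O(N ^ 2)`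
multiples of `1 / N ^ 2`. Hence the dot products are covered by intervals of total length
`O(2 ^ (-k))`, for every `k`.

Deleting the digits in the gaps maps the set of admissible numbers onto `[0, 1]`. Among integers
with prescribed zero digits, deleting these zeros does not increase distances, since it sends an
integer to its rank among them. This makes the map Hölder of exponent `r` whenever the first `n`
positions contain at least `r * n - O(1)` free ones. As `(k - 1)!` is negligible against `k!`, the
free positions have lower density `1 / 2`: any `r < 1 / 2` is allowed, and the `d`-fold power of the
set has dimension at least `d / 2`.
-/

open MeasureTheory
open scoped RealInnerProductSpace ENNReal

/-- The dot product set `Π(E) = {x · y : x, y ∈ E}`. -/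
def dotSet {d : ℕ} (E : Set (EuclideanSpace ℝ (Fin d))) : Set ℝ :=
  {t | ∃ x ∈ E, ∃ y ∈ E, ⟪x, y⟫ = t}

open Set Filter
open scoped NNReal Nat Topology

section HausdorffDimension

variable {α X Y ι : Type*} [Fintype ι]

section Holder

variable [EMetricSpace X] [EMetricSpace Y] {f : α → Y} {g : α → X} {C r : ℝ≥0}

lemma dimH_range_le_of_edist_le (hr : 0 < r)
    (h : ∀ a c, edist (f a) (f c) ≤ C * edist (g a) (g c) ^ (r : ℝ)) :
    dimH (range f) ≤ dimH (range g) / r := by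
  rcases isEmpty_or_nonempty α with hα | hα
  · simp [range_eq_empty]
  have hfactors : f.FactorsThrough g := fun a c hac ↦ by
    simpa [hac, ENNReal.zero_rpow_of_pos, hr] using h a c
  have : Nonempty Y := hα.map f
  obtain ⟨e, rfl⟩ := (Function.factorsThrough_iff f).1 hfactors
  have he : HolderOnWith C r e (range g) := by
    rintro _ ⟨a, rfl⟩ _ ⟨c, rfl⟩
    exact h a c
  rw [range_comp]
  exact he.dimH_image_le hr

lemma dimH_pi_range_le_of_edist_le (hr : 0 < r)
    (h : ∀ a c, edist (f a) (f c) ≤ C * edist (g a) (g c) ^ (r : ℝ)) :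
    dimH (univ.pi fun _ : ι ↦ range f) ≤ dimH (univ.pi fun _ : ι ↦ range g) / r := by
  rw [← range_piMap, ← range_piMap]
  refine dimH_range_le_of_edist_le (C := C) hr fun z w ↦ edist_pi_le_iff.2 fun i ↦ ?_
  refine (h (z i) (w i)).trans ?_
  gcongr
  exact edist_le_pi_edist (Pi.map (fun _ ↦ g) z) (Pi.map (fun _ ↦ g) w) i

end Holder

lemma dimH_Icc_pi {a b : ι → ℝ} (hab : ∀ i, a i < b i) : dimH (Icc a b) = Fintype.card ι := by
  rw [Real.dimH_of_nonempty_interior, Module.finrank_fintype_fun_eq_card]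
  rw [← pi_univ_Icc, interior_pi_set finite_univ, univ_pi_nonempty_iff]
  simpa only [interior_Icc, nonempty_Ioo] using hab

end HausdorffDimension

section DigitPrefix

variable {b : ℕ}

/-- The integer with base `b` digits `a 0, …, a (n - 1)`, the most significant one first. It is the
integer part of `b ^ n * Real.ofDigits a`, unless all later digits are `b - 1`. -/
def digitPrefix (a : ℕ → Fin b) : ℕ → ℕ
  | 0 => 0
  | n + 1 => b * digitPrefix a n + a n

lemma pow_mul_ofDigits (a : ℕ → Fin b) (n : ℕ) :
    (b : ℝ) ^ n * Real.ofDigits a = digitPrefix a n + Real.ofDigits fun i ↦ a (i + n) := by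
  have hb : (b : ℝ) ≠ 0 := by exact_mod_cast (a 0).pos.ne'
  have hsum : ∀ n, (b : ℝ) ^ n * ∑ i ∈ Finset.range n, Real.ofDigitsTerm a i = digitPrefix a n := by
    intro n
    induction n with
    | zero => simp [digitPrefix]
    | succ n ih =>
      rw [Finset.sum_range_succ, mul_add, pow_succ', mul_assoc, ih, ← pow_succ',
        Real.ofDigitsTerm, mul_left_comm, mul_inv_cancel₀ (pow_ne_zero _ hb)]
      simp [digitPrefix]
  rw [Real.ofDigits_eq_sum_add_ofDigits a n, mul_add, hsum,
    mul_inv_cancel_left₀ (pow_ne_zero _ hb)]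

lemma digitPrefix_le (a : ℕ → Fin b) (n : ℕ) : digitPrefix a n ≤ b ^ n := by
  have h : (digitPrefix a n : ℝ) ≤ b ^ n * Real.ofDigits a := by
    rw [pow_mul_ofDigits]
    exact le_add_of_nonneg_right (Real.ofDigits_nonneg _)
  exact_mod_cast h.trans (mul_le_of_le_one_right (by positivity) (Real.ofDigits_le_one a))

lemma abs_pow_mul_ofDigits_sub_sub_digitPrefix_le (a c : ℕ → Fin b) (n : ℕ) :
    |(b : ℝ) ^ n * (Real.ofDigits a - Real.ofDigits c) -
      ((digitPrefix a n : ℝ) - digitPrefix c n)| ≤ 1 := by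
  rw [mul_sub, pow_mul_ofDigits, pow_mul_ofDigits, abs_le]
  constructor <;>
    linarith [Real.ofDigits_nonneg fun i ↦ a (i + n), Real.ofDigits_nonneg fun i ↦ c (i + n),
      Real.ofDigits_le_one fun i ↦ a (i + n), Real.ofDigits_le_one fun i ↦ c (i + n)]

end DigitPrefix

section SpreadDigits

variable {b : ℕ} [NeZero b] {p : ℕ → Prop} [DecidablePred p]

/-- The digit sequence with the digits of `a`, in order, at the positions satisfying `p`, and with
`0` at all other positions. -/
def spreadDigits (p : ℕ → Prop) [DecidablePred p] (a : ℕ → Fin b) : ℕ → Fin b :=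
  fun n ↦ if p n then a (Nat.count p n) else 0

lemma continuous_spreadDigits : Continuous (spreadDigits (b := b) p) := by
  refine continuous_pi fun n ↦ ?_
  unfold spreadDigits
  split_ifs <;> fun_prop

lemma digitPrefix_sub_le_spreadDigits (a c : ℕ → Fin b) (n : ℕ)
    (h : digitPrefix c (Nat.count p n) ≤ digitPrefix a (Nat.count p n)) :
    (digitPrefix a (Nat.count p n) : ℤ) - digitPrefix c (Nat.count p n) ≤
      digitPrefix (spreadDigits p a) n - digitPrefix (spreadDigits p c) n := by
  induction n with
  | zero => simp [digitPrefix]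
  | succ n ih =>
    by_cases hn : p n
    · simp only [Nat.count_succ, hn, if_true, digitPrefix, spreadDigits] at h ⊢
      have hle : digitPrefix c (Nat.count p n) ≤ digitPrefix a (Nat.count p n) := by
        refine Nat.le_of_lt_succ (Nat.lt_of_mul_lt_mul_left (a := b) ?_)
        calc b * digitPrefix c (Nat.count p n)
            ≤ b * digitPrefix a (Nat.count p n) + a (Nat.count p n) :=
              (Nat.le_add_right _ _).trans h
          _ < b * (digitPrefix a (Nat.count p n)).succ := by
            rw [Nat.mul_succ]
            gcongr
            exact Fin.isLt _
      have hscaled := mul_le_mul_of_nonneg_left (ih hle) (Int.natCast_nonneg b)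
      push_cast
      linarith
    · simp only [Nat.count_succ, hn, if_false, add_zero, digitPrefix, spreadDigits] at h ⊢
      have hb : (1 : ℤ) ≤ b := by exact_mod_cast NeZero.one_le
      have hnonneg : (0 : ℤ) ≤ digitPrefix a (Nat.count p n) - digitPrefix c (Nat.count p n) :=
        sub_nonneg.2 (by exact_mod_cast h)
      have hscaled := le_mul_of_one_le_left (hnonneg.trans (ih h)) hb
      push_cast
      rw [Fin.val_zero]
      linarith [ih h]

lemma abs_digitPrefix_sub_le_spreadDigits (a c : ℕ → Fin b) (n : ℕ) :
    |(digitPrefix a (Nat.count p n) : ℝ) - digitPrefix c (Nat.count p n)| ≤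
      |(digitPrefix (spreadDigits p a) n : ℝ) - digitPrefix (spreadDigits p c) n| := by
  wlog h : digitPrefix c (Nat.count p n) ≤ digitPrefix a (Nat.count p n) generalizing a c
  · simpa only [abs_sub_comm] using this c a (le_of_not_ge h)
  rw [abs_of_nonneg (sub_nonneg.2 (by exact_mod_cast h))]
  exact le_trans (by exact_mod_cast digitPrefix_sub_le_spreadDigits a c n h) (le_abs_self _)

lemma abs_ofDigits_sub_le_spreadDigits (a c : ℕ → Fin b) (n : ℕ) :
    |Real.ofDigits a - Real.ofDigits c| ≤ ((b : ℝ) ^ Nat.count p n)⁻¹ *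
      (b ^ n * |Real.ofDigits (spreadDigits p a) - Real.ofDigits (spreadDigits p c)| + 2) := by
  have hb : (0 : ℝ) < b := by exact_mod_cast NeZero.pos b
  rw [← div_eq_inv_mul, le_div_iff₀' (by positivity)]
  rw [← abs_of_pos (pow_pos hb (Nat.count p n)), ← abs_of_pos (pow_pos hb n), ← abs_mul, ← abs_mul]
  have h := abs_digitPrefix_sub_le_spreadDigits (p := p) a c n
  have h₁ := abs_pow_mul_ofDigits_sub_sub_digitPrefix_le a c (Nat.count p n)
  have h₂ := abs_pow_mul_ofDigits_sub_sub_digitPrefix_le (spreadDigits p a) (spreadDigits p c) n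
  have h₁' := (abs_sub_abs_le_abs_sub _ _).trans h₁
  rw [abs_sub_comm] at h₂
  have h₂' := (abs_sub_abs_le_abs_sub _ _).trans h₂
  linarith

end SpreadDigits

lemma le_mul_rpow_of_forall_le_pow {q r t u A : ℝ} (hq₀ : 0 < q) (hq₁ : q < 1) (hr : 0 < r)
    (ht₀ : 0 ≤ t) (ht₁ : t ≤ 1) (hA : 0 ≤ A) (h : ∀ n : ℕ, t ≤ q ^ n → u ≤ A * (q ^ n) ^ r) :
    u ≤ A / q ^ r * t ^ r := by
  rcases ht₀.eq_or_lt with rfl | ht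
  · have hlim : Tendsto (fun n : ℕ ↦ A * (q ^ n) ^ r) atTop (𝓝 (A * 0 ^ r)) :=
      ((tendsto_pow_atTop_nhds_zero_of_lt_one hq₀.le hq₁).rpow_const (Or.inr hr.le)).const_mul A
    rw [Real.zero_rpow hr.ne', mul_zero] at hlim ⊢
    exact ge_of_tendsto' hlim fun n ↦ h n (by positivity)
  · obtain ⟨n, hlt, hle⟩ := exists_nat_pow_near_of_lt_one ht ht₁ hq₀ hq₁
    calc u ≤ A * (q ^ n) ^ r := h n hle
      _ = A / q ^ r * (q ^ (n + 1)) ^ r := by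
        rw [pow_succ, Real.mul_rpow (by positivity) hq₀.le]
        field_simp
      _ ≤ A / q ^ r * t ^ r := by gcongr

section SparseDigitSet

variable {b : ℕ} [NeZero b] {p : ℕ → Prop} [DecidablePred p]

/-- The numbers in `[0, 1]` that have a base `b` expansion whose digits vanish at all positions not
satisfying `p`. Position `0` is the first one after the point. -/
def sparseDigitSet (b : ℕ) [NeZero b] (p : ℕ → Prop) [DecidablePred p] : Set ℝ :=
  range fun a : ℕ → Fin b ↦ Real.ofDigits (spreadDigits p a)

lemma isCompact_sparseDigitSet : IsCompact (sparseDigitSet b p) :=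
  isCompact_range (Real.continuous_ofDigits.comp continuous_spreadDigits)

lemma sparseDigitSet_subset_Icc : sparseDigitSet b p ⊆ Icc 0 1 :=
  range_subset_iff.2 fun _ ↦ ⟨Real.ofDigits_nonneg _, Real.ofDigits_le_one _⟩

lemma exists_abs_sub_div_pow_le_of_mem_sparseDigitSet {n m : ℕ} (hnm : n ≤ m)
    (hgap : ∀ i, n ≤ i → i < m → ¬ p i) {x : ℝ} (hx : x ∈ sparseDigitSet b p) :
    ∃ q ≤ b ^ n, |x - (q : ℝ) / (b ^ n : ℕ)| ≤ ((b : ℝ) ^ m)⁻¹ := by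
  obtain ⟨a, rfl⟩ := hx
  have hb : (b : ℝ) ≠ 0 := by exact_mod_cast NeZero.ne b
  refine ⟨digitPrefix (spreadDigits p a) n, digitPrefix_le _ _, ?_⟩
  have hsplit : Real.ofDigits (spreadDigits p a) -
      (digitPrefix (spreadDigits p a) n : ℝ) / (b ^ n : ℕ) =
        ((b : ℝ) ^ n)⁻¹ * Real.ofDigits fun i ↦ spreadDigits p a (i + n) := by
    have h := pow_mul_ofDigits (spreadDigits p a) n
    push_cast
    field_simp
    linarith
  have htail : |Real.ofDigits (fun i ↦ spreadDigits p a (i + n)) -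
      Real.ofDigits fun _ ↦ (0 : Fin b)| ≤ ((b : ℝ) ^ (m - n))⁻¹ :=
    Real.abs_ofDigits_sub_ofDigits_le fun i hi ↦
      if_neg (hgap (i + n) (by omega) (by omega))
  have hzero : Real.ofDigits (fun _ ↦ (0 : Fin b)) = 0 := by
    simp [Real.ofDigits, Real.ofDigitsTerm]
  rw [hzero, sub_zero] at htail
  rw [hsplit, abs_mul, abs_of_nonneg (by positivity)]
  calc ((b : ℝ) ^ n)⁻¹ * |Real.ofDigits fun i ↦ spreadDigits p a (i + n)|
      ≤ ((b : ℝ) ^ n)⁻¹ * ((b : ℝ) ^ (m - n))⁻¹ := by gcongr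
    _ = ((b : ℝ) ^ m)⁻¹ := by rw [← mul_inv, ← pow_add, Nat.add_sub_cancel' hnm]

lemma abs_ofDigits_sub_le_mul_rpow_spreadDigits (hb : 1 < b) {r C : ℝ} (hr : 0 < r)
    (hp : ∀ n : ℕ, r * n ≤ Nat.count p n + C) (a c : ℕ → Fin b) :
    |Real.ofDigits a - Real.ofDigits c| ≤ 3 * (b : ℝ) ^ C / (b : ℝ)⁻¹ ^ r *
      |Real.ofDigits (spreadDigits p a) - Real.ofDigits (spreadDigits p c)| ^ r := by
  have hb' : (1 : ℝ) < b := by exact_mod_cast hb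
  refine le_mul_rpow_of_forall_le_pow (by positivity) (inv_lt_one_of_one_lt₀ hb') hr
    (abs_nonneg _) ?_ (by positivity) fun n hn ↦ ?_
  · exact Real.dist_le_of_mem_Icc_01 (sparseDigitSet_subset_Icc ⟨a, rfl⟩)
      (sparseDigitSet_subset_Icc ⟨c, rfl⟩)
  have hcount : ((b : ℝ) ^ Nat.count p n)⁻¹ ≤ b ^ C * ((b : ℝ)⁻¹ ^ n) ^ r := by
    rw [← Real.rpow_natCast, ← Real.rpow_neg (by positivity), inv_pow, ← Real.rpow_natCast,
      ← Real.rpow_neg (by positivity), ← Real.rpow_mul (by positivity),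
      ← Real.rpow_add (by positivity)]
    exact Real.rpow_le_rpow_of_exponent_le hb'.le (by linarith [hp n])
  calc |Real.ofDigits a - Real.ofDigits c| ≤ _ := abs_ofDigits_sub_le_spreadDigits (p := p) a c n
    _ ≤ (b ^ C * ((b : ℝ)⁻¹ ^ n) ^ r) * (b ^ n * (b : ℝ)⁻¹ ^ n + 2) := by gcongr
    _ = 3 * (b : ℝ) ^ C * ((b : ℝ)⁻¹ ^ n) ^ r := by
      rw [← mul_pow, mul_inv_cancel₀ (by positivity)]
      ring

lemma card_mul_le_dimH_pi_sparseDigitSet (ι : Type*) [Fintype ι] (hb : 1 < b) {r : ℝ≥0} {C : ℝ}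
    (hp : ∀ n : ℕ, r * n ≤ Nat.count p n + C) :
    Fintype.card ι * (r : ℝ≥0∞) ≤ dimH (univ.pi fun _ : ι ↦ sparseDigitSet b p) := by
  rcases eq_zero_or_pos r with rfl | hr
  · simp
  have hholder : ∀ a c : ℕ → Fin b, edist (Real.ofDigits a) (Real.ofDigits c) ≤
      (3 * (b : ℝ) ^ C / (b : ℝ)⁻¹ ^ (r : ℝ)).toNNReal *
        edist (Real.ofDigits (spreadDigits p a)) (Real.ofDigits (spreadDigits p c)) ^ (r : ℝ) := by
    intro a c
    rw [edist_dist, edist_dist, ENNReal.ofReal_rpow_of_nonneg dist_nonneg r.coe_nonneg,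
      ← ENNReal.ofReal, ← ENNReal.ofReal_mul (by positivity)]
    exact ENNReal.ofReal_le_ofReal
      (abs_ofDigits_sub_le_mul_rpow_spreadDigits hb (by exact_mod_cast hr) hp a c)
  have hIcc : Icc (0 : ι → ℝ) 1 ⊆ univ.pi fun _ ↦ range (Real.ofDigits (b := b)) := by
    rw [← pi_univ_Icc, ← image_univ]
    exact pi_mono fun _ _ ↦ Real.ofDigits_SurjOn hb
  rw [← dimH_Icc_pi (a := (0 : ι → ℝ)) (b := 1) fun _ ↦ zero_lt_one]
  exact ENNReal.mul_le_of_le_div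
    ((dimH_mono hIcc).trans (dimH_pi_range_le_of_edist_le hr hholder))

end SparseDigitSet

section DotProducts

lemma volume_le_of_forall_exists_abs_sub_le {ι : Type*} {A : Set ℝ} (s : Finset ι) (c : ι → ℝ)
    {η : ℝ} (h : ∀ t ∈ A, ∃ i ∈ s, |t - c i| ≤ η) :
    volume A ≤ s.card * ENNReal.ofReal (2 * η) := by
  have hsub : A ⊆ ⋃ i ∈ s, Metric.closedBall (c i) η := fun t ht ↦ by
    simpa [Real.dist_eq] using h t ht
  calc volume A ≤ ∑ i ∈ s, volume (Metric.closedBall (c i) η) :=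
        (measure_mono hsub).trans (measure_biUnion_finset_le _ _)
    _ = s.card * ENNReal.ofReal (2 * η) := by simp [Real.volume_closedBall]

lemma abs_mul_sub_mul_le {x y p q δ : ℝ} (hx : |x - p| ≤ δ) (hy : |y - q| ≤ δ) (hy₁ : |y| ≤ 1)
    (hp₁ : |p| ≤ 1) : |x * y - p * q| ≤ 2 * δ := by
  calc |x * y - p * q| = |(x - p) * y + p * (y - q)| := by ring_nf
    _ ≤ |x - p| * |y| + |p| * |y - q| := by
      simpa only [abs_mul] using abs_add_le ((x - p) * y) (p * (y - q))
    _ ≤ δ * 1 + 1 * δ := by gcongr; exact (abs_nonneg _).trans hx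
    _ = 2 * δ := by ring

variable {d : ℕ} {E : Set (EuclideanSpace ℝ (Fin d))} {N : ℕ} {δ : ℝ}

lemma exists_abs_sub_div_sq_le_of_mem_dotSet (hN : 0 < N) (hE : ∀ x ∈ E, ∀ i, |x i| ≤ 1)
    (happrox : ∀ x ∈ E, ∀ i, ∃ p ≤ N, |x i - (p : ℝ) / N| ≤ δ) {t : ℝ} (ht : t ∈ dotSet E) :
    ∃ P ≤ d * N ^ 2, |t - (P : ℝ) / N ^ 2| ≤ 2 * d * δ := by
  obtain ⟨x, hx, y, hy, rfl⟩ := ht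
  choose p hpN hp using happrox x hx
  choose q hqN hq using happrox y hy
  refine ⟨∑ i, p i * q i, ?_, ?_⟩
  · calc ∑ i, p i * q i ≤ ∑ _i : Fin d, N * N := by gcongr with i; exacts [hpN i, hqN i]
      _ = d * N ^ 2 := by simp [sq]
  have hdiff : ⟪x, y⟫ - ((∑ i, p i * q i : ℕ) : ℝ) / N ^ 2 =
      ∑ i, (x i * y i - (p i : ℝ) / N * (q i / N)) := by
    rw [Finset.sum_sub_distrib, PiLp.inner_apply]
    push_cast
    rw [Finset.sum_div]
    congr 1 <;> refine Finset.sum_congr rfl fun i _ ↦ ?_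
    · simp [mul_comm]
    · field_simp
  rw [hdiff]
  calc |∑ i, (x i * y i - (p i : ℝ) / N * (q i / N))| ≤ ∑ _i : Fin d, 2 * δ := by
        refine (Finset.abs_sum_le_sum_abs _ _).trans (Finset.sum_le_sum fun i _ ↦ ?_)
        refine abs_mul_sub_mul_le (hp i) (hq i) (hE y hy i) ?_
        rw [abs_of_nonneg (by positivity)]
        exact div_le_one_of_le₀ (by exact_mod_cast hpN i) (by positivity)
    _ = 2 * d * δ := by simp; ring

lemma volume_dotSet_le (hN : 0 < N) (hE : ∀ x ∈ E, ∀ i, |x i| ≤ 1)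
    (happrox : ∀ x ∈ E, ∀ i, ∃ p ≤ N, |x i - (p : ℝ) / N| ≤ δ) (hδ : 0 ≤ δ) :
    volume (dotSet E) ≤ ENNReal.ofReal (4 * d * (d + 1) * (N ^ 2 * δ)) := by
  have hN₁ : (1 : ℝ) ≤ (N : ℝ) ^ 2 := by exact_mod_cast Nat.one_le_pow 2 N hN
  have hcover := volume_le_of_forall_exists_abs_sub_le
    (Finset.range (d * N ^ 2 + 1)) (fun P : ℕ ↦ (P : ℝ) / N ^ 2) fun t ht ↦ by
      simpa only [Finset.mem_range, Nat.lt_succ_iff] using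
        exists_abs_sub_div_sq_le_of_mem_dotSet hN hE happrox ht
  refine hcover.trans ?_
  rw [Finset.card_range, ← ENNReal.ofReal_natCast, ← ENNReal.ofReal_mul (by positivity)]
  refine ENNReal.ofReal_le_ofReal ?_
  push_cast
  calc ((d : ℝ) * N ^ 2 + 1) * (2 * (2 * d * δ))
      ≤ (d * N ^ 2 + N ^ 2) * (2 * (2 * d * δ)) := by gcongr
    _ = 4 * d * (d + 1) * (N ^ 2 * δ) := by ring

end DotProducts

section FactorialGaps

/-- The positions of the free digits of the counterexample: those outside the gaps
`[k!, 2 * k! + k)`. A gap runs past the double of its left end, as approximating the dot products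
requires, and factorials grow so fast that each gap makes the earlier ones negligible. -/
def IsFreePosition (n : ℕ) : Prop :=
  ∀ k : ℕ, ¬ (k ! ≤ n ∧ n < 2 * k ! + k)

noncomputable instance : DecidablePred IsFreePosition := Classical.decPred _

lemma card_not_isFreePosition_le {k n : ℕ} (hn : n < (k + 2)!) :
    Finset.card {i ∈ Finset.range n | ¬ IsFreePosition i} ≤
      2 * k ! + k + (min n (2 * (k + 1)! + (k + 1)) - (k + 1)!) := by
  have hsub : {i ∈ Finset.range n | ¬ IsFreePosition i} ⊆
      Finset.range (2 * k ! + k) ∪ Finset.Ico (k + 1)! (min n (2 * (k + 1)! + (k + 1))) := by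
    intro i hi
    obtain ⟨hin, hgap⟩ := Finset.mem_filter.1 hi
    simp only [Finset.mem_range, IsFreePosition, not_forall, not_not] at hin hgap
    obtain ⟨j, hji, hij⟩ := hgap
    have hj : j < k + 2 := by
      by_contra! hj
      have := Nat.factorial_le hj
      omega
    simp only [Finset.mem_union, Finset.mem_range, Finset.mem_Ico, lt_min_iff]
    rcases Nat.lt_succ_iff_lt_or_eq.1 hj with hjk | rfl
    · have := Nat.factorial_le (Nat.lt_succ_iff.1 hjk)
      omega
    · omega
  simpa using (Finset.card_le_card hsub).trans (Finset.card_union_le _ _)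

lemma le_two_mul_count_isFreePosition_add {k n : ℕ} (hn : n < (k + 2)!) :
    n ≤ 2 * Nat.count IsFreePosition n + 8 * k ! := by
  have hgaps := card_not_isFreePosition_le hn
  have hsplit := Finset.card_filter_add_card_filter_not (s := Finset.range n) IsFreePosition
  rw [← Nat.count_eq_card_filter_range, Finset.card_range] at hsplit
  have := k.self_le_factorial
  have := k.factorial_pos
  omega

lemma mul_le_two_mul_count_isFreePosition {K n : ℕ} (hn : (K + 1)! ≤ n) :
    (1 - 8 / (K + 1 : ℝ)) * n ≤ 2 * Nat.count IsFreePosition n := by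
  obtain ⟨k, hKk, hkn, hnk⟩ : ∃ k, K ≤ k ∧ (k + 1)! ≤ n ∧ n < (k + 2)! := by
    have hex : ∃ k, n < (k + 2)! := ⟨n, by have := (n + 2).self_le_factorial; omega⟩
    refine ⟨Nat.find hex, ?_, ?_, Nat.find_spec hex⟩
    · rw [Nat.le_find_iff]
      exact fun m hm ↦ ((Nat.factorial_le (by omega)).trans hn).not_gt
    · rcases h : Nat.find hex with _ | k
      · exact (Nat.factorial_le (by omega)).trans hn
      · exact not_lt.1 (Nat.find_min hex (by omega))
  have hcount : (n : ℝ) ≤ 2 * Nat.count IsFreePosition n + 8 * k ! := by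
    exact_mod_cast le_two_mul_count_isFreePosition_add hnk
  have hfact : (k ! : ℝ) ≤ n / (K + 1) := by
    rw [le_div_iff₀' (by positivity)]
    calc (K + 1 : ℝ) * k ! ≤ (k + 1 : ℝ) * k ! := by gcongr
      _ = (k + 1)! := by push_cast [Nat.factorial_succ]; ring
      _ ≤ n := by exact_mod_cast hkn
  calc (1 - 8 / (K + 1 : ℝ)) * n = n - 8 * (n / (K + 1)) := by ring
    _ ≤ 2 * Nat.count IsFreePosition n := by linarith

lemma exists_mul_le_count_isFreePosition_add {r : ℝ} (hr : r < 1 / 2) :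
    ∃ C : ℝ, ∀ n : ℕ, r * n ≤ Nat.count IsFreePosition n + C := by
  obtain ⟨K, hK⟩ := exists_nat_gt (8 / (1 - 2 * r))
  have hrK : 2 * r ≤ 1 - 8 / (K + 1) := by
    rw [div_lt_iff₀ (by linarith)] at hK
    rw [le_sub_comm, div_le_iff₀ (by positivity)]
    nlinarith
  refine ⟨(K + 1)!, fun n ↦ ?_⟩
  rcases le_total (K + 1)! n with hn | hn
  · have hdensity := mul_le_two_mul_count_isFreePosition hn
    have : 2 * r * n ≤ (1 - 8 / (K + 1)) * n := by gcongr
    have : (0 : ℝ) ≤ (K + 1)! := by positivity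
    linarith
  · calc r * n ≤ 1 * (n : ℝ) := by gcongr; linarith
      _ ≤ 0 + ((K + 1)! : ℝ) := by simpa using hn
      _ ≤ Nat.count IsFreePosition n + (K + 1)! := by gcongr; positivity

end FactorialGaps

/-- The counterexample: the points of the unit cube in `ℝ^d` whose coordinates have binary
expansions with zeros outside the free positions. -/
def factorialGapCube (d : ℕ) : Set (EuclideanSpace ℝ (Fin d)) :=
  EuclideanSpace.equiv (Fin d) ℝ ⁻¹' univ.pi fun _ ↦ sparseDigitSet 2 IsFreePosition

lemma isCompact_factorialGapCube (d : ℕ) : IsCompact (factorialGapCube d) :=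
  (EuclideanSpace.equiv (Fin d) ℝ).toHomeomorph.isCompact_preimage.2
    (isCompact_univ_pi fun _ ↦ isCompact_sparseDigitSet)

lemma ofReal_half_le_dimH_factorialGapCube (d : ℕ) :
    ENNReal.ofReal ((d : ℝ) / 2) ≤ dimH (factorialGapCube d) := by
  rw [factorialGapCube, ContinuousLinearEquiv.dimH_preimage, ENNReal.ofReal_div_of_pos two_pos,
    ENNReal.ofReal_natCast, ENNReal.ofReal_ofNat, div_eq_mul_inv]
  refine ENNReal.mul_le_of_forall_lt fun d' hd' r hr ↦ ?_
  lift r to ℝ≥0 using hr.ne_top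
  have hr' : (r : ℝ) < 1 / 2 := by
    simpa using (ENNReal.toReal_lt_toReal hr.ne_top (by simp)).2 hr
  obtain ⟨C, hC⟩ := exists_mul_le_count_isFreePosition_add hr'
  calc d' * r ≤ Fintype.card (Fin d) * r := by rw [Fintype.card_fin]; gcongr
    _ ≤ _ := card_mul_le_dimH_pi_sparseDigitSet (Fin d) one_lt_two hC

lemma volume_dotSet_factorialGapCube_le (d k : ℕ) :
    volume (dotSet (factorialGapCube d)) ≤ ENNReal.ofReal (4 * d * (d + 1) * (1 / 2) ^ k) := by
  have hscale : ((2 ^ k ! : ℕ) : ℝ) ^ 2 * (((2 : ℕ) : ℝ) ^ (2 * k ! + k))⁻¹ = (1 / 2) ^ k := by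
    push_cast
    rw [pow_add, mul_comm 2, pow_mul, one_div, inv_pow]
    field_simp
  rw [← hscale]
  refine volume_dotSet_le (by positivity) (fun x hx i ↦ ?_) (fun x hx i ↦ ?_) (by positivity)
  · obtain ⟨hx₀, hx₁⟩ := sparseDigitSet_subset_Icc (hx i (mem_univ i))
    exact (abs_of_nonneg hx₀).trans_le hx₁
  · exact exists_abs_sub_div_pow_le_of_mem_sparseDigitSet (by omega)
      (fun j hj hj' hfree ↦ hfree k ⟨hj, hj'⟩) (hx i (mem_univ i))

lemma volume_dotSet_factorialGapCube (d : ℕ) : volume (dotSet (factorialGapCube d)) = 0 := by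
  have hlim : Tendsto (fun k : ℕ ↦ ENNReal.ofReal (4 * d * (d + 1) * (1 / 2) ^ k))
      atTop (𝓝 0) := by
    have := (tendsto_pow_atTop_nhds_zero_of_lt_one (r := (1 / 2 : ℝ)) (by norm_num)
      (by norm_num)).const_mul (4 * d * (d + 1) : ℝ)
    simpa using ENNReal.tendsto_ofReal this
  exact nonpos_iff_eq_zero.1 (ge_of_tendsto' hlim (volume_dotSet_factorialGapCube_le d))

theorem dot_product_counterexample_general (d : ℕ) :
    ∃ E : Set (EuclideanSpace ℝ (Fin d)), IsCompact E ∧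
      ENNReal.ofReal ((d : ℝ) / 2) ≤ dimH E ∧ volume (dotSet E) = 0 :=
  ⟨factorialGapCube d, isCompact_factorialGapCube d,
    ofReal_half_le_dimH_factorialGapCube d, volume_dotSet_factorialGapCube d⟩

/-- For every `d ≥ 2` and `ε > 0` there is a compact set `E ⊆ ℝ^d` with
Hausdorff dimension greater than `d/2 - ε` whose dot product set has Lebesgue
measure zero. -/
theorem dot_product_counterexample
    (d : ℕ) (hd : 2 ≤ d) (ε : ℝ) (hε : 0 < ε) :
    ∃ E : Set (EuclideanSpace ℝ (Fin d)), IsCompact E ∧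
      ENNReal.ofReal ((d : ℝ) / 2 - ε) < dimH E ∧ volume (dotSet E) = 0 := by
  obtain ⟨E, hE, hdim, hvol⟩ := dot_product_counterexample_general d
  have hlt := (ENNReal.ofReal_lt_ofReal_iff (by positivity)).2 (sub_lt_self ((d : ℝ) / 2) hε)
  exact ⟨E, hE, hlt.trans_le hdim, hvol⟩
end

section
/- Let d ≥ 2 and let a = (a₁, …, a_{d−1}, a_d) ∈ ℝ^d with ā = (a₁, …, a_{d−1}). Define T_a on {x̄ ∈ ℝ^{d−1} : |x̄|² + a_d ≠ 0} by T_a(x̄) = −(x̄ + ā)/(2(|x̄|² + a_d)). Then at every point x̄ = (x₁, …, x_{d−1}) of its domain, the Jacobian determinant of T_a equals 2 · (−1/(2(|x̄|² + a_d)))^d · ( Σ_{i=1}^{d−1} (x_i + a_i)² − a₁² − ⋯ − a_{d−1}² − a_d ). -/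
open MeasureTheory

/-!
Writing `c = -1 / (2 (‖x‖² + r))`, the derivative of the transformation map is
`h ↦ c • h + 4 c² ⟪x, h⟫ • (x + a)`, a rank-one perturbation of a homothety, so the matrix
determinant lemma gives `c ^ n * (1 + 4 c ⟪x, x + a⟫)`. Since `-1 = 2 c (‖x‖² + r)`, the last factor
is `2 c (2 ⟪x, x + a⟫ - ‖x‖² - r)`, and `2 ⟪x, x + a⟫ - ‖x‖² = ‖x + a‖² - ‖a‖²`.
-/

section Determinant

variable {R V : Type*} [CommRing R] [AddCommGroup V] [Module R V] [Module.Free R V]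
  [Module.Finite R V]

lemma det_smul_id_add_smulRight (c : Rˣ) (f : Module.Dual R V) (v : V) :
    LinearMap.det ((c : R) • LinearMap.id + f.smulRight v) =
      (c : R) ^ Module.finrank R V * (1 + ↑c⁻¹ * f v) := by
  have factor : (c : R) • LinearMap.id + f.smulRight v =
      (c : R) • LinearMap.transvection ((↑c⁻¹ : R) • f) v := by
    ext w
    simp [LinearMap.transvection.apply, smul_smul]
  rw [factor, LinearMap.det_smul, LinearMap.transvection.det, LinearMap.smul_apply, smul_eq_mul]

end Determinant

section InnerProductSpace

variable {E : Type*} [NormedAddCommGroup E] [InnerProductSpace ℝ E] {r : ℝ} {x : E}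

/-- The transformation map `T_(a, r)` of a real inner product space; the paper's parameter
`(ā, a_d)` is the pair `(a, r)`. Where `‖x‖ ^ 2 + r = 0` the value is `0` by division by zero. -/
noncomputable def transformationMap (a : E) (r : ℝ) (x : E) : E :=
  (-(1 / (2 * (‖x‖ ^ 2 + r)))) • (x + a)

lemma hasFDerivAt_neg_one_div_two_mul_norm_sq_add (hx : ‖x‖ ^ 2 + r ≠ 0) :
    HasFDerivAt (fun y : E => -(1 / (2 * (‖y‖ ^ 2 + r))))
      ((4 * (-(1 / (2 * (‖x‖ ^ 2 + r)))) ^ 2) • innerSL ℝ x) x := by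
  have denominator : HasFDerivAt (fun y : E => 2 * (‖y‖ ^ 2 + r)) ((4 : ℝ) • innerSL ℝ x) x :=
    (((hasStrictFDerivAt_norm_sq x).hasFDerivAt.add_const r).const_mul 2).congr_fderiv (by module)
  have reciprocal := (hasDerivAt_inv (mul_ne_zero two_ne_zero hx)).comp_hasFDerivAt x denominator
  simp only [one_div, neg_sq, inv_pow]
  exact reciprocal.neg.congr_fderiv (by module)

lemma hasFDerivAt_transformationMap (a : E) (hx : ‖x‖ ^ 2 + r ≠ 0) :
    HasFDerivAt (transformationMap a r)
      ((-(1 / (2 * (‖x‖ ^ 2 + r)))) • ContinuousLinearMap.id ℝ E +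
        ((4 * (-(1 / (2 * (‖x‖ ^ 2 + r)))) ^ 2) • innerSL ℝ x).smulRight (x + a)) x :=
  (hasFDerivAt_neg_one_div_two_mul_norm_sq_add hx).smul ((hasFDerivAt_id x).add_const a)

theorem jacobian_transformation_map_general [FiniteDimensional ℝ E] (a : E)
    (hx : ‖x‖ ^ 2 + r ≠ 0) :
    (fderiv ℝ (transformationMap a r) x).det =
      2 * (-(1 / (2 * (‖x‖ ^ 2 + r)))) ^ (Module.finrank ℝ E + 1) *
        (‖x + a‖ ^ 2 - ‖a‖ ^ 2 - r) := by
  rw [(hasFDerivAt_transformationMap a hx).fderiv]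
  have c_mul : 2 * -(1 / (2 * (‖x‖ ^ 2 + r))) * (‖x‖ ^ 2 + r) = -1 := by field_simp
  have c_ne_zero : -(1 / (2 * (‖x‖ ^ 2 + r))) ≠ 0 := by simpa using hx
  generalize -(1 / (2 * (‖x‖ ^ 2 + r))) = c at c_mul c_ne_zero ⊢
  have inner_eq : 2 * inner ℝ x (x + a) = ‖x + a‖ ^ 2 - ‖a‖ ^ 2 + ‖x‖ ^ 2 := by
    rw [inner_add_right, real_inner_self_eq_norm_sq, norm_add_sq_real]
    ring
  calc
    _ = c ^ Module.finrank ℝ E * (1 + c⁻¹ * (4 * c ^ 2 * inner ℝ x (x + a))) :=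
      det_smul_id_add_smulRight (Units.mk0 c c_ne_zero) ((4 * c ^ 2) • innerSL ℝ x).toLinearMap
        (x + a)
    _ = c ^ Module.finrank ℝ E * (1 + 2 * c * (2 * inner ℝ x (x + a))) := by
      field_simp
      ring
    _ = 2 * c ^ (Module.finrank ℝ E + 1) * (‖x + a‖ ^ 2 - ‖a‖ ^ 2 - r) := by
      rw [inner_eq]
      linear_combination c ^ Module.finrank ℝ E * c_mul

end InnerProductSpace

/-- Jacobian determinant of the transformation map
`T_a(x̄) = -(x̄ + ā)/(2(|x̄|² + a_d))` on `ℝ^{d-1}`: at every point of its domain it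
equals `2 · (-1/(2(|x̄|² + a_d)))^d · (Σᵢ (xᵢ + aᵢ)² - a₁² - ⋯ - a_{d-1}² - a_d)`. -/
theorem jacobian_transformation_map
    (d : ℕ) (hd : 2 ≤ d)
    (abar : EuclideanSpace ℝ (Fin (d - 1))) (ad : ℝ)
    (x : EuclideanSpace ℝ (Fin (d - 1))) (hx : ‖x‖ ^ 2 + ad ≠ 0) :
    (fderiv ℝ (fun y : EuclideanSpace ℝ (Fin (d - 1)) =>
        (-(1 / (2 * (‖y‖ ^ 2 + ad)))) • (y + abar)) x).det
      = 2 * (-(1 / (2 * (‖x‖ ^ 2 + ad)))) ^ d *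
          ((∑ i, (x i + abar i) ^ 2) - (∑ i, abar i ^ 2) - ad) := by
  refine (jacobian_transformation_map_general abar hx).trans ?_
  simp only [EuclideanSpace.real_norm_sq_eq (x + abar), EuclideanSpace.real_norm_sq_eq abar,
    PiLp.add_apply, finrank_euclideanSpace_fin, Nat.sub_add_cancel (one_le_two.trans hd)]
end

section
/- Let K be a compact subset of the unit sphere S^{d−1} ⊆ ℝ^d and let r : K → (0, ∞) be the restriction to K of a C¹ function defined on an open neighborhood of K in ℝ^d. Let M = {r(e) · e : e ∈ K}. Then there exist a constant N ∈ ℕ and δ₀ > 0 such that for every unit vector e ∈ S^{d−1} and every 0 < δ < δ₀, the intersection of M with any tube of radius δ emanating from the origin in the direction e (the closed δ-neighborhood of a line through the origin with direction e, intersected with a bounded region of diameter comparable to 1) can be covered by at most N closed balls of radius 2δ. -/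
/-!
If `r(u)u` lies within `δ` of the point `te` of the ray spanned by a unit vector `e`, then comparing
norms gives `|r(u) - t| ≤ δ`, hence `‖r(u)u - r(u)e‖ ≤ 2δ` and `‖u - e‖ ≤ 2δ/m` whenever `m ≤ r`.
If `r` is `L`-Lipschitz, its values at two such `u` therefore differ by at most `4Lδ/m`, so the
parameters `t` that occur form a set of diameter at most `(4L/m + 2)δ`. That set is covered by
boundedly many intervals of radius `δ`, and a point within `δ` of the part of the ray over such an
interval is within `2δ` of the point over its midpoint. The opposite ray is treated likewise.
-/

open MeasureTheory

open Metric Set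
open scoped NNReal

lemma exists_lipschitzOnWith_of_contDiffOn_of_isCompact {E F : Type*} [NormedAddCommGroup E]
    [NormedSpace ℝ E] [NormedAddCommGroup F] [NormedSpace ℝ F] {f : E → F} {K U : Set E}
    (hK : IsCompact K) (hU : IsOpen U) (hKU : K ⊆ U) (hf : ContDiffOn ℝ 1 f U) :
    ∃ L, LipschitzOnWith L f K := by
  refine LocallyLipschitzOn.exists_lipschitzOnWith_of_compact hK fun u hu => ?_
  obtain ⟨L, t, ht, hL⟩ := (hf.contDiffAt (hU.mem_nhds (hKU hu))).exists_lipschitzOnWith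
  exact ⟨L, t, mem_nhdsWithin_of_mem_nhds ht, hL⟩

-- The centres are the midpoints of consecutive intervals of length `2δ` starting at `a - Rδ`.
lemma real_closedBall_mul_subset_biUnion_closedBall (a R : ℝ) {δ : ℝ} (hδ : 0 < δ) :
    closedBall a (R * δ) ⊆
      ⋃ k ∈ Finset.range (⌊R⌋₊ + 1), closedBall (a + (2 * (k : ℝ) + 1 - R) * δ) δ := by
  intro x hx
  rw [Real.closedBall_eq_Icc, mem_Icc] at hx
  set q := (x - (a - R * δ)) / (2 * δ) with hq
  have hxq : x = a - R * δ + q * (2 * δ) := by rw [hq]; field_simp; ring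
  have hq_nonneg : 0 ≤ q := div_nonneg (by linarith) (by positivity)
  have hqR : q ≤ R := by rw [hq, div_le_iff₀ (by positivity)]; linarith
  refine mem_iUnion₂.2 ⟨⌊q⌋₊, Finset.mem_range_succ_iff.2 (Nat.floor_mono hqR), ?_⟩
  rw [Real.closedBall_eq_Icc, mem_Icc]
  have hle : ⌊q⌋₊ * (2 * δ) ≤ q * (2 * δ) := by gcongr; exact Nat.floor_le hq_nonneg
  have hlt : q * (2 * δ) < (⌊q⌋₊ + 1) * (2 * δ) := by gcongr; exact Nat.lt_floor_add_one q
  constructor <;> linarith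

lemma exists_finset_real_cover_of_dist_le {A : Set ℝ} {R δ : ℝ} (hδ : 0 < δ)
    (hA : ∀ s ∈ A, ∀ t ∈ A, dist s t ≤ R * δ) :
    ∃ S : Finset ℝ, S.card ≤ ⌊R⌋₊ + 1 ∧ A ⊆ ⋃ c ∈ S, closedBall c δ := by
  classical
  obtain rfl | ⟨a, ha⟩ := A.eq_empty_or_nonempty
  · exact ⟨∅, by simp, empty_subset _⟩
  refine ⟨(Finset.range (⌊R⌋₊ + 1)).image fun k : ℕ => a + (2 * (k : ℝ) + 1 - R) * δ,
    Finset.card_image_le.trans_eq (Finset.card_range _), ?_⟩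
  rw [Finset.set_biUnion_finset_image]
  exact fun t ht =>
    real_closedBall_mul_subset_biUnion_closedBall a R hδ (hA t ht a ha)

section Tube

variable {E : Type*} [SeminormedAddCommGroup E] [NormedSpace ℝ E] {K : Set E} {r : E → ℝ}
  {u v e : E} {L : ℝ≥0} {m ρ s t δ : ℝ}

/-- The tube of radius `δ` around the part `{t • e | t ∈ T}` of the line through the origin in
direction `e`. The tube around the ray is `T = Ici 0`; a general `T` allows it to be cut down to the
parameters at which it meets a given set. -/
def tube (e : E) (T : Set ℝ) (δ : ℝ) : Set E :=
  {x | ∃ t ∈ T, dist x (t • e) ≤ δ}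

/-- The hypersurface `{r(u)u : u ∈ K}` given in polar coordinates by `r`. -/
def radialGraph (r : E → ℝ) (K : Set E) : Set E :=
  (fun u => r u • u) '' K

lemma setOf_exists_dist_smul_le_eq_union (e : E) (δ : ℝ) :
    {x | ∃ t : ℝ, dist x (t • e) ≤ δ} = tube e (Ici 0) δ ∪ tube (-e) (Ici 0) δ := by
  ext x
  constructor
  · rintro ⟨t, ht⟩
    rcases le_total 0 t with h0 | h0
    · exact Or.inl ⟨t, h0, ht⟩
    · exact Or.inr ⟨-t, neg_nonneg.2 h0, by rwa [neg_smul_neg]⟩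
  · rintro (⟨t, -, ht⟩ | ⟨t, -, ht⟩)
    · exact ⟨t, ht⟩
    · exact ⟨-t, by rwa [neg_smul, ← smul_neg]⟩

lemma tube_subset_biUnion_closedBall (he : ‖e‖ = 1) {T : Set ℝ} {S : Finset ℝ} {ε : ℝ}
    (hT : T ⊆ ⋃ c ∈ S, closedBall c ε) :
    tube e T δ ⊆ ⋃ c ∈ S, closedBall (c • e) (δ + ε) := by
  rintro x ⟨t, ht, hxt⟩
  obtain ⟨c, hc, htc⟩ := mem_iUnion₂.1 (hT ht)
  refine mem_iUnion₂.2 ⟨c, hc, ?_⟩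
  calc dist x (c • e) ≤ dist x (t • e) + dist (t • e) (c • e) := dist_triangle _ _ _
    _ ≤ dist x (t • e) + dist t c * dist e 0 := by gcongr; exact dist_pair_smul _ _ _
    _ ≤ δ + ε := by rw [dist_zero_right, he, mul_one]; exact add_le_add hxt htc

lemma dist_le_dist_smul_smul (hu : ‖u‖ = 1) (he : ‖e‖ = 1) (hρ : 0 ≤ ρ) (ht : 0 ≤ t) :
    dist ρ t ≤ dist (ρ • u) (t • e) := by
  simpa [norm_smul, hu, he, abs_of_nonneg hρ, abs_of_nonneg ht, Real.dist_eq, dist_eq_norm]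
    using abs_norm_sub_norm_le (ρ • u) (t • e)

lemma mul_dist_le_two_mul_dist_smul_smul (hu : ‖u‖ = 1) (he : ‖e‖ = 1) (hρ : 0 ≤ ρ)
    (ht : 0 ≤ t) : ρ * dist u e ≤ 2 * dist (ρ • u) (t • e) := by
  have hte : dist (t • e) (ρ • e) ≤ dist (ρ • u) (t • e) :=
    calc dist (t • e) (ρ • e) ≤ dist t ρ * dist e 0 := dist_pair_smul _ _ _
      _ = dist ρ t := by rw [dist_zero_right, he, mul_one, dist_comm]
      _ ≤ dist (ρ • u) (t • e) := dist_le_dist_smul_smul hu he hρ ht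
  calc ρ * dist u e = dist (ρ • u) (ρ • e) := by rw [dist_smul₀, Real.norm_of_nonneg hρ]
    _ ≤ dist (ρ • u) (t • e) + dist (t • e) (ρ • e) := dist_triangle _ _ _
    _ ≤ 2 * dist (ρ • u) (t • e) := by linarith

lemma dist_le_of_dist_smul_smul_le (hu : ‖u‖ = 1) (he : ‖e‖ = 1) (hm : 0 < m) (hmρ : m ≤ ρ)
    (ht : 0 ≤ t) (h : dist (ρ • u) (t • e) ≤ δ) : dist u e ≤ 2 * δ / m := by
  rw [le_div_iff₀' hm]
  calc m * dist u e ≤ ρ * dist u e := by gcongr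
    _ ≤ 2 * dist (ρ • u) (t • e) :=
      mul_dist_le_two_mul_dist_smul_smul hu he (hm.le.trans hmρ) ht
    _ ≤ 2 * δ := by gcongr

lemma dist_param_le_of_lipschitzOnWith (hK : K ⊆ sphere 0 1) (hr : LipschitzOnWith L r K)
    (hm : 0 < m) (hmr : ∀ u ∈ K, m ≤ r u) (he : ‖e‖ = 1) (hu : u ∈ K) (hv : v ∈ K)
    (hs : 0 ≤ s) (ht : 0 ≤ t) (hus : dist (r u • u) (s • e) ≤ δ)
    (hvt : dist (r v • v) (t • e) ≤ δ) : dist s t ≤ (4 * L / m + 2) * δ := by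
  have hu1 : ‖u‖ = 1 := mem_sphere_zero_iff_norm.1 (hK hu)
  have hv1 : ‖v‖ = 1 := mem_sphere_zero_iff_norm.1 (hK hv)
  have hsr : dist s (r u) ≤ δ := by
    rw [dist_comm]
    exact (dist_le_dist_smul_smul hu1 he (hm.le.trans (hmr u hu)) hs).trans hus
  have hrt : dist (r v) t ≤ δ :=
    (dist_le_dist_smul_smul hv1 he (hm.le.trans (hmr v hv)) ht).trans hvt
  have huv : dist u v ≤ 2 * δ / m + 2 * δ / m :=
    (dist_triangle_right u v e).trans <| add_le_add
      (dist_le_of_dist_smul_smul_le hu1 he hm (hmr u hu) hs hus)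
      (dist_le_of_dist_smul_smul_le hv1 he hm (hmr v hv) ht hvt)
  calc dist s t ≤ dist s (r u) + dist (r u) (r v) + dist (r v) t := dist_triangle4 _ _ _ _
    _ ≤ δ + L * (2 * δ / m + 2 * δ / m) + δ := by
      gcongr
      exact (hr.dist_le_mul u hu v hv).trans (by gcongr)
    _ = (4 * L / m + 2) * δ := by ring

lemma exists_finset_cover_radialGraph_inter_tube_Ici (hK : K ⊆ sphere 0 1)
    (hr : LipschitzOnWith L r K) (hm : 0 < m) (hmr : ∀ u ∈ K, m ≤ r u) (he : ‖e‖ = 1)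
    (hδ : 0 < δ) :
    ∃ S : Finset E, S.card ≤ ⌊4 * L / m + 2⌋₊ + 1 ∧
      radialGraph r K ∩ tube e (Ici 0) δ ⊆ ⋃ c ∈ S, closedBall c (2 * δ) := by
  classical
  let T : Set ℝ := {t | 0 ≤ t ∧ ∃ u ∈ K, dist (r u • u) (t • e) ≤ δ}
  have hT : ∀ s ∈ T, ∀ t ∈ T, dist s t ≤ (4 * L / m + 2) * δ := by
    rintro s ⟨hs, u, hu, hus⟩ t ⟨ht, v, hv, hvt⟩
    exact dist_param_le_of_lipschitzOnWith hK hr hm hmr he hu hv hs ht hus hvt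
  obtain ⟨S, hcard, hS⟩ := exists_finset_real_cover_of_dist_le hδ hT
  refine ⟨S.image (· • e), Finset.card_image_le.trans hcard, ?_⟩
  rw [Finset.set_biUnion_finset_image, two_mul]
  rintro _ ⟨⟨u, hu, rfl⟩, t, ht, hut⟩
  exact tube_subset_biUnion_closedBall he hS ⟨t, ⟨ht, u, hu, hut⟩, hut⟩

theorem tube_intersection_covering_general (hK : K ⊆ sphere 0 1) (hr : LipschitzOnWith L r K)
    (hm : 0 < m) (hmr : ∀ u ∈ K, m ≤ r u) (he : ‖e‖ = 1) (hδ : 0 < δ) :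
    ∃ S : Finset E, S.card ≤ 2 * (⌊4 * L / m + 2⌋₊ + 1) ∧
      radialGraph r K ∩ {x | ∃ t : ℝ, dist x (t • e) ≤ δ} ⊆ ⋃ c ∈ S, closedBall c (2 * δ) := by
  classical
  obtain ⟨S₁, hcard₁, hS₁⟩ :=
    exists_finset_cover_radialGraph_inter_tube_Ici hK hr hm hmr he hδ
  obtain ⟨S₂, hcard₂, hS₂⟩ :=
    exists_finset_cover_radialGraph_inter_tube_Ici hK hr hm hmr ((norm_neg e).trans he) hδ
  refine ⟨S₁ ∪ S₂, (Finset.card_union_le _ _).trans (by lia), ?_⟩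
  rw [setOf_exists_dist_smul_le_eq_union, inter_union_distrib_left, Finset.set_biUnion_union]
  exact union_subset_union hS₁ hS₂

end Tube

/-- Technical covering lemma: if `M = {r(e)·e : e ∈ K}` where `K ⊆ S^{d-1}` is compact
and `r` is a positive `C¹` function on a neighborhood of `K`, then there are `N ∈ ℕ` and
`δ₀ > 0` such that for every direction `e` and every `0 < δ < δ₀`, the intersection of
`M` with the `δ`-tube around the line through the origin in direction `e` can be covered
by at most `N` closed balls of radius `2δ`. -/
theorem tube_intersection_covering
    {d : ℕ} (K : Set (EuclideanSpace ℝ (Fin d)))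
    (hKcomp : IsCompact K)
    (hKsphere : K ⊆ Metric.sphere (0 : EuclideanSpace ℝ (Fin d)) 1)
    (U : Set (EuclideanSpace ℝ (Fin d))) (hU : IsOpen U) (hKU : K ⊆ U)
    (r : EuclideanSpace ℝ (Fin d) → ℝ) (hr : ContDiffOn ℝ 1 r U)
    (hrpos : ∀ e ∈ K, 0 < r e) :
    ∃ (N : ℕ) (δ₀ : ℝ), 0 < δ₀ ∧
      ∀ e : EuclideanSpace ℝ (Fin d), ‖e‖ = 1 → ∀ δ : ℝ, 0 < δ → δ < δ₀ →
        ∃ S : Finset (EuclideanSpace ℝ (Fin d)), S.card ≤ N ∧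
          ((fun e : EuclideanSpace ℝ (Fin d) => r e • e) '' K)
              ∩ {x | ∃ t : ℝ, dist x (t • e) ≤ δ}
            ⊆ ⋃ c ∈ S, Metric.closedBall c (2 * δ) := by
  obtain ⟨L, hL⟩ := exists_lipschitzOnWith_of_contDiffOn_of_isCompact hKcomp hU hKU hr
  obtain ⟨m, hm, hmr⟩ := hKcomp.exists_forall_le' hL.continuousOn hrpos
  exact ⟨_, 1, one_pos, fun _ he _ hδ _ =>
    tube_intersection_covering_general hKsphere hL hm hmr he hδ⟩
end

section
/- Let d ≥ 2 and let a ∈ ℝ^d be any translation vector. Suppose E is a compact subset of the translated unit sphere a + S^{d−1} with Hausdorff dimension strictly greater than d/2. Then there exists x ∈ E such that the pinned dot product set Π^x(E) = {x · y : y ∈ E} has positive one-dimensional Lebesgue measure; in particular, the dot product set Π(E) has positive Lebesgue measure. -/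
/-!
Fix `s` with `d/2 < s < dim E`. Projection theory bounds the set of directions `x` for which
`y ↦ ⟪x, y⟫` maps `E` to a null set; here `x` has to be found in `E` itself, and the sphere is used
to see that `E` determines many directions.

*Transversality.* Some compact `K ⊆ E` with `dim K > s` stays away from the origin and satisfies
`c ‖x - x'‖ ≤ dist(x, ℝ x')` for `x, x' ∈ K`. Near a point where the line through the origin crosses
the sphere transversally, this holds because `x + x' - 2a` is orthogonal to `x - x'` but not to
`x'`. For a sphere of radius `r` about `a` the points of tangency satisfy `⟪x, a⟫ = ‖a‖² - r²`, so
on them `a` plays the role of that vector.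

*Energy estimate.* `K` carries a probability measure `μ` with `μ(B(x, ρ)) ≤ C ρ^s`. The squared `L²`
norm at scale `1/N` of the image of `μ` under `y ↦ ⟪x, y⟫` is at most a constant times
`∫ |μ̂(η)|² w(η, x) dη` with `w(η, x) = ∫ e^{-‖η - t x‖²/4} dt`, a weight concentrated in the unit
neighbourhood of the line `ℝ x`. By transversality the `x ∈ K` whose line passes within distance `ρ`
of `η` lie in a ball of radius `O(ρ / ‖η‖)`, so `∫ w(η, x) dμ(x) ≲ min(1, ‖η‖^{-s})`. The remaining
integral `∫ |μ̂(η)|² min(1, ‖η‖^{-s}) dη` is a sum over dyadic scales of Gaussian energies of `μ`,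
of size `2^{j(d - 2s)}`, and converges because `2s > d`.

*Conclusion.* By Fatou's lemma there is `x ∈ K` for which the `L²` norms of the projection stay
bounded along a sequence of scales tending to zero. By the Cauchy–Schwarz inequality such a measure
is not carried by a null set, whence `|Π^x(K)| > 0`.
-/

open MeasureTheory
open scoped RealInnerProductSpace ENNReal

/-- The pinned dot product set `Π^x(E) = {x · y : y ∈ E}`. -/
def pinnedDotSet {d : ℕ} (x : EuclideanSpace ℝ (Fin d))
    (E : Set (EuclideanSpace ℝ (Fin d))) : Set ℝ :=
  {t | ∃ y ∈ E, ⟪x, y⟫ = t}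

open Filter Topology Set
open scoped NNReal

/-! ### Hausdorff content -/

/-- The `s`-dimensional Hausdorff content: the infimum of `∑ diam(tₙ)^s` over all countable covers,
with no restriction on the diameters. The supremum over `A.Nonempty` gives the empty set content
zero also when `s = 0`. -/
noncomputable def hausdorffContent (X : Type*) [EMetricSpace X] (s : ℝ) : OuterMeasure X :=
  OuterMeasure.ofFunction (fun A => ⨆ _ : A.Nonempty, Metric.ediam A ^ s) (by simp)

lemma hausdorffContent_le {X : Type*} [EMetricSpace X] (s : ℝ) (A : Set X) :
    hausdorffContent X s A ≤ Metric.ediam A ^ s :=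
  (OuterMeasure.ofFunction_le A).trans (iSup_le fun _ => le_rfl)

/-- A cover with small total `∑ diam^s` consists of sets of small diameter. -/
lemma hausdorffMeasure_eq_zero_of_hausdorffContent_eq_zero {X : Type*} [EMetricSpace X]
    [MeasurableSpace X] [BorelSpace X] {s : ℝ} (hs : 0 < s) {A : Set X}
    (h : hausdorffContent X s A = 0) : μH[s] A = 0 := by
  simp only [Measure.hausdorffMeasure_apply, ENNReal.iSup_eq_zero]
  intro r hr
  refine le_antisymm (le_of_forall_gt fun ε hε => ?_) zero_le
  have hpos : hausdorffContent X s A < min ε (r ^ s) :=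
    h ▸ lt_min hε (ENNReal.rpow_pos_of_nonneg hr hs.le)
  simp only [hausdorffContent, OuterMeasure.ofFunction_apply, iInf_lt_iff] at hpos
  obtain ⟨t, ht, hlt⟩ := hpos
  have hdiam : ∀ n, Metric.ediam (t n) ≤ r := by
    intro n
    rcases (t n).eq_empty_or_nonempty with hn | hn
    · simp [hn]
    · refine (ENNReal.rpow_le_rpow_iff hs).1 (le_trans ?_ (hlt.le.trans (min_le_right _ _)))
      exact (le_iSup_of_le hn le_rfl).trans
        (ENNReal.le_tsum (f := fun k => ⨆ _ : (t k).Nonempty, Metric.ediam (t k) ^ s) n)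
  exact (iInf₂_le_of_le t ht (iInf_le_of_le hdiam le_rfl)).trans_lt
    (hlt.trans_le (min_le_left _ _))

/-! ### Mass distribution along a refining sequence of partitions -/

section MassDistribution

lemma exists_le_tsum_fiber_eq {κ κ' : Type*} (π : κ → κ') {c : κ → ℝ≥0∞} {m : κ' → ℝ≥0∞}
    (hc : ∀ j, ∑' k : π ⁻¹' {j}, c k ≠ ∞) (hm : ∀ j, m j ≤ ∑' k : π ⁻¹' {j}, c k) :
    ∃ w ≤ c, ∀ j, ∑' k : π ⁻¹' {j}, w k = m j := by
  set S : κ' → ℝ≥0∞ := fun j => ∑' k : π ⁻¹' {j}, c k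
  refine ⟨fun k => m (π k) / S (π k) * c k, fun k => ?_, fun j => ?_⟩
  · exact mul_le_of_le_one_left' (ENNReal.div_le_of_le_mul (by simpa using hm (π k)))
  · have hfiber : ∀ k : π ⁻¹' {j}, m (π k) / S (π k) * c k = m j / S j * c k :=
      fun k => by rw [show π k = j from k.2]
    rw [tsum_congr hfiber, ENNReal.tsum_mul_left]
    by_cases h0 : S j = 0
    · simp [le_antisymm ((hm j).trans h0.le) zero_le]
    · exact ENNReal.div_mul_cancel h0 (hc j)

lemma exists_eq_comp_of_le {X κ : Type*} {q : ℕ → X → κ} {π : κ → κ}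
    (hπ : ∀ n, π ∘ q (n + 1) = q n) {m n : ℕ} (hmn : m ≤ n) : ∃ g : κ → κ, q m = g ∘ q n := by
  induction n, hmn using Nat.le_induction with
  | base => exact ⟨id, rfl⟩
  | succ n _ ih =>
    obtain ⟨g, hg⟩ := ih
    exact ⟨g ∘ π, by rw [hg, Function.comp_assoc, hπ]⟩

variable {X κ : Type*} [MeasurableSpace X] [MeasurableSpace κ]
  [DiscreteMeasurableSpace κ] {K : Set X}

lemma exists_measure_preimage_eq_tsum (hK : MeasurableSet K) {q : X → κ} (hq : Measurable q)
    {w : κ → ℝ≥0∞} (hw : ∀ k, w k ≠ 0 → (K ∩ q ⁻¹' {k}).Nonempty) :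
    ∃ μ : Measure X, μ Kᶜ = 0 ∧ ∀ B, μ (q ⁻¹' B) = ∑' k : B, w k := by
  choose p hpK hpq using fun k : w.support => hw k k.2
  refine ⟨Measure.sum fun k : w.support => w k • Measure.dirac (p k), ?_, fun B => ?_⟩
  · simp [Measure.sum_apply _ hK.compl, hK.compl, hpK]
  · have hmass : ∀ k : w.support,
        (w k • Measure.dirac (p k)) (q ⁻¹' B) = B.indicator w k := by
      intro k
      have hk : q (p k) = k := hpq k
      by_cases hB : (k : κ) ∈ B <;> simp [hq (.of_discrete (s := B)), hk, hB]
    rw [Measure.sum_apply _ (hq .of_discrete), tsum_congr hmass,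
      tsum_subtype_eq_of_support_subset (by simp), tsum_subtype]

variable [Countable κ]

lemma exists_measure_le_outerMeasure_of_refinement {κ' : Type*} (hK : MeasurableSet K)
    {M : OuterMeasure X} (hM : M K ≠ ∞) {q : X → κ} (hq : Measurable q) (hfin : (q '' K).Finite)
    (π : κ → κ') {m : κ' → ℝ≥0∞} (hm : ∀ j, m j ≤ M (K ∩ (π ∘ q) ⁻¹' {j})) :
    ∃ μ : Measure X, μ Kᶜ = 0 ∧ (∀ j, μ ((π ∘ q) ⁻¹' {j}) = m j) ∧
      ∀ k, μ (q ⁻¹' {k}) ≤ M (K ∩ q ⁻¹' {k}) := by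
  set c : κ → ℝ≥0∞ := fun k => M (K ∩ q ⁻¹' {k})
  have hc0 : ∀ k, c k ≠ 0 → (K ∩ q ⁻¹' {k}).Nonempty := fun k hk => by
    contrapose! hk
    simp [c, hk]
  have hc : ∑' k, c k ≠ ∞ := by
    rw [tsum_eq_sum (s := hfin.toFinset) fun k hk => by
      contrapose! hk
      obtain ⟨x, hxK, hxk⟩ := hc0 k hk
      exact hfin.mem_toFinset.2 ⟨x, hxK, hxk⟩]
    exact ENNReal.sum_ne_top.2 fun k _ => ((measure_mono inter_subset_left).trans_lt hM.lt_top).ne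
  have hsub : ∀ j, M (K ∩ (π ∘ q) ⁻¹' {j}) ≤ ∑' k : π ⁻¹' {j}, c k := fun j => by
    have hcover : K ∩ (π ∘ q) ⁻¹' {j} ⊆ ⋃ k : π ⁻¹' {j}, K ∩ q ⁻¹' {(k : κ)} :=
      fun x hx => mem_iUnion.2 ⟨⟨q x, hx.2⟩, hx.1, rfl⟩
    exact (measure_mono hcover).trans (measure_iUnion_le _)
  obtain ⟨w, hwc, hw⟩ := exists_le_tsum_fiber_eq π
    (fun j => ne_top_of_le_ne_top hc
      (ENNReal.tsum_comp_le_tsum_of_injective Subtype.val_injective c))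
    fun j => (hm j).trans (hsub j)
  obtain ⟨μ, hμK, hμ⟩ := exists_measure_preimage_eq_tsum hK hq (w := w) fun k hk =>
    hc0 k fun h => hk (le_antisymm ((hwc k).trans h.le) zero_le)
  exact ⟨μ, hμK, fun j => by rw [preimage_comp, hμ, hw], fun k => by
    simpa [hμ] using hwc k⟩

lemma exists_measure_le_outerMeasure_of_refining (hK : MeasurableSet K) {M : OuterMeasure X}
    (hM : M K ≠ ∞) {q : ℕ → X → κ} (hq : ∀ n, Measurable (q n))
    (hfin : ∀ n, (q n '' K).Finite) {π : κ → κ} (hπ : ∀ n, π ∘ q (n + 1) = q n) (n : ℕ) :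
    ∃ μ : Measure X, μ Kᶜ = 0 ∧ μ univ = M K ∧
      ∀ m ≤ n, ∀ k, μ (q m ⁻¹' {k}) ≤ M (K ∩ q m ⁻¹' {k}) := by
  induction n with
  | zero =>
    obtain ⟨μ, hμK, hμ, hμq⟩ := exists_measure_le_outerMeasure_of_refinement hK hM (hq 0) (hfin 0)
      (fun _ => ()) (m := fun _ => M K) (by simp [Function.comp_def])
    refine ⟨μ, hμK, by simpa [Function.comp_def] using hμ (), fun m hm => ?_⟩
    rwa [Nat.le_zero.1 hm]
  | succ n ih =>
    obtain ⟨ν, -, hνK, hν⟩ := ih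
    obtain ⟨μ, hμK, hμ, hμq⟩ := exists_measure_le_outerMeasure_of_refinement hK hM (hq (n + 1))
      (hfin (n + 1)) π (m := fun j => ν (q n ⁻¹' {j})) (by rw [hπ]; exact hν n le_rfl)
    rw [hπ] at hμ
    have hmap : μ.map (q n) = ν.map (q n) := Measure.ext_of_singleton fun j => by
      simp [Measure.map_apply (hq n), hμ]
    have hpre : ∀ B : Set κ, μ (q n ⁻¹' B) = ν (q n ⁻¹' B) := fun B => by
      rw [← Measure.map_apply (hq n) .of_discrete, hmap, Measure.map_apply (hq n) .of_discrete]
    refine ⟨μ, hμK, hνK ▸ hpre univ, fun m hm k => ?_⟩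
    rcases hm.eq_or_lt with rfl | hm
    · exact hμq k
    · obtain ⟨g, hg⟩ := exists_eq_comp_of_le hπ (Nat.lt_succ_iff.1 hm)
      have := hν m (Nat.lt_succ_iff.1 hm) k
      rw [hg, preimage_comp] at this ⊢
      rwa [hpre]

end MassDistribution

/-! ### Dyadic cubes -/

section Dyadic

variable {V ι : Type*} [NormedAddCommGroup V] [InnerProductSpace ℝ V] [Fintype ι]
  (b : OrthonormalBasis ι ℝ V)

/-- The index of the half-open dyadic cube of side `2⁻ⁿ` containing `x`, the cubes being
aligned with the coordinate axes of `b`. -/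
noncomputable def dyadicIndex (n : ℕ) (x : V) : ι → ℤ := fun i => ⌊2 ^ n * b.repr x i⌋

lemma halve_comp_dyadicIndex_succ (n : ℕ) :
    (fun k i => k i / 2) ∘ dyadicIndex b (n + 1) = dyadicIndex b n := by
  funext x i
  have h := Int.floor_div_natCast ((2 : ℝ) ^ (n + 1) * b.repr x i) 2
  rw [show (2 : ℝ) ^ (n + 1) * b.repr x i / (2 : ℕ) = 2 ^ n * b.repr x i by
    push_cast; rw [pow_succ]; ring] at h
  exact h.symm

lemma measurable_dyadicIndex [MeasurableSpace V] [BorelSpace V] (n : ℕ) :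
    Measurable (dyadicIndex b n) :=
  measurable_pi_lambda _ fun i => Int.measurable_floor.comp
    (Continuous.measurable (by fun_prop))

lemma dyadicIndex_mem_Icc {n : ℕ} {x y : V} {r : ℝ} (h : dist y x ≤ r) (i : ι) :
    dyadicIndex b n y i ∈
      Icc ⌊2 ^ n * (b.repr x i - r)⌋ ⌊2 ^ n * (b.repr x i + r)⌋ := by
  have hi : |b.repr y i - b.repr x i| ≤ r := by
    rw [← b.repr.dist_map, dist_eq_norm] at h
    exact (PiLp.norm_apply_le (b.repr y - b.repr x) i).trans h
  rw [abs_le] at hi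
  constructor <;> refine Int.floor_le_floor ?_ <;> gcongr <;> linarith

lemma finite_dyadicIndex_image {K : Set V} (hK : Bornology.IsBounded K) (n : ℕ) :
    (dyadicIndex b n '' K).Finite := by
  obtain ⟨R, hR⟩ := hK.subset_closedBall 0
  exact Set.Finite.subset (Set.Finite.pi fun i => Set.finite_Icc _ _)
    (image_subset_iff.2 fun y hy i _ => dyadicIndex_mem_Icc b (hR hy) i)

lemma exists_ball_subset_biUnion_dyadicIndex {n : ℕ} (x : V) {r : ℝ} (hr : r ≤ (2 ^ n)⁻¹) :
    ∃ T : Finset (ι → ℤ), T.card ≤ 3 ^ Fintype.card ι ∧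
      Metric.ball x r ⊆ ⋃ k ∈ T, dyadicIndex b n ⁻¹' {k} := by
  classical
  refine ⟨Fintype.piFinset fun i =>
    Finset.Icc (dyadicIndex b n x i - 1) (dyadicIndex b n x i + 1), le_of_eq ?_, fun y hy => ?_⟩
  · have hcard : ∀ m : ℤ, (m + 1 + 1 - (m - 1)).toNat = 3 := fun m => by ring_nf; rfl
    simp [Fintype.card_piFinset, hcard]
  · simp only [mem_iUnion, mem_preimage, mem_singleton_iff, exists_prop, exists_eq_right']
    refine Fintype.mem_piFinset.2 fun i => Finset.mem_Icc.2 ?_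
    have hi := dyadicIndex_mem_Icc b (n := n) ((Metric.mem_ball.1 hy).le.trans hr) i
    rwa [mul_sub, mul_add, mul_inv_cancel₀ (by positivity), Int.floor_sub_one,
      Int.floor_add_one] at hi

lemma ediam_dyadicIndex_preimage_le (n : ℕ) (k : ι → ℤ) :
    Metric.ediam (dyadicIndex b n ⁻¹' {k}) ≤
      ENNReal.ofReal (√(Fintype.card ι) * (2 ^ n)⁻¹) := by
  refine Metric.ediam_le fun x hx y hy => ?_
  have hcoord : ∀ i, dist (b.repr x i) (b.repr y i) ≤ (2 ^ n)⁻¹ := fun i => by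
    have h := Int.abs_sub_lt_one_of_floor_eq_floor (congrFun (hx.trans hy.symm) i)
    rw [← mul_sub, abs_mul, abs_of_pos (by positivity)] at h
    rw [Real.dist_eq, ← one_div, le_div_iff₀' (by positivity)]
    exact h.le
  rw [edist_dist, ← b.repr.dist_map, EuclideanSpace.dist_eq]
  refine ENNReal.ofReal_le_ofReal ?_
  calc √(∑ i, dist (b.repr x i) (b.repr y i) ^ 2)
      ≤ √(∑ _i : ι, ((2 ^ n)⁻¹) ^ 2) := by gcongr with i _; exact hcoord i
    _ = √(Fintype.card ι) * (2 ^ n)⁻¹ := by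
        rw [Finset.sum_const, Finset.card_univ, nsmul_eq_mul, Real.sqrt_mul (by positivity),
          Real.sqrt_sq (by positivity)]

end Dyadic

/-! ### Frostman's lemma -/

/-- Frostman measures: the mass of a ball is at most a constant times the `s`-th power of its
radius. -/
def IsFrostman {X : Type*} [PseudoMetricSpace X] [MeasurableSpace X] (μ : Measure X) (s : ℝ)
    (C : ℝ≥0) : Prop :=
  ∀ x, ∀ r > 0, μ (Metric.ball x r) ≤ C * ENNReal.ofReal (r ^ s)

lemma isFrostman_of_forall_le_one {X : Type*} [PseudoMetricSpace X] [MeasurableSpace X]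
    {μ : Measure X} [IsProbabilityMeasure μ] {s : ℝ} (hs : 0 ≤ s) {C : ℝ≥0}
    (h : ∀ x, ∀ r > 0, r ≤ 1 → μ (Metric.ball x r) ≤ C * ENNReal.ofReal (r ^ s)) :
    IsFrostman μ s (max C 1) := by
  intro x r hr
  rcases le_or_gt r 1 with hr1 | hr1
  · refine (h x r hr hr1).trans ?_
    gcongr
    exact le_max_left _ _
  · calc μ (Metric.ball x r) ≤ 1 * 1 := by simpa using prob_le_one
      _ ≤ _ := by
        gcongr
        · exact_mod_cast le_max_right C 1
        · exact ENNReal.one_le_ofReal.2 (Real.one_le_rpow hr1.le hs)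

lemma exists_probabilityMeasure_isOpen_le_of_isCompact {X : Type*} [MetricSpace X]
    [MeasurableSpace X] [BorelSpace X] {K : Set X} (hK : IsCompact K)
    {P : ℕ → ProbabilityMeasure X} (hP : ∀ n, (P n : Measure X) Kᶜ = 0) :
    ∃ ν : ProbabilityMeasure X, ∀ G b, IsOpen G →
      (∀ᶠ n in atTop, (P n : Measure X) G ≤ b) → (ν : Measure X) G ≤ b := by
  have htight : IsCompact (closure (range P)) := by
    refine isCompact_closure_of_isTightMeasureSet
      (isTightMeasureSet_iff_exists_isCompact_measure_compl_le.2 fun ε _ => ⟨K, hK, ?_⟩)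
    rintro _ ⟨_, ⟨n, rfl⟩, rfl⟩
    simp [hP]
  obtain ⟨ν, -, hν⟩ := htight.ultrafilter_le_nhds' ((hyperfilter ℕ).map P)
    (Ultrafilter.mem_map.2 (univ_mem' fun n => subset_closure (mem_range_self n)))
  refine ⟨ν, fun G b hG hb => ?_⟩
  exact (ProbabilityMeasure.le_liminf_measure_open_of_tendsto hν hG).trans
    (liminf_le_of_frequently_le' (hb.filter_mono Nat.hyperfilter_le_atTop).frequently)

section Frostman

variable {V : Type*} [NormedAddCommGroup V] [InnerProductSpace ℝ V] [MeasurableSpace V]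
  {K : Set V} {s : ℝ}

lemma measure_ball_le_of_dyadicIndex_le {ι : Type*} [Fintype ι] (b : OrthonormalBasis ι ℝ V)
    {μ : Measure V} {c : ℝ≥0∞} (hs : 0 ≤ s) {m : ℕ}
    (hμ : ∀ k, μ (dyadicIndex b m ⁻¹' {k}) ≤ c * hausdorffContent V s (dyadicIndex b m ⁻¹' {k}))
    (x : V) {r : ℝ} (hr : r ≤ (2 ^ m)⁻¹) (hr' : (2 ^ (m + 1))⁻¹ ≤ r) :
    μ (Metric.ball x r) ≤
      3 ^ Fintype.card ι * (c * ENNReal.ofReal ((√(Fintype.card ι) * 2) ^ s)) *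
        ENNReal.ofReal (r ^ s) := by
  obtain ⟨T, hT, hcov⟩ := exists_ball_subset_biUnion_dyadicIndex b x hr
  have hr0 : 0 ≤ r := le_trans (by positivity) hr'
  have hcell : ∀ k, hausdorffContent V s (dyadicIndex b m ⁻¹' {k}) ≤
      ENNReal.ofReal ((√(Fintype.card ι) * 2) ^ s) * ENNReal.ofReal (r ^ s) := fun k => by
    calc hausdorffContent V s (dyadicIndex b m ⁻¹' {k})
        ≤ ENNReal.ofReal (√(Fintype.card ι) * (2 ^ m)⁻¹) ^ s :=
          (hausdorffContent_le s _).trans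
            (ENNReal.rpow_le_rpow (ediam_dyadicIndex_preimage_le b m k) hs)
      _ ≤ ENNReal.ofReal (√(Fintype.card ι) * 2 * r) ^ s := by
          gcongr ENNReal.ofReal ?_ ^ s
          rw [mul_assoc]
          gcongr
          rw [pow_succ, mul_inv] at hr'
          linarith
      _ = _ := by
          rw [ENNReal.ofReal_rpow_of_nonneg (by positivity) hs, Real.mul_rpow (by positivity) hr0,
            ENNReal.ofReal_mul (by positivity)]
  calc μ (Metric.ball x r) ≤ ∑ k ∈ T, μ (dyadicIndex b m ⁻¹' {k}) :=
        (measure_mono hcov).trans (measure_biUnion_finset_le _ _)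
    _ ≤ ∑ _k ∈ T,
          c * (ENNReal.ofReal ((√(Fintype.card ι) * 2) ^ s) * ENNReal.ofReal (r ^ s)) :=
        Finset.sum_le_sum fun k _ => (hμ k).trans (by gcongr; exact hcell k)
    _ ≤ _ := by
        rw [Finset.sum_const, nsmul_eq_mul, ← mul_assoc c, ← mul_assoc]
        gcongr
        exact_mod_cast hT

variable [BorelSpace V]

lemma exists_probabilityMeasure_dyadicIndex_le (hK : IsCompact K) {M : OuterMeasure V}
    (hM0 : M K ≠ 0) (hM : M K ≠ ∞) {ι : Type*} [Fintype ι] (b : OrthonormalBasis ι ℝ V) (n : ℕ) :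
    ∃ P : ProbabilityMeasure V, (P : Measure V) Kᶜ = 0 ∧
      ∀ m ≤ n, ∀ k, (P : Measure V) (dyadicIndex b m ⁻¹' {k}) ≤
        (M K)⁻¹ * M (dyadicIndex b m ⁻¹' {k}) := by
  obtain ⟨μ, hμK, hμu, hμ⟩ := exists_measure_le_outerMeasure_of_refining hK.measurableSet hM
    (measurable_dyadicIndex b) (finite_dyadicIndex_image b hK.isBounded)
    (halve_comp_dyadicIndex_succ b) n
  refine ⟨⟨(M K)⁻¹ • μ, ⟨by simp [hμu, ENNReal.inv_mul_cancel hM0 hM]⟩⟩, by simp [hμK],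
    fun m hm k => ?_⟩
  simp only [ProbabilityMeasure.coe_mk, Measure.smul_apply, smul_eq_mul]
  gcongr
  exact (hμ m hm k).trans (measure_mono inter_subset_right)

/-- The measure is a weak limit of measures adapted to the Hausdorff content of `K` down to finer
and finer dyadic scales. -/
theorem exists_isFrostman [FiniteDimensional ℝ V] (hK : IsCompact K) (hs : 0 < s)
    (hKs : μH[s] K ≠ 0) :
    ∃ μ : ProbabilityMeasure V, (μ : Measure V) Kᶜ = 0 ∧
      ∃ C, IsFrostman (μ : Measure V) s C := by
  have hM0 : hausdorffContent V s K ≠ 0 := fun h =>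
    hKs (hausdorffMeasure_eq_zero_of_hausdorffContent_eq_zero hs h)
  have hM : hausdorffContent V s K ≠ ∞ := ((hausdorffContent_le s K).trans_lt
    (ENNReal.rpow_lt_top_of_nonneg hs.le hK.isBounded.ediam_ne_top)).ne
  set b := stdOrthonormalBasis ℝ V
  choose P hPK hP using exists_probabilityMeasure_dyadicIndex_le hK hM0 hM b
  obtain ⟨ν, hν⟩ := exists_probabilityMeasure_isOpen_le_of_isCompact hK hPK
  set A : ℝ≥0∞ := 3 ^ Fintype.card (Fin (Module.finrank ℝ V)) * ((hausdorffContent V s K)⁻¹ *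
    ENNReal.ofReal ((√(Fintype.card (Fin (Module.finrank ℝ V))) * 2) ^ s))
  have hA : A ≠ ∞ := by
    have := ENNReal.inv_ne_top.2 hM0
    finiteness
  have hball : ∀ x, ∀ r > 0, r ≤ 1 →
      (ν : Measure V) (Metric.ball x r) ≤ A.toNNReal * ENNReal.ofReal (r ^ s) := by
    intro x r hr hr1
    obtain ⟨m, hm1, hm2⟩ := exists_nat_pow_near_of_lt_one hr hr1 (y := 2⁻¹) (by norm_num)
      (by norm_num)
    rw [inv_pow] at hm1 hm2
    rw [ENNReal.coe_toNNReal hA]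
    refine hν _ _ Metric.isOpen_ball ?_
    filter_upwards [eventually_ge_atTop m] with n hn
    exact measure_ball_le_of_dyadicIndex_le b hs.le (hP n m hn) x hm2 hm1.le
  exact ⟨ν, le_antisymm (hν Kᶜ 0 hK.isClosed.isOpen_compl (.of_forall fun n => (hPK n).le)) zero_le,
    _, isFrostman_of_forall_le_one hs.le hball⟩

end Frostman

/-! ### Transversality to lines through the origin -/

section Transversality

variable {V : Type*} [NormedAddCommGroup V] [InnerProductSpace ℝ V] {K : Set V} {a : V} {R : ℝ}

/-- Every point `x` of `K` is at distance at least `c` from the origin, and at distance at least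
`c ‖x - x'‖` from the line spanned by any `x' ∈ K`. This is a bi-Lipschitz form of the injectivity
on `K` of `x ↦ ℝ x`. -/
structure IsRadiallyTransversal (c : ℝ) (K : Set V) : Prop where
  pos : 0 < c
  le_norm : ∀ x ∈ K, c ≤ ‖x‖
  mul_norm_sub_le : ∀ x ∈ K, ∀ x' ∈ K, ∀ τ : ℝ, c * ‖x - x'‖ ≤ ‖x - τ • x'‖

lemma IsRadiallyTransversal.mono {c : ℝ} {L : Set V} (h : IsRadiallyTransversal c L)
    (hKL : K ⊆ L) : IsRadiallyTransversal c K :=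
  ⟨h.pos, fun x hx => h.le_norm x (hKL hx), fun x hx x' hx' =>
    h.mul_norm_sub_le x (hKL hx) x' (hKL hx')⟩

lemma mul_norm_sub_le_of_inner_sub_eq_zero {x x' v : V} {m A B : ℝ} (hm : 0 ≤ m)
    (horth : ⟪x - x', v⟫ = 0) (hv : m ≤ |⟪x', v⟫|) (hA : ‖v‖ ≤ A) (hB : ‖x'‖ ≤ B) (τ : ℝ) :
    m * ‖x - x'‖ ≤ (m + A * B) * ‖x - τ • x'‖ := by
  have hB0 : 0 ≤ B := (norm_nonneg _).trans hB
  set w := x - τ • x' with hw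
  have hx : x - x' = w + (τ - 1) • x' := by rw [hw, sub_smul, one_smul]; abel
  have hinner : (τ - 1) * ⟪x', v⟫ = -⟪w, v⟫ := by
    rw [hx, inner_add_left, real_inner_smul_left] at horth
    linarith
  have hτ : m * |τ - 1| ≤ A * ‖w‖ := by
    calc m * |τ - 1| ≤ |⟪x', v⟫| * |τ - 1| := by gcongr
      _ = |⟪w, v⟫| := by rw [mul_comm, ← abs_mul, hinner, abs_neg]
      _ ≤ ‖w‖ * ‖v‖ := abs_real_inner_le_norm _ _
      _ ≤ A * ‖w‖ := by rw [mul_comm]; gcongr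
  calc m * ‖x - x'‖ ≤ m * (‖w‖ + |τ - 1| * B) := by
        rw [hx]
        gcongr
        refine (norm_add_le _ _).trans ?_
        rw [norm_smul, Real.norm_eq_abs]
        gcongr
    _ = m * ‖w‖ + (m * |τ - 1|) * B := by ring
    _ ≤ m * ‖w‖ + (A * ‖w‖) * B := by gcongr
    _ = (m + A * B) * ‖w‖ := by ring

lemma isRadiallyTransversal_of_orthogonal {v : V → V → V} {m A B : ℝ} (hm : 0 < m) (hA : 0 ≤ A)
    (hB : 0 ≤ B) (horth : ∀ x ∈ K, ∀ x' ∈ K, ⟪x - x', v x x'⟫ = 0)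
    (hv : ∀ x ∈ K, ∀ x' ∈ K, m ≤ |⟪x', v x x'⟫|) (hvA : ∀ x ∈ K, ∀ x' ∈ K, ‖v x x'‖ ≤ A)
    (hKB : ∀ x ∈ K, ‖x‖ ≤ B) : IsRadiallyTransversal (m / (m + A * (B + 1))) K where
  pos := by positivity
  le_norm x hx := by
    have h : m ≤ ‖x‖ * A := calc
      m ≤ |⟪x, v x x⟫| := hv x hx x hx
      _ ≤ ‖x‖ * ‖v x x‖ := abs_real_inner_le_norm _ _
      _ ≤ ‖x‖ * A := by gcongr; exact hvA x hx x hx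
    rw [div_le_iff₀ (by positivity)]
    nlinarith [mul_nonneg (norm_nonneg x) hm.le, mul_nonneg (mul_nonneg (norm_nonneg x) hA) hB]
  mul_norm_sub_le x hx x' hx' τ := by
    have h := mul_norm_sub_le_of_inner_sub_eq_zero hm.le (horth x hx x' hx') (hv x hx x' hx')
      (hvA x hx x' hx') ((hKB x' hx').trans (le_add_of_nonneg_right zero_le_one)) τ
    rwa [div_mul_eq_mul_div, div_le_iff₀' (by positivity)]

lemma exists_isRadiallyTransversal_of_inner_eq {ρ : ℝ} (hρ : ρ ≠ 0) (hK : Bornology.IsBounded K)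
    (h : ∀ x ∈ K, ⟪x, a⟫ = ρ) : ∃ c, IsRadiallyTransversal c K := by
  obtain ⟨B, hB0, hB⟩ := hK.exists_pos_norm_le
  refine ⟨_, isRadiallyTransversal_of_orthogonal (v := fun _ _ => a) (abs_pos.2 hρ)
    (norm_nonneg a) hB0.le (fun x hx x' hx' => ?_) (fun x _ x' hx' => ?_) (fun _ _ _ _ => le_rfl)
    hB⟩
  · rw [inner_sub_left, h x hx, h x' hx', sub_self]
  · rw [h x' hx']

/-- Here `x + x' - 2a` is orthogonal to `x - x'`, and close to `2 (p - a)`. -/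
lemma exists_nhds_isRadiallyTransversal_sphere {p : V} (hp : ⟪p, p - a⟫ ≠ 0) :
    ∃ U ∈ 𝓝 p, ∃ c, IsRadiallyTransversal c (Metric.sphere a R ∩ U) := by
  have hcont : Continuous fun z : V × V => |⟪z.2, (z.1 - a) + (z.2 - a)⟫| := by fun_prop
  have hev : ∀ᶠ z : V × V in 𝓝 (p, p), |⟪p, p - a⟫| < |⟪z.2, (z.1 - a) + (z.2 - a)⟫| := by
    refine hcont.continuousAt.eventually (lt_mem_nhds ?_)
    simp only [inner_add_right, ← two_mul, abs_mul, abs_two]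
    linarith [abs_pos.2 hp]
  rw [nhds_prod_eq, Filter.Eventually, Filter.mem_prod_self_iff] at hev
  obtain ⟨U, hU, hUsub⟩ := hev
  refine ⟨U ∩ Metric.closedBall p 1, inter_mem hU (Metric.closedBall_mem_nhds p one_pos), _,
    isRadiallyTransversal_of_orthogonal (v := fun x x' => (x - a) + (x' - a)) (abs_pos.2 hp)
      (A := |R| + |R|) (B := ‖p‖ + 1) (by positivity) (by positivity) ?_ ?_ ?_ ?_⟩
  · rintro x ⟨hx, -⟩ x' ⟨hx', -⟩
    rw [← sub_sub_sub_cancel_right x x' a, real_inner_comm, real_inner_add_sub_eq_zero_iff,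
      mem_sphere_iff_norm.1 hx, mem_sphere_iff_norm.1 hx']
  · exact fun x hx x' hx' => (hUsub (mk_mem_prod hx.2.1 hx'.2.1)).le
  · rintro x ⟨hx, -⟩ x' ⟨hx', -⟩
    refine (norm_add_le _ _).trans ?_
    rw [mem_sphere_iff_norm.1 hx, mem_sphere_iff_norm.1 hx']
    exact add_le_add (le_abs_self R) (le_abs_self R)
  · exact fun x hx => norm_le_norm_add_const_of_dist_le hx.2.2

lemma inner_eq_and_norm_sq_eq_of_mem_sphere {x : V} (hx : x ∈ Metric.sphere a R)
    (htan : ⟪x, x - a⟫ = 0) : ⟪x, a⟫ = ‖a‖ ^ 2 - R ^ 2 ∧ ‖x‖ ^ 2 = ‖a‖ ^ 2 - R ^ 2 := by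
  have h1 := norm_sub_sq_real x a
  rw [mem_sphere_iff_norm.1 hx] at h1
  rw [inner_sub_right, real_inner_self_eq_norm_sq] at htan
  constructor <;> linarith

/-- The points where the line through the origin is tangent to the sphere lie on a hyperplane.
Either they carry the dimension, or a neighbourhood of a point of transversal intersection does. -/
theorem exists_isRadiallyTransversal_lt_dimH [SecondCountableTopology V] {E : Set V}
    (hE : E ⊆ Metric.sphere a R) (hEc : IsCompact E) {t : ℝ≥0∞} (ht : t < dimH E) :
    ∃ K ⊆ E, IsCompact K ∧ t < dimH K ∧ ∃ c, IsRadiallyTransversal c K := by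
  set T : Set V := {x | ⟪x, x - a⟫ = 0}
  have hTc : IsClosed T := isClosed_eq (by fun_prop) continuous_const
  rw [← inter_union_sdiff E T, dimH_union, lt_max_iff] at ht
  rcases ht with ht | ht
  · have htan : ∀ x ∈ E ∩ T, _ := fun x hx =>
      inner_eq_and_norm_sq_eq_of_mem_sphere (hE hx.1) hx.2
    refine ⟨E ∩ T, inter_subset_left, hEc.inter_right hTc, ht,
      exists_isRadiallyTransversal_of_inner_eq (a := a) (ρ := ‖a‖ ^ 2 - R ^ 2) ?_
        (hEc.isBounded.subset inter_subset_left) fun x hx => (htan x hx).1⟩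
    intro h0
    have hsub : E ∩ T ⊆ {0} := fun x hx => by simpa [h0] using (htan x hx).2
    exact (ht.trans_le (dimH_mono hsub)).not_ge (by simp)
  · obtain ⟨p, ⟨-, hpT⟩, hp⟩ := exists_mem_nhdsWithin_lt_dimH_of_lt_dimH ht
    obtain ⟨U, hU, c, hc⟩ := exists_nhds_isRadiallyTransversal_sphere (R := R) hpT
    obtain ⟨ε, hε, hεU⟩ := Metric.nhds_basis_closedBall.mem_iff.1 hU
    refine ⟨E ∩ Metric.closedBall p ε, inter_subset_left,
      hEc.inter_right Metric.isClosed_closedBall, ?_, c, hc.mono (inter_subset_inter hE hεU)⟩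
    refine (hp _ (inter_mem self_mem_nhdsWithin (mem_nhdsWithin_of_mem_nhds
      (Metric.closedBall_mem_nhds p hε)))).trans_le (dimH_mono ?_)
    exact inter_subset_inter_left _ sdiff_subset

end Transversality

/-! ### Gaussian energy -/

lemma hasDerivAt_neg_exp_neg_sq (r : ℝ) :
    HasDerivAt (fun r : ℝ => -Real.exp (-r ^ 2)) (2 * r * Real.exp (-r ^ 2)) r := by
  refine ((hasDerivAt_pow 2 r).fun_neg.exp.fun_neg).congr_deriv ?_
  ring

lemma ofReal_exp_neg_sq_eq_lintegral_Ioi {a : ℝ} (ha : 0 ≤ a) :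
    ENNReal.ofReal (Real.exp (-a ^ 2)) =
      ∫⁻ r in Ioi a, ENNReal.ofReal (2 * r * Real.exp (-r ^ 2)) := by
  have hnonneg : ∀ r ∈ Ioi a, 0 ≤ 2 * r * Real.exp (-r ^ 2) := fun r hr => by
    have : 0 ≤ r := ha.trans (le_of_lt hr)
    positivity
  have hlim : Tendsto (fun r : ℝ => -Real.exp (-r ^ 2)) atTop (𝓝 0) := by
    simpa using (Real.tendsto_exp_neg_atTop_nhds_zero.comp (tendsto_pow_atTop two_ne_zero)).neg
  rw [← ofReal_integral_eq_lintegral_ofReal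
    (integrableOn_Ioi_deriv_of_nonneg' (fun r _ => hasDerivAt_neg_exp_neg_sq r) hnonneg hlim)
    (ae_restrict_of_forall_mem measurableSet_Ioi hnonneg),
    integral_Ioi_of_hasDerivAt_of_nonneg' (fun r _ => hasDerivAt_neg_exp_neg_sq r) hnonneg hlim]
  simp

lemma lintegral_Ioi_mul_rpow_mul_exp_neg_sq {s : ℝ} (hs : -2 < s) :
    ∫⁻ r in Ioi (0 : ℝ), ENNReal.ofReal (2 * r * Real.exp (-r ^ 2)) * ENNReal.ofReal (r ^ s) =
      ENNReal.ofReal (Real.Gamma (s / 2 + 1)) := by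
  have hexp : ∀ r ∈ Ioi (0 : ℝ), ENNReal.ofReal (2 * r * Real.exp (-r ^ 2)) *
      ENNReal.ofReal (r ^ s) = ENNReal.ofReal (2 * (r ^ (s + 1) * Real.exp (-r ^ (2 : ℝ)))) := by
    intro r hr
    have hr0 : 0 < r := hr
    rw [← ENNReal.ofReal_mul (by positivity), Real.rpow_add_one hr0.ne', Real.rpow_two]
    ring_nf
  rw [setLIntegral_congr_fun measurableSet_Ioi hexp, ← ofReal_integral_eq_lintegral_ofReal
    ((integrableOn_rpow_mul_exp_neg_rpow (by linarith) two_pos).const_mul 2)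
    (ae_restrict_of_forall_mem measurableSet_Ioi fun r hr => by
      have : 0 < r := hr
      positivity), integral_const_mul,
    integral_rpow_mul_exp_neg_rpow two_pos (by linarith)]
  ring_nf

/-- Layer-cake representation of `e^{-f²}`. -/
lemma lintegral_exp_neg_sq_le_of_measure_lt_le {X : Type*} [MeasurableSpace X] {μ : Measure X}
    [SFinite μ] {f : X → ℝ} (hf : Measurable f) (hf0 : ∀ x, 0 ≤ f x) {s : ℝ} (hs : -2 < s)
    {A : ℝ≥0∞} (h : ∀ r > 0, μ {x | f x < r} ≤ A * ENNReal.ofReal (r ^ s)) :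
    ∫⁻ x, ENNReal.ofReal (Real.exp (-f x ^ 2)) ∂μ ≤
      A * ENNReal.ofReal (Real.Gamma (s / 2 + 1)) := by
  set g : ℝ → ℝ≥0∞ := fun r => ENNReal.ofReal (2 * r * Real.exp (-r ^ 2))
  have hg : Measurable g := by fun_prop
  have hS : MeasurableSet {z : X × ℝ | f z.1 < z.2} :=
    measurableSet_lt (hf.comp measurable_fst) measurable_snd
  calc ∫⁻ x, ENNReal.ofReal (Real.exp (-f x ^ 2)) ∂μ
      = ∫⁻ x, ∫⁻ r in Ioi (0 : ℝ),
          {z : X × ℝ | f z.1 < z.2}.indicator (fun z => g z.2) (x, r) ∂volume ∂μ := by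
        refine lintegral_congr fun x => ?_
        have hx : ∀ r, {z : X × ℝ | f z.1 < z.2}.indicator (fun z => g z.2) (x, r) =
          (Ioi (f x)).indicator g r := fun r => rfl
        simp_rw [hx]
        rw [setLIntegral_indicator measurableSet_Ioi,
          inter_eq_self_of_subset_left (Ioi_subset_Ioi (hf0 x)),
          ofReal_exp_neg_sq_eq_lintegral_Ioi (hf0 x)]
    _ = ∫⁻ r in Ioi (0 : ℝ), g r * μ {x | f x < r} := by
        rw [lintegral_lintegral_swap (f := fun x r =>
          {z : X × ℝ | f z.1 < z.2}.indicator (fun z => g z.2) (x, r))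
          ((hg.comp measurable_snd).indicator hS).aemeasurable]
        refine lintegral_congr fun r => ?_
        exact lintegral_indicator_const (hf measurableSet_Iio) (g r)
    _ ≤ ∫⁻ r in Ioi (0 : ℝ), A * (g r * ENNReal.ofReal (r ^ s)) := by
        refine setLIntegral_mono' measurableSet_Ioi fun r hr => ?_
        rw [mul_left_comm]
        exact mul_le_mul_right (h r hr) _
    _ = A * ENNReal.ofReal (Real.Gamma (s / 2 + 1)) := by
        rw [lintegral_const_mul _ (by fun_prop),
          lintegral_Ioi_mul_rpow_mul_exp_neg_sq hs]

/-- The Gaussian energy `∬ e^{-(N ‖y - z‖)²} dμ(y) dμ(z)`. Up to a power of `N` it is the squared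
`L²` norm of `μ` smoothed at scale `1 / N`. -/
noncomputable def gaussianEnergy {V : Type*} [NormedAddCommGroup V] [MeasurableSpace V]
    (μ : Measure V) (N : ℝ) : ℝ≥0∞ :=
  ∫⁻ y, ∫⁻ z, ENNReal.ofReal (Real.exp (-(N * ‖y - z‖) ^ 2)) ∂μ ∂μ

lemma IsFrostman.gaussianEnergy_le {V : Type*} [NormedAddCommGroup V] [MeasurableSpace V]
    [BorelSpace V] {μ : Measure V} [SFinite μ] {s : ℝ} {C : ℝ≥0} (hμ : IsFrostman μ s C)
    (hs : -2 < s) {N : ℝ} (hN : 0 < N) :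
    gaussianEnergy μ N ≤
      C * ENNReal.ofReal (N ^ (-s)) * ENNReal.ofReal (Real.Gamma (s / 2 + 1)) * μ univ := by
  rw [← lintegral_const]
  refine lintegral_mono fun y => lintegral_exp_neg_sq_le_of_measure_lt_le
    (f := fun z => N * ‖y - z‖) (Continuous.measurable (by fun_prop)) (fun z => by positivity) hs
    fun r hr => ?_
  have hball : {z | N * ‖y - z‖ < r} = Metric.ball y (r / N) := by
    ext z
    simp only [mem_ofPred_eq, Metric.mem_ball', dist_eq_norm, lt_div_iff₀' hN]
  rw [hball, mul_assoc, ← ENNReal.ofReal_mul (by positivity), Real.rpow_neg hN.le,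
    ← div_eq_inv_mul, ← Real.div_rpow hr.le hN.le]
  exact hμ y _ (div_pos hr hN)

lemma sq_lintegral_le {X : Type*} [MeasurableSpace X] {μ : Measure X} {f : X → ℝ≥0∞}
    (hf : AEMeasurable f μ) : (∫⁻ x, f x ∂μ) ^ 2 ≤ μ univ * ∫⁻ x, f x ^ 2 ∂μ := by
  have h := ENNReal.lintegral_mul_le_Lp_mul_Lq μ Real.HolderConjugate.two_two
    (aemeasurable_const (b := (1 : ℝ≥0∞))) hf
  simp only [Pi.mul_apply, one_mul, ENNReal.rpow_two, one_pow, lintegral_one] at h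
  calc (∫⁻ x, f x ∂μ) ^ 2
      ≤ (μ univ ^ (1 / 2 : ℝ) * (∫⁻ x, f x ^ 2 ∂μ) ^ (1 / 2 : ℝ)) ^ 2 := by gcongr
    _ = _ := by
        rw [← ENNReal.mul_rpow_of_nonneg _ _ (by positivity), ← ENNReal.rpow_natCast,
          ← ENNReal.rpow_mul]
        norm_num

section EnergyCriterion

variable {V : Type*} [NormedAddCommGroup V] [InnerProductSpace ℝ V] [FiniteDimensional ℝ V]
  [MeasurableSpace V] [BorelSpace V] {σ : Measure V}

lemma lintegral_measure_closedBall [SFinite σ] (δ : ℝ) :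
    ∫⁻ p : V, σ (Metric.closedBall p δ) = volume (Metric.closedBall (0 : V) δ) * σ univ := by
  have hS : MeasurableSet {z : V × V | dist z.2 z.1 ≤ δ} :=
    (isClosed_le (by fun_prop) continuous_const).measurableSet
  calc ∫⁻ p : V, σ (Metric.closedBall p δ) = (volume.prod σ) {z : V × V | dist z.2 z.1 ≤ δ} :=
        (Measure.prod_apply hS).symm
    _ = ∫⁻ q, volume (Metric.closedBall q δ) ∂σ := by
        rw [Measure.prod_apply_symm hS]
        simp only [preimage_ofPred_eq, dist_comm, Metric.closedBall]
    _ = _ := by simp [Measure.addHaar_closedBall_center]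

lemma volume_closedBall_inter_closedBall_le {δ : ℝ} (hδ : 0 < δ) (q q' : V) :
    volume (Metric.closedBall q δ ∩ Metric.closedBall q' δ) ≤
      volume (Metric.closedBall (0 : V) δ) * ENNReal.ofReal (Real.exp 1) *
        ENNReal.ofReal (Real.exp (-(1 / (2 * δ) * ‖q - q'‖) ^ 2)) := by
  rcases (Metric.closedBall q δ ∩ Metric.closedBall q' δ).eq_empty_or_nonempty with h | ⟨p, hq, hq'⟩
  · simp [h]
  · have hdist : ‖q - q'‖ ≤ 2 * δ := by
      rw [← dist_eq_norm]
      linarith [dist_triangle_left q q' p, Metric.mem_closedBall.1 hq, Metric.mem_closedBall.1 hq']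
    have hle : 1 / (2 * δ) * ‖q - q'‖ ≤ 1 := by
      rwa [one_div_mul_eq_div, div_le_one (by positivity)]
    calc volume (Metric.closedBall q δ ∩ Metric.closedBall q' δ)
        ≤ volume (Metric.closedBall (0 : V) δ) * 1 := by
          rw [mul_one, ← Measure.addHaar_closedBall_center volume q]
          exact measure_mono inter_subset_left
      _ ≤ _ := by
          rw [mul_assoc, ← ENNReal.ofReal_mul (by positivity), ← Real.exp_add]
          gcongr
          rw [ENNReal.one_le_ofReal, Real.one_le_exp_iff, ← sub_eq_add_neg, sub_nonneg]
          exact pow_le_one₀ (by positivity) hle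

lemma lintegral_sq_measure_closedBall_le [SFinite σ] {δ : ℝ} (hδ : 0 < δ) :
    ∫⁻ p : V, σ (Metric.closedBall p δ) ^ 2 ≤
      volume (Metric.closedBall (0 : V) δ) * ENNReal.ofReal (Real.exp 1) *
        gaussianEnergy σ (1 / (2 * δ)) := by
  let S : Set (V × V × V) := {z | dist z.1 z.2.1 ≤ δ} ∩ {z | dist z.1 z.2.2 ≤ δ}
  have hS : MeasurableSet S := ((isClosed_le (by fun_prop) continuous_const).inter
    (isClosed_le (by fun_prop) continuous_const)).measurableSet
  have hm : Measurable fun z : V × V =>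
      ENNReal.ofReal (Real.exp (-(1 / (2 * δ) * ‖z.1 - z.2‖) ^ 2)) := by fun_prop
  calc ∫⁻ p : V, σ (Metric.closedBall p δ) ^ 2
      = ∫⁻ p : V, (σ.prod σ) (Metric.closedBall p δ ×ˢ Metric.closedBall p δ) := by
        simp_rw [Measure.prod_prod, sq]
    _ = (volume.prod (σ.prod σ)) S := by
        rw [Measure.prod_apply hS]
        refine lintegral_congr fun p => congrArg _ ?_
        ext z
        simp [S, dist_comm]
    _ = ∫⁻ z, volume (Metric.closedBall z.1 δ ∩ Metric.closedBall z.2 δ) ∂σ.prod σ :=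
        Measure.prod_apply_symm hS
    _ ≤ _ := lintegral_mono fun z => volume_closedBall_inter_closedBall_le hδ z.1 z.2
    _ = _ := by
        rw [lintegral_const_mul _ hm, lintegral_prod _ hm.aemeasurable, gaussianEnergy]

/-- Cauchy–Schwarz for `p ↦ σ (closedBall p δ)`, which is supported in the `δ`-neighbourhood
of `F`. -/
lemma sq_measure_univ_mul_volume_closedBall_le [SFinite σ] {F : Set V} (hF : σ Fᶜ = 0) {δ : ℝ}
    (hδ : 0 < δ) :
    σ univ ^ 2 * volume (Metric.closedBall (0 : V) δ) ≤
      volume (Metric.cthickening δ F) *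
        (ENNReal.ofReal (Real.exp 1) * gaussianEnergy σ (1 / (2 * δ))) := by
  set T := Metric.cthickening δ F
  set v := volume (Metric.closedBall (0 : V) δ)
  have hm : Measurable fun p : V => σ (Metric.closedBall p δ) := measurable_measure_prodMk_left
    (s := {z : V × V | dist z.2 z.1 ≤ δ}) (isClosed_le (by fun_prop) continuous_const).measurableSet
  have hsupp : ∀ p ∉ T, σ (Metric.closedBall p δ) = 0 := fun p hp =>
    measure_mono_null (fun q hq hqF => hp (Metric.mem_cthickening_of_dist_le p q δ F hqF
      (Metric.mem_closedBall'.1 hq))) hF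
  have hv0 : v ≠ 0 := (Metric.measure_closedBall_pos volume _ hδ).ne'
  have hv : v ≠ ∞ := measure_closedBall_lt_top.ne
  refine (ENNReal.mul_le_mul_iff_right hv0 hv).1 ?_
  calc v * (σ univ ^ 2 * v) = (v * σ univ) ^ 2 := by ring
    _ = (∫⁻ p in T, σ (Metric.closedBall p δ)) ^ 2 := by
        rw [← lintegral_measure_closedBall, setLIntegral_eq_of_support_subset
          (Function.support_subset_iff'.2 hsupp)]
    _ ≤ volume T * ∫⁻ p in T, σ (Metric.closedBall p δ) ^ 2 := by
        simpa using sq_lintegral_le (hm.aemeasurable (μ := volume.restrict T))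
    _ ≤ volume T * (v * ENNReal.ofReal (Real.exp 1) * gaussianEnergy σ (1 / (2 * δ))) := by
        gcongr
        exact (setLIntegral_le_lintegral _ _).trans (lintegral_sq_measure_closedBall_le hδ)
    _ = _ := by ring

end EnergyCriterion

theorem volume_ne_zero_of_liminf_gaussianEnergy_ne_top {σ : Measure ℝ} [IsFiniteMeasure σ]
    (hσ : σ ≠ 0) {F : Set ℝ} (hF : IsCompact F) (hσF : σ Fᶜ = 0)
    (hlim : liminf (fun n : ℕ => ENNReal.ofReal n * gaussianEnergy σ n) atTop ≠ ∞) :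
    volume F ≠ 0 := by
  obtain ⟨C, hC, hCtop⟩ := exists_between hlim.lt_top
  have hfreq := frequently_lt_of_liminf_lt (by isBoundedDefault) hC
  have hbound : ∀ n : ℕ, 0 < n → ENNReal.ofReal n * gaussianEnergy σ n < C →
      σ univ ^ 2 ≤ volume (Metric.cthickening (1 / (2 * n)) F) *
        (ENNReal.ofReal (Real.exp 1) * C) := by
    intro n hn hnC
    have hn' : (0 : ℝ) < n := Nat.cast_pos.2 hn
    have h := sq_measure_univ_mul_volume_closedBall_le hσF (δ := 1 / (2 * n)) (by positivity)
    have hvol : volume (Metric.closedBall (0 : ℝ) (1 / (2 * n))) = (ENNReal.ofReal n)⁻¹ := by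
      rw [Real.volume_closedBall, ← ENNReal.ofReal_inv_of_pos hn']
      congr 1
      field_simp
    have hδn : 1 / (2 * (1 / (2 * (n : ℝ)))) = n := by field_simp
    rw [hvol, hδn, ← div_eq_mul_inv,
      ENNReal.div_le_iff (by simpa using hn.ne') (by finiteness)] at h
    refine h.trans ?_
    rw [mul_assoc, mul_assoc, mul_comm (gaussianEnergy σ n)]
    gcongr
  intro hF0
  have hδ : Tendsto (fun n : ℕ => 1 / (2 * (n : ℝ))) atTop (𝓝 0) := by
    simpa using tendsto_inv_atTop_nhds_zero_nat.mul_const (2⁻¹ : ℝ)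
  have hzero := ENNReal.Tendsto.mul_const (b := ENNReal.ofReal (Real.exp 1) * C)
    ((tendsto_measure_cthickening_of_isCompact (μ := volume) hF).comp hδ) (Or.inr (by finiteness))
  rw [hF0, zero_mul] at hzero
  have hσ2 : 0 < σ univ ^ 2 := by simpa [pos_iff_ne_zero] using hσ
  obtain ⟨n, hnC, hn, hn0⟩ := (hfreq.and_eventually
    ((hzero.eventually_lt_const hσ2).and (eventually_gt_atTop 0))).exists
  exact (hbound n hn0 hnC).not_gt hn

/-! ### Fourier side -/

section Fourier

variable {V : Type*} [NormedAddCommGroup V] [InnerProductSpace ℝ V] [MeasurableSpace V]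
  [BorelSpace V]

section Parseval

variable [SecondCountableTopology V] (μ ν : Measure V) [IsFiniteMeasure μ] [IsFiniteMeasure ν]

lemma integral_charFun_comm : ∫ η, charFun μ η ∂ν = ∫ x, charFun ν x ∂μ := by
  have hint : Integrable (fun z : V × V => Complex.exp (⟪z.2, z.1⟫ * Complex.I)) (ν.prod μ) :=
    Integrable.of_bound (Continuous.aestronglyMeasurable (by fun_prop)) 1
      (.of_forall fun z => (Complex.norm_exp_ofReal_mul_I _).le)
  calc ∫ η, charFun μ η ∂ν
      = ∫ x, ∫ η, Complex.exp (⟪x, η⟫ * Complex.I) ∂ν ∂μ :=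
        integral_integral_swap (f := fun η x => Complex.exp (⟪x, η⟫ * Complex.I)) hint
    _ = ∫ x, charFun ν x ∂μ := by simp_rw [charFun_apply, real_inner_comm]

lemma charFun_map_sub (η : V) :
    charFun ((μ.prod μ).map fun z => z.1 - z.2) η = ((‖charFun μ η‖ ^ 2 : ℝ) : ℂ) := by
  have hexp : ∀ z : V × V, Complex.exp (⟪z.1 - z.2, η⟫ * Complex.I) =
      Complex.exp (⟪z.1, η⟫ * Complex.I) * Complex.exp (⟪z.2, -η⟫ * Complex.I) := fun z => by
    rw [← Complex.exp_add, inner_sub_left, inner_neg_right]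
    push_cast
    ring_nf
  rw [charFun_apply, integral_map (by fun_prop) (Continuous.aestronglyMeasurable (by fun_prop))]
  simp_rw [hexp]
  rw [integral_prod_mul (fun x => Complex.exp (⟪x, η⟫ * Complex.I))
    (fun x => Complex.exp (⟪x, -η⟫ * Complex.I)), ← charFun_apply, ← charFun_apply, charFun_neg,
    Complex.mul_conj, Complex.normSq_eq_norm_sq]

variable {μ ν} in
lemma lintegral_sq_enorm_charFun {g : V → ℝ} (hg : ∀ u, charFun ν u = g u) (hg0 : ∀ u, 0 ≤ g u) :
    ∫⁻ η, ‖charFun μ η‖ₑ ^ 2 ∂ν = ∫⁻ y, ∫⁻ z, ENNReal.ofReal (g (y - z)) ∂μ ∂μ := by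
  have hgm : Measurable g := by
    have hre : g = fun u => (charFun ν u).re := funext fun u => by rw [hg, Complex.ofReal_re]
    rw [hre]
    exact Complex.measurable_re.comp measurable_charFun
  have hint : Integrable (fun η => ‖charFun μ η‖ ^ 2) ν :=
    Integrable.of_bound (measurable_charFun.norm.pow_const 2).aestronglyMeasurable
      (μ.real univ ^ 2) (.of_forall fun η => by
        rw [norm_pow, norm_norm]
        gcongr
        exact norm_charFun_le η)
  have hgint : Integrable g ((μ.prod μ).map fun z => z.1 - z.2) :=
    Integrable.of_bound hgm.aestronglyMeasurable (ν.real univ) (.of_forall fun u => by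
      rw [← Complex.norm_real, ← hg]
      exact norm_charFun_le u)
  have hparseval : ∫ η, ‖charFun μ η‖ ^ 2 ∂ν = ∫ u, g u ∂(μ.prod μ).map fun z => z.1 - z.2 := by
    apply Complex.ofReal_injective
    simp_rw [← integral_complex_ofReal, ← hg, ← charFun_map_sub]
    exact integral_charFun_comm _ _
  calc ∫⁻ η, ‖charFun μ η‖ₑ ^ 2 ∂ν = ENNReal.ofReal (∫ η, ‖charFun μ η‖ ^ 2 ∂ν) := by
        rw [ofReal_integral_eq_lintegral_ofReal hint (.of_forall fun η => by positivity)]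
        simp_rw [ENNReal.ofReal_pow (norm_nonneg _), ofReal_norm]
    _ = ∫⁻ u, ENNReal.ofReal (g u) ∂(μ.prod μ).map fun z => z.1 - z.2 := by
        rw [hparseval, ofReal_integral_eq_lintegral_ofReal hgint (.of_forall hg0)]
    _ = ∫⁻ y, ∫⁻ z, ENNReal.ofReal (g (y - z)) ∂μ ∂μ := by
        rw [lintegral_map (by fun_prop) (by fun_prop), lintegral_prod _ (by fun_prop)]

end Parseval

variable [FiniteDimensional ℝ V]

variable (V) in
/-- The Gaussian measure with density `e^{-(‖ξ‖/R)²}`. It is not normalised, so that its mass grows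
with the scale `R`. -/
noncomputable def gaussMeasure (R : ℝ) : Measure V :=
  volume.withDensity fun ξ => ENNReal.ofReal (Real.exp (-(‖ξ‖ / R) ^ 2))

lemma lintegral_gaussMeasure (R : ℝ) {f : V → ℝ≥0∞} (hf : Measurable f) :
    ∫⁻ ξ, f ξ ∂gaussMeasure V R = ∫⁻ ξ, ENNReal.ofReal (Real.exp (-(‖ξ‖ / R) ^ 2)) * f ξ :=
  lintegral_withDensity_eq_lintegral_mul _ (by fun_prop) hf

lemma isFiniteMeasure_gaussMeasure {R : ℝ} (hR : 0 < R) : IsFiniteMeasure (gaussMeasure V R) := by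
  have hre : 0 < (((R ^ 2)⁻¹ : ℝ) : ℂ).re := by rw [Complex.ofReal_re]; positivity
  have hint := (GaussianFourier.integrable_cexp_neg_mul_sq_norm_add (V := V) hre 0 0).norm
  refine isFiniteMeasure_withDensity_ofReal (hint.congr (.of_forall fun ξ => ?_)).2
  simp only [Complex.norm_exp, zero_mul, add_zero]
  norm_cast
  congr 1
  ring

lemma charFun_gaussMeasure {R : ℝ} (hR : 0 < R) (u : V) :
    charFun (gaussMeasure V R) u =
      (((√Real.pi * R) ^ Module.finrank ℝ V * Real.exp (-(R / 2 * ‖u‖) ^ 2) : ℝ) : ℂ) := by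
  have hdensity : ∀ ξ : V, (ENNReal.ofReal (Real.exp (-(‖ξ‖ / R) ^ 2))).toReal •
      Complex.exp (⟪ξ, u⟫ * Complex.I) =
      Complex.exp (-((R ^ 2)⁻¹ : ℝ) * ‖ξ‖ ^ 2 + Complex.I * ⟪u, ξ⟫) := fun ξ => by
    rw [ENNReal.toReal_ofReal (by positivity), Complex.exp_add, Complex.real_smul, real_inner_comm,
      mul_comm Complex.I]
    push_cast
    ring_nf
  have hre : 0 < (((R ^ 2)⁻¹ : ℝ) : ℂ).re := by rw [Complex.ofReal_re]; positivity
  have hconst : (Real.pi / ((R ^ 2)⁻¹ : ℝ) : ℂ) ^ (Module.finrank ℝ V / 2 : ℂ) =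
      ((√Real.pi * R) ^ Module.finrank ℝ V : ℝ) := by
    have hsq : Real.pi / (R ^ 2)⁻¹ = (√Real.pi * R) ^ (2 : ℝ) := by
      rw [Real.rpow_two, mul_pow, Real.sq_sqrt Real.pi_nonneg, div_inv_eq_mul]
    have hexp : (Module.finrank ℝ V / 2 : ℂ) = ((Module.finrank ℝ V / 2 : ℝ) : ℂ) := by
      push_cast; rfl
    rw [← Complex.ofReal_div, hexp, ← Complex.ofReal_cpow (by positivity), hsq,
      ← Real.rpow_mul (by positivity), mul_div_cancel₀ _ two_ne_zero, Real.rpow_natCast]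
  rw [charFun_apply, gaussMeasure, integral_withDensity_eq_integral_toReal_smul (by fun_prop)
    (.of_forall fun _ => ENNReal.ofReal_lt_top)]
  simp_rw [hdensity]
  rw [GaussianFourier.integral_cexp_neg_mul_sq_norm_add hre, hconst, Complex.I_sq]
  push_cast
  congr 2
  field_simp
  ring

lemma lintegral_sq_enorm_charFun_gaussMeasure (μ : Measure V) [IsFiniteMeasure μ] {R : ℝ}
    (hR : 0 < R) :
    ∫⁻ η, ‖charFun μ η‖ₑ ^ 2 ∂gaussMeasure V R =
      ENNReal.ofReal ((√Real.pi * R) ^ Module.finrank ℝ V) * gaussianEnergy μ (R / 2) := by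
  have := isFiniteMeasure_gaussMeasure (V := V) hR
  rw [lintegral_sq_enorm_charFun (charFun_gaussMeasure hR) (fun u => by positivity),
    gaussianEnergy]
  simp_rw [ENNReal.ofReal_mul (pow_nonneg (mul_nonneg (Real.sqrt_nonneg Real.pi) hR.le) _),
    lintegral_const_mul' _ _ ENNReal.ofReal_ne_top]

end Fourier

/-! ### Tubes around lines through the origin -/

section Tubes

variable {V : Type*} [NormedAddCommGroup V] [InnerProductSpace ℝ V]

/-- The distance from `η` to the line `ℝ x`, as the norm of the component of `η` orthogonal to `x`
(it is `‖η‖` when `x = 0`). -/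
noncomputable def lineDist (η x : V) : ℝ := ‖η - (⟪η, x⟫ / ‖x‖ ^ 2) • x‖

/-- The weight `∫ e^{-‖η - t x‖²/4} dt`, concentrated in the tube of radius one around the line
`ℝ x`. -/
noncomputable def tubeWeight (η x : V) : ℝ≥0∞ :=
  ∫⁻ t : ℝ, ENNReal.ofReal (Real.exp (-(‖η - t • x‖ / 2) ^ 2))

lemma norm_sub_smul_sq_eq_lineDist_sq_add {x : V} (hx : x ≠ 0) (η : V) (t : ℝ) :
    ‖η - t • x‖ ^ 2 = lineDist η x ^ 2 + (‖x‖ * (t - ⟪η, x⟫ / ‖x‖ ^ 2)) ^ 2 := by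
  set t₀ := ⟪η, x⟫ / ‖x‖ ^ 2 with ht₀
  have horth : ⟪η - t₀ • x, (t₀ - t) • x⟫ = 0 := by
    rw [real_inner_smul_right, inner_sub_left, real_inner_smul_left, real_inner_self_eq_norm_sq,
      ht₀, div_mul_cancel₀ _ (by simpa using hx), sub_self, mul_zero]
  have hdecomp : η - t • x = (η - t₀ • x) + (t₀ - t) • x := by rw [sub_smul]; abel
  rw [hdecomp, norm_add_sq_real, horth, norm_smul, lineDist, mul_pow, Real.norm_eq_abs, sq_abs]
  ring

lemma lintegral_exp_neg_sq_mul {b : ℝ} (hb : 0 < b) :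
    ∫⁻ t : ℝ, ENNReal.ofReal (Real.exp (-(b * t) ^ 2)) = ENNReal.ofReal (√Real.pi / b) := by
  have hexp : ∀ t : ℝ, Real.exp (-(b * t) ^ 2) = Real.exp (-b ^ 2 * t ^ 2) := fun t => by ring_nf
  simp_rw [hexp]
  rw [← ofReal_integral_eq_lintegral_ofReal (integrable_exp_neg_mul_sq (by positivity))
    (.of_forall fun t => by positivity), integral_gaussian, Real.sqrt_div Real.pi_nonneg,
    Real.sqrt_sq hb.le]

lemma tubeWeight_eq {x : V} (hx : x ≠ 0) (η : V) :
    tubeWeight η x = ENNReal.ofReal (2 * √Real.pi / ‖x‖) *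
      ENNReal.ofReal (Real.exp (-(lineDist η x / 2) ^ 2)) := by
  set t₀ := ⟪η, x⟫ / ‖x‖ ^ 2
  have hexp : ∀ t, ENNReal.ofReal (Real.exp (-(‖η - t • x‖ / 2) ^ 2)) =
      ENNReal.ofReal (Real.exp (-(‖x‖ / 2 * (t - t₀)) ^ 2)) *
        ENNReal.ofReal (Real.exp (-(lineDist η x / 2) ^ 2)) := fun t => by
    rw [← ENNReal.ofReal_mul (by positivity), ← Real.exp_add, div_pow,
      norm_sub_smul_sq_eq_lineDist_sq_add hx]
    simp only [t₀]
    ring_nf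
  simp_rw [tubeWeight, hexp]
  rw [lintegral_mul_const' _ _ ENNReal.ofReal_ne_top, lintegral_sub_right_eq_self
    (fun t : ℝ => ENNReal.ofReal (Real.exp (-(‖x‖ / 2 * t) ^ 2))),
    lintegral_exp_neg_sq_mul (by positivity)]
  congr 2
  field_simp

lemma mul_exp_neg_sq_inner_le {D : ℝ} {v : V} (hv : ‖v‖ ≤ D) {N : ℝ} (hN : 0 ≤ N) (x : V) (n : ℕ) :
    N * Real.exp (-(N * ⟪x, v⟫) ^ 2) ≤ Real.exp (D ^ 2) *
      (√Real.pi * (2 * N) * (√Real.pi * 2) ^ n *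
        (Real.exp (-(2 * N / 2 * ⟪x, v⟫) ^ 2) * Real.exp (-‖v‖ ^ 2))) := by
  have hpi : 1 ≤ √Real.pi := Real.one_le_sqrt.2 (by linarith [Real.pi_gt_three])
  have hc : 1 ≤ √Real.pi * 2 * (√Real.pi * 2) ^ n :=
    one_le_mul_of_one_le_of_one_le (by linarith) (one_le_pow₀ (by linarith))
  have hcut : 1 ≤ Real.exp (D ^ 2) * Real.exp (-‖v‖ ^ 2) := by
    rw [← Real.exp_add, Real.one_le_exp_iff, ← sub_eq_add_neg, sub_nonneg]
    gcongr
  calc N * Real.exp (-(N * ⟪x, v⟫) ^ 2)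
      ≤ N * Real.exp (-(N * ⟪x, v⟫) ^ 2) * (√Real.pi * 2 * (√Real.pi * 2) ^ n *
          (Real.exp (D ^ 2) * Real.exp (-‖v‖ ^ 2))) :=
        le_mul_of_one_le_right (by positivity) (one_le_mul_of_one_le_of_one_le hc hcut)
    _ = _ := by
        rw [mul_div_cancel_left₀ N two_ne_zero]
        ring

variable [FiniteDimensional ℝ V] [MeasurableSpace V] [BorelSpace V]

lemma measurable_lineDist (η : V) : Measurable (lineDist η) := by
  unfold lineDist
  fun_prop

@[fun_prop]
lemma measurable_tubeWeight : Measurable fun z : V × V => tubeWeight z.1 z.2 :=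
  Measurable.lintegral_prod_right' (f := fun w : (V × V) × ℝ =>
    ENNReal.ofReal (Real.exp (-(‖w.1.1 - w.2 • w.1.2‖ / 2) ^ 2))) (by fun_prop)

/-- The Gaussian of scale `R` along the line `ℝ x`, thickened by the Gaussian of scale `2`, whose
Fourier transform is a multiple of `e^{-‖u‖²}`. -/
noncomputable def tubeMeasure (x : V) (R : ℝ) : Measure V :=
  ((gaussMeasure ℝ R).map (· • x)) ∗ gaussMeasure V 2

lemma isFiniteMeasure_tubeMeasure (x : V) {R : ℝ} (hR : 0 < R) :
    IsFiniteMeasure (tubeMeasure x R) := by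
  have := isFiniteMeasure_gaussMeasure (V := ℝ) hR
  have := isFiniteMeasure_gaussMeasure (V := V) two_pos
  unfold tubeMeasure
  infer_instance

lemma charFun_tubeMeasure (x : V) {R : ℝ} (hR : 0 < R) (u : V) :
    charFun (tubeMeasure x R) u = ((√Real.pi * R * (√Real.pi * 2) ^ Module.finrank ℝ V *
      (Real.exp (-(R / 2 * ⟪x, u⟫) ^ 2) * Real.exp (-‖u‖ ^ 2)) : ℝ) : ℂ) := by
  have := isFiniteMeasure_gaussMeasure (V := ℝ) hR
  have := isFiniteMeasure_gaussMeasure (V := V) two_pos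
  have hmap : charFun ((gaussMeasure ℝ R).map (· • x)) u = charFun (gaussMeasure ℝ R) ⟪x, u⟫ := by
    rw [charFun_apply, charFun_apply, integral_map (by fun_prop)
      (Continuous.aestronglyMeasurable (by fun_prop))]
    simp [real_inner_smul_left, mul_comm]
  rw [tubeMeasure, charFun_conv, hmap, charFun_gaussMeasure hR, charFun_gaussMeasure two_pos,
    ← Complex.ofReal_mul, Module.finrank_self, Real.norm_eq_abs, mul_pow (R / 2), sq_abs]
  ring_nf

lemma lintegral_tubeMeasure_le (x : V) (R : ℝ) {f : V → ℝ≥0∞} (hf : Measurable f) :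
    ∫⁻ η, f η ∂tubeMeasure x R ≤ ∫⁻ η, f η * tubeWeight η x := by
  have := isFiniteMeasure_gaussMeasure (V := V) two_pos
  calc ∫⁻ η, f η ∂tubeMeasure x R
      = ∫⁻ t, ∫⁻ ξ, f (t • x + ξ) ∂gaussMeasure V 2 ∂gaussMeasure ℝ R := by
        rw [tubeMeasure, Measure.lintegral_conv hf, lintegral_map _ (by fun_prop)]
        exact Measurable.lintegral_prod_right' (f := fun z : V × V => f (z.1 + z.2)) (by fun_prop)
    _ ≤ ∫⁻ t : ℝ, ∫⁻ ξ, f (t • x + ξ) ∂gaussMeasure V 2 := by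
        rw [lintegral_gaussMeasure _ (Measurable.lintegral_prod_right'
          (f := fun z : ℝ × V => f (z.1 • x + z.2)) (by fun_prop))]
        refine lintegral_mono fun t => mul_le_of_le_one_left zero_le ?_
        exact ENNReal.ofReal_le_one.2 (Real.exp_le_one_iff.2 (neg_nonpos.2 (sq_nonneg _)))
    _ = ∫⁻ t : ℝ, ∫⁻ η, f η * ENNReal.ofReal (Real.exp (-(‖η - t • x‖ / 2) ^ 2)) := by
        refine lintegral_congr fun t => ?_
        rw [lintegral_gaussMeasure _ (by fun_prop), ← lintegral_sub_right_eq_self _ (t • x)]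
        simp only [add_sub_cancel, mul_comm]
    _ = ∫⁻ η, f η * tubeWeight η x := by
        rw [lintegral_lintegral_swap (by fun_prop)]
        exact lintegral_congr fun η => lintegral_const_mul _ (by fun_prop)

lemma gaussianEnergy_map_inner {μ : Measure V} [SFinite μ] (x : V) (N : ℝ) :
    gaussianEnergy (μ.map (⟪x, ·⟫)) N =
      ∫⁻ y, ∫⁻ z, ENNReal.ofReal (Real.exp (-(N * ⟪x, y - z⟫) ^ 2)) ∂μ ∂μ := by
  rw [gaussianEnergy, lintegral_map (Measurable.lintegral_prod_right' (f := fun z : ℝ × ℝ =>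
    ENNReal.ofReal (Real.exp (-(N * ‖z.1 - z.2‖) ^ 2))) (by fun_prop)) (by fun_prop)]
  refine lintegral_congr fun y => ?_
  rw [lintegral_map (by fun_prop) (by fun_prop)]
  simp only [inner_sub_right, Real.norm_eq_abs, mul_pow, sq_abs]

lemma mul_gaussianEnergy_map_inner_le {μ : Measure V} [IsFiniteMeasure μ] {B : ℝ}
    (hB : ∀ᵐ y ∂μ, ‖y‖ ≤ B) {N : ℝ} (hN : 0 < N) (x : V) :
    ENNReal.ofReal N * gaussianEnergy (μ.map (⟪x, ·⟫)) N ≤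
      ENNReal.ofReal (Real.exp ((2 * B) ^ 2)) * ∫⁻ η, ‖charFun μ η‖ₑ ^ 2 * tubeWeight η x := by
  have h2N : 0 < 2 * N := mul_pos two_pos hN
  have := isFiniteMeasure_tubeMeasure x h2N
  calc ENNReal.ofReal N * gaussianEnergy (μ.map (⟪x, ·⟫)) N
      = ∫⁻ y, ∫⁻ z, ENNReal.ofReal (N * Real.exp (-(N * ⟪x, y - z⟫) ^ 2)) ∂μ ∂μ := by
        simp_rw [gaussianEnergy_map_inner, ENNReal.ofReal_mul hN.le,
          lintegral_const_mul' _ _ ENNReal.ofReal_ne_top]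
    _ ≤ ∫⁻ y, ∫⁻ z, ENNReal.ofReal (Real.exp ((2 * B) ^ 2) *
          (√Real.pi * (2 * N) * (√Real.pi * 2) ^ Module.finrank ℝ V *
            (Real.exp (-(2 * N / 2 * ⟪x, y - z⟫) ^ 2) * Real.exp (-‖y - z‖ ^ 2)))) ∂μ ∂μ := by
        refine lintegral_mono_ae (hB.mono fun y hy => lintegral_mono_ae (hB.mono fun z hz => ?_))
        have hyz : ‖y - z‖ ≤ 2 * B := (norm_sub_le _ _).trans (by linarith)
        exact ENNReal.ofReal_le_ofReal (mul_exp_neg_sq_inner_le hyz hN.le x _)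
    _ = ENNReal.ofReal (Real.exp ((2 * B) ^ 2)) *
          ∫⁻ η, ‖charFun μ η‖ₑ ^ 2 ∂tubeMeasure x (2 * N) := by
        rw [lintegral_sq_enorm_charFun (charFun_tubeMeasure x h2N) (fun u => by positivity)]
        simp_rw [ENNReal.ofReal_mul (Real.exp_nonneg ((2 * B) ^ 2)),
          lintegral_const_mul' _ _ ENNReal.ofReal_ne_top]
    _ ≤ _ := mul_le_mul_right
        (lintegral_tubeMeasure_le x _ (measurable_charFun.enorm.pow_const 2)) _

end Tubes

/-! ### Average over the base point -/

section Averaging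

variable {V : Type*} [NormedAddCommGroup V] [InnerProductSpace ℝ V] {K : Set V} {c B : ℝ}

lemma IsRadiallyTransversal.norm_sub_lt_of_lineDist_lt (hK : IsRadiallyTransversal c K)
    (hB0 : 0 < B) {η x x' : V} (hx : x ∈ K) (hx' : x' ∈ K) (hxB : ‖x‖ ≤ B) {ρ : ℝ} (hρ : 0 < ρ)
    (hη : 2 * ρ ≤ ‖η‖) (hηx : lineDist η x < ρ) (hηx' : lineDist η x' < ρ) :
    ‖x - x'‖ < 4 * B / c * (ρ / ‖η‖) := by
  have hc := hK.pos
  have hη0 : 0 < ‖η‖ := by linarith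
  set t := ⟪η, x⟫ / ‖x‖ ^ 2
  set t' := ⟪η, x'⟫ / ‖x'‖ ^ 2
  have hηx : ‖η - t • x‖ < ρ := hηx
  have hηx' : ‖η - t' • x'‖ < ρ := hηx'
  have htB : ‖η‖ / 2 < |t| * B := calc
    ‖η‖ / 2 < ‖t • x‖ := by linarith [norm_le_norm_add_norm_sub' η (t • x)]
    _ ≤ |t| * B := by rw [norm_smul, Real.norm_eq_abs]; gcongr
  have ht : 0 < |t| := pos_of_mul_pos_left ((half_pos hη0).trans htB) hB0.le
  have hfactor : t • (x - (t' / t) • x') = (η - t' • x') - (η - t • x) := by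
    rw [smul_sub, smul_smul, mul_div_cancel₀ _ (abs_pos.1 ht)]
    abel
  have hclose : |t| * (c * ‖x - x'‖) < 2 * ρ := calc
    |t| * (c * ‖x - x'‖) ≤ |t| * ‖x - (t' / t) • x'‖ := by
      gcongr
      exact hK.mul_norm_sub_le x hx x' hx' _
    _ = ‖(η - t' • x') - (η - t • x)‖ := by rw [← Real.norm_eq_abs, ← norm_smul, hfactor]
    _ ≤ ‖η - t' • x'‖ + ‖η - t • x‖ := norm_sub_le _ _
    _ < 2 * ρ := by linarith
  rw [div_mul_div_comm, lt_div_iff₀ (by positivity)]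
  calc ‖x - x'‖ * (c * ‖η‖) = 2 * (‖η‖ / 2 * (c * ‖x - x'‖)) := by ring
    _ ≤ 2 * (|t| * B * (c * ‖x - x'‖)) := by gcongr
    _ = 2 * (B * (|t| * (c * ‖x - x'‖))) := by ring
    _ < 2 * (B * (2 * ρ)) := by gcongr
    _ = 4 * B * ρ := by ring

variable [MeasurableSpace V] {μ : Measure V} {s : ℝ} {C : ℝ≥0}

lemma IsFrostman.exists_measure_lineDist_lt_le [IsProbabilityMeasure μ] (hμ : IsFrostman μ s C)
    (hs : 0 ≤ s) (hμK : μ Kᶜ = 0) (hK : IsRadiallyTransversal c K)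
    (hKb : Bornology.IsBounded K) :
    ∃ A : ℝ≥0, ∀ η ≠ 0, ∀ ρ > 0,
      μ {x | lineDist η x < ρ} ≤ A * ENNReal.ofReal ((ρ / ‖η‖) ^ s) := by
  have hc := hK.pos
  obtain ⟨B, hB0, hB⟩ := hKb.exists_pos_norm_le
  refine ⟨C * ((4 * B / c) ^ s).toNNReal + ((2 : ℝ) ^ s).toNNReal, fun η hη ρ hρ => ?_⟩
  have hη0 : 0 < ‖η‖ := norm_pos_iff.2 hη
  have hpow : ∀ b ≥ 0, ENNReal.ofReal (b ^ s) * ENNReal.ofReal ((ρ / ‖η‖) ^ s) =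
      ENNReal.ofReal ((b * (ρ / ‖η‖)) ^ s) := fun b hb => by
    rw [← ENNReal.ofReal_mul (by positivity), Real.mul_rpow hb (by positivity)]
  rw [ENNReal.coe_add, ENNReal.coe_mul, ENNReal.ofNNReal_toNNReal, ENNReal.ofNNReal_toNNReal,
    add_mul, mul_assoc, hpow _ (by positivity), hpow _ (by positivity)]
  rcases le_or_gt (2 * ρ) ‖η‖ with h | h
  · refine le_add_right ?_
    by_cases hx : ∃ x ∈ K, lineDist η x < ρ
    · obtain ⟨x₀, hx₀, hηx₀⟩ := hx
      refine (measure_mono_ae ?_).trans (hμ x₀ _ (by positivity))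
      refine (ae_iff.2 hμK : ∀ᵐ x ∂μ, x ∈ K).mono fun x hx hηx => ?_
      exact mem_ball_iff_norm.2
        (hK.norm_sub_lt_of_lineDist_lt hB0 hx hx₀ (hB x hx) hρ h hηx hηx₀)
    · push Not at hx
      have hnull : μ {x | lineDist η x < ρ} = 0 :=
        measure_mono_null (fun x hηx hxK => (hx x hxK).not_gt hηx) hμK
      exact hnull.le.trans zero_le
  · refine le_add_left (prob_le_one.trans ?_)
    rw [ENNReal.one_le_ofReal, ← mul_div_assoc]
    exact Real.one_le_rpow ((one_le_div hη0).2 h.le) hs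

lemma IsRadiallyTransversal.exists_lintegral_exp_neg_lineDist_sq_le [FiniteDimensional ℝ V]
    [BorelSpace V] [IsProbabilityMeasure μ] (hK : IsRadiallyTransversal c K)
    (hKb : Bornology.IsBounded K) (hμK : μ Kᶜ = 0) (hμ : IsFrostman μ s C) (hs : 0 ≤ s) :
    ∃ A : ℝ≥0, ∀ η : V, ∫⁻ x, ENNReal.ofReal (Real.exp (-(lineDist η x / 2) ^ 2)) ∂μ ≤
      A * ENNReal.ofReal (max 1 ‖η‖ ^ (-s)) := by
  obtain ⟨A, hA⟩ := hμ.exists_measure_lineDist_lt_le hs hμK hK hKb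
  set G := ENNReal.ofReal (2 ^ s) * ENNReal.ofReal (Real.Gamma (s / 2 + 1)) with hG
  refine ⟨(1 + A * G).toNNReal, fun η => ?_⟩
  rw [ENNReal.coe_toNNReal (by finiteness)]
  rcases le_or_gt ‖η‖ 1 with h | h
  · rw [max_eq_left h, Real.one_rpow, ENNReal.ofReal_one, mul_one]
    refine le_add_right ((lintegral_mono fun x => ?_).trans (lintegral_one.trans_le prob_le_one))
    exact ENNReal.ofReal_le_one.2 (Real.exp_le_one_iff.2 (neg_nonpos.2 (sq_nonneg _)))
  · rw [max_eq_right h.le]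
    have hη : 0 < ‖η‖ := one_pos.trans h
    have htube : ∀ r > 0, μ {x | lineDist η x / 2 < r} ≤
        A * ENNReal.ofReal (2 ^ s) * ENNReal.ofReal (‖η‖ ^ (-s)) * ENNReal.ofReal (r ^ s) := by
      intro r hr
      simp only [div_lt_iff₀' (two_pos (α := ℝ))]
      refine (hA η (norm_pos_iff.1 hη) (2 * r) (by positivity)).trans_eq ?_
      rw [mul_assoc, mul_assoc, ← ENNReal.ofReal_mul (by positivity),
        ← ENNReal.ofReal_mul (by positivity), Real.div_rpow (by positivity) hη.le,
        Real.mul_rpow two_pos.le hr.le, Real.rpow_neg hη.le]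
      ring_nf
    refine (lintegral_exp_neg_sq_le_of_measure_lt_le ((measurable_lineDist η).div_const 2)
      (fun x => div_nonneg (norm_nonneg _) two_pos.le) (by linarith) htube).trans ?_
    rw [hG, add_mul]
    refine le_add_left (le_of_eq ?_)
    ring

lemma IsRadiallyTransversal.exists_lintegral_tubeWeight_le [FiniteDimensional ℝ V] [BorelSpace V]
    [IsProbabilityMeasure μ] (hK : IsRadiallyTransversal c K) (hKb : Bornology.IsBounded K)
    (hμK : μ Kᶜ = 0) (hμ : IsFrostman μ s C) (hs : 0 ≤ s) :
    ∃ A : ℝ≥0, ∀ η : V, ∫⁻ x, tubeWeight η x ∂μ ≤ A * ENNReal.ofReal (max 1 ‖η‖ ^ (-s)) := by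
  have hc := hK.pos
  obtain ⟨A, hA⟩ := hK.exists_lintegral_exp_neg_lineDist_sq_le hKb hμK hμ hs
  refine ⟨(ENNReal.ofReal (2 * √Real.pi / c) * A).toNNReal, fun η => ?_⟩
  rw [ENNReal.coe_toNNReal (by finiteness), mul_assoc]
  calc ∫⁻ x, tubeWeight η x ∂μ
      ≤ ∫⁻ x, ENNReal.ofReal (2 * √Real.pi / c) *
          ENNReal.ofReal (Real.exp (-(lineDist η x / 2) ^ 2)) ∂μ := by
        refine lintegral_mono_ae ((ae_iff.2 hμK : ∀ᵐ x ∂μ, x ∈ K).mono fun x hx => ?_)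
        have hcx := hK.le_norm x hx
        rw [tubeWeight_eq (norm_pos_iff.1 (hc.trans_le hcx))]
        gcongr
    _ = ENNReal.ofReal (2 * √Real.pi / c) *
          ∫⁻ x, ENNReal.ofReal (Real.exp (-(lineDist η x / 2) ^ 2)) ∂μ :=
        lintegral_const_mul' _ _ ENNReal.ofReal_ne_top
    _ ≤ _ := by
        gcongr
        exact hA η

end Averaging

/-! ### Weighted energy -/

section WeightedEnergy

lemma ofReal_max_one_rpow_neg_le_tsum {t r : ℝ} (ht : 0 ≤ t) (hr : 0 ≤ r) :
    ENNReal.ofReal (max 1 r ^ (-t)) ≤ ENNReal.ofReal (Real.exp 4) * ∑' j : ℕ,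
      ENNReal.ofReal (((2 : ℝ) ^ j) ^ (-t)) * ENNReal.ofReal (Real.exp (-(r / 2 ^ j) ^ 2)) := by
  obtain ⟨j, hj, hj'⟩ := exists_nat_pow_near (le_max_left 1 r) one_lt_two
  have hrj : r / 2 ^ j ≤ 2 := by
    rw [div_le_iff₀ (by positivity), ← pow_succ']
    exact (le_max_right 1 r).trans hj'.le
  have hexp : 1 ≤ Real.exp 4 * Real.exp (-(r / 2 ^ j) ^ 2) := by
    rw [← Real.exp_add, Real.one_le_exp_iff, ← sub_eq_add_neg, sub_nonneg]
    calc (r / 2 ^ j) ^ 2 ≤ 2 ^ 2 := by gcongr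
      _ = 4 := by norm_num
  calc ENNReal.ofReal (max 1 r ^ (-t))
      ≤ ENNReal.ofReal (((2 : ℝ) ^ j) ^ (-t) * (Real.exp 4 * Real.exp (-(r / 2 ^ j) ^ 2))) :=
        ENNReal.ofReal_le_ofReal <|
          (Real.rpow_le_rpow_of_nonpos (by positivity) hj (neg_nonpos.2 ht)).trans
            (le_mul_of_one_le_right (by positivity) hexp)
    _ = ENNReal.ofReal (Real.exp 4) * (ENNReal.ofReal (((2 : ℝ) ^ j) ^ (-t)) *
          ENNReal.ofReal (Real.exp (-(r / 2 ^ j) ^ 2))) := by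
        rw [← ENNReal.ofReal_mul (by positivity), ← ENNReal.ofReal_mul (by positivity),
          mul_left_comm]
    _ ≤ _ := mul_le_mul_right (ENNReal.le_tsum j) _

variable {V : Type*} [NormedAddCommGroup V] [InnerProductSpace ℝ V] [FiniteDimensional ℝ V]
  [MeasurableSpace V] [BorelSpace V] {μ : Measure V} [IsFiniteMeasure μ] {s t : ℝ} {C : ℝ≥0}

lemma IsFrostman.exists_lintegral_gaussian_mul_sq_enorm_charFun_le (hμ : IsFrostman μ s C)
    (hs : -2 < s) : ∃ A : ℝ≥0, ∀ R > 0,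
      ∫⁻ ξ, ENNReal.ofReal (Real.exp (-(‖ξ‖ / R) ^ 2)) * ‖charFun μ ξ‖ₑ ^ 2 ≤
        A * ENNReal.ofReal (R ^ (Module.finrank ℝ V - s)) := by
  set d := Module.finrank ℝ V
  set G := ENNReal.ofReal (Real.Gamma (s / 2 + 1))
  refine ⟨(ENNReal.ofReal (√Real.pi ^ d * 2 ^ s) * (C * G * μ univ)).toNNReal, fun R hR => ?_⟩
  rw [ENNReal.coe_toNNReal (by finiteness),
    ← lintegral_gaussMeasure R (measurable_charFun.enorm.pow_const 2),
    lintegral_sq_enorm_charFun_gaussMeasure μ hR]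
  calc ENNReal.ofReal ((√Real.pi * R) ^ d) * gaussianEnergy μ (R / 2)
      ≤ ENNReal.ofReal ((√Real.pi * R) ^ d) *
          (C * ENNReal.ofReal ((R / 2) ^ (-s)) * G * μ univ) := by
        gcongr
        exact hμ.gaussianEnergy_le hs (half_pos hR)
    _ = ENNReal.ofReal ((√Real.pi * R) ^ d * (R / 2) ^ (-s)) * (C * G * μ univ) := by
        rw [ENNReal.ofReal_mul (by positivity)]
        ring
    _ = ENNReal.ofReal (√Real.pi ^ d * 2 ^ s * R ^ ((d : ℝ) - s)) * (C * G * μ univ) := by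
        rw [mul_pow, Real.div_rpow hR.le two_pos.le, Real.rpow_neg two_pos.le, div_inv_eq_mul,
          sub_eq_add_neg, Real.rpow_add hR, Real.rpow_natCast]
        ring_nf
    _ = _ := by
        rw [ENNReal.ofReal_mul (by positivity)]
        ring

/-- The integral is the square of the Sobolev norm of `μ` of order `-t / 2`. -/
lemma IsFrostman.lintegral_sq_enorm_charFun_mul_ne_top (hμ : IsFrostman μ s C) (hs : -2 < s)
    (ht : 0 ≤ t) (hst : Module.finrank ℝ V < s + t) :
    ∫⁻ ξ, ‖charFun μ ξ‖ₑ ^ 2 * ENNReal.ofReal (max 1 ‖ξ‖ ^ (-t)) ≠ ∞ := by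
  obtain ⟨A, hA⟩ := hμ.exists_lintegral_gaussian_mul_sq_enorm_charFun_le hs
  set q : ℝ := 2 ^ (Module.finrank ℝ V - s - t) with hq
  have hq1 : q < 1 := Real.rpow_lt_one_of_one_lt_of_neg one_lt_two (by linarith)
  have hscale : ∀ j : ℕ,
      ((2 : ℝ) ^ j) ^ (-t) * ((2 : ℝ) ^ j) ^ (Module.finrank ℝ V - s) = q ^ j := fun j => by
    rw [← Real.rpow_add (by positivity), hq, ← Real.rpow_natCast, ← Real.rpow_natCast,
      ← Real.rpow_mul two_pos.le, ← Real.rpow_mul two_pos.le]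
    ring_nf
  refine ne_top_of_le_ne_top (b := ENNReal.ofReal (Real.exp 4) *
    ∑' j : ℕ, A * ENNReal.ofReal (q ^ j)) ?_ ?_
  · rw [ENNReal.tsum_mul_left]
    have := (summable_geometric_of_lt_one (by positivity) hq1).tsum_ofReal_ne_top
    finiteness
  calc ∫⁻ ξ, ‖charFun μ ξ‖ₑ ^ 2 * ENNReal.ofReal (max 1 ‖ξ‖ ^ (-t))
      ≤ ∫⁻ ξ, ENNReal.ofReal (Real.exp 4) * ∑' j : ℕ, ENNReal.ofReal (((2 : ℝ) ^ j) ^ (-t)) *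
          (ENNReal.ofReal (Real.exp (-(‖ξ‖ / 2 ^ j) ^ 2)) * ‖charFun μ ξ‖ₑ ^ 2) := by
        refine lintegral_mono fun ξ => ?_
        simp_rw [← mul_assoc, ENNReal.tsum_mul_right, ← mul_assoc]
        rw [mul_comm]
        gcongr
        exact ofReal_max_one_rpow_neg_le_tsum ht (norm_nonneg ξ)
    _ = ENNReal.ofReal (Real.exp 4) * ∑' j : ℕ, ENNReal.ofReal (((2 : ℝ) ^ j) ^ (-t)) *
          ∫⁻ ξ, ENNReal.ofReal (Real.exp (-(‖ξ‖ / 2 ^ j) ^ 2)) * ‖charFun μ ξ‖ₑ ^ 2 := by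
        rw [lintegral_const_mul' _ _ ENNReal.ofReal_ne_top, lintegral_tsum fun j => by fun_prop]
        simp_rw [lintegral_const_mul' _ _ ENNReal.ofReal_ne_top]
    _ ≤ _ := by
        refine mul_le_mul_right (ENNReal.tsum_le_tsum fun j => ?_) _
        grw [hA (2 ^ j) (by positivity), mul_left_comm, ← ENNReal.ofReal_mul (by positivity),
          hscale]

end WeightedEnergy

/-! ### Pinned projections -/

section Pinned

variable {V : Type*} [NormedAddCommGroup V] [InnerProductSpace ℝ V] [FiniteDimensional ℝ V]
  [MeasurableSpace V] [BorelSpace V] {μ : Measure V} {K : Set V} {c s : ℝ} {C : ℝ≥0}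

lemma measurable_gaussianEnergy_map_inner [SFinite μ] (N : ℝ) :
    Measurable fun x : V => gaussianEnergy (μ.map (⟪x, ·⟫)) N := by
  simp_rw [gaussianEnergy_map_inner]
  refine Measurable.lintegral_prod_right' (f := fun w : V × V =>
    ∫⁻ z, ENNReal.ofReal (Real.exp (-(N * ⟪w.1, w.2 - z⟫) ^ 2)) ∂μ) ?_
  exact Measurable.lintegral_prod_right' (f := fun w : (V × V) × V =>
    ENNReal.ofReal (Real.exp (-(N * ⟪w.1.1, w.1.2 - w.2⟫) ^ 2))) (by fun_prop)

lemma IsRadiallyTransversal.exists_lintegral_mul_gaussianEnergy_map_inner_le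
    [IsProbabilityMeasure μ] (hK : IsRadiallyTransversal c K) (hKb : Bornology.IsBounded K)
    (hμK : μ Kᶜ = 0) (hμ : IsFrostman μ s C) (hs : Module.finrank ℝ V < 2 * s) :
    ∃ A : ℝ≥0, ∀ N > 0,
      ∫⁻ x, ENNReal.ofReal N * gaussianEnergy (μ.map (⟪x, ·⟫)) N ∂μ ≤ A := by
  have hs0 : 0 < s := by linarith [(Module.finrank ℝ V).cast_nonneg (α := ℝ)]
  obtain ⟨A, hA⟩ := hK.exists_lintegral_tubeWeight_le hKb hμK hμ hs0.le
  obtain ⟨B, -, hB⟩ := hKb.exists_pos_norm_le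
  have hSobolev := hμ.lintegral_sq_enorm_charFun_mul_ne_top (t := s) (by linarith) hs0.le
    (by linarith)
  refine ⟨(ENNReal.ofReal (Real.exp ((2 * B) ^ 2)) * (A * ∫⁻ η, ‖charFun μ η‖ₑ ^ 2 *
    ENNReal.ofReal (max 1 ‖η‖ ^ (-s)))).toNNReal, fun N hN => ?_⟩
  rw [ENNReal.coe_toNNReal (by finiteness)]
  calc ∫⁻ x, ENNReal.ofReal N * gaussianEnergy (μ.map (⟪x, ·⟫)) N ∂μ
      ≤ ∫⁻ x, ENNReal.ofReal (Real.exp ((2 * B) ^ 2)) *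
          ∫⁻ η, ‖charFun μ η‖ₑ ^ 2 * tubeWeight η x ∂volume ∂μ :=
        lintegral_mono fun x => mul_gaussianEnergy_map_inner_le
          ((ae_iff.2 hμK : ∀ᵐ y ∂μ, y ∈ K).mono hB) hN x
    _ = ENNReal.ofReal (Real.exp ((2 * B) ^ 2)) *
          ∫⁻ η, ∫⁻ x, ‖charFun μ η‖ₑ ^ 2 * tubeWeight η x ∂μ := by
        rw [lintegral_const_mul' _ _ ENNReal.ofReal_ne_top, lintegral_lintegral_swap
          (f := fun x η => ‖charFun μ η‖ₑ ^ 2 * tubeWeight η x)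
          (Measurable.aemeasurable (by fun_prop))]
    _ ≤ ENNReal.ofReal (Real.exp ((2 * B) ^ 2)) *
          ∫⁻ η, A * (‖charFun μ η‖ₑ ^ 2 * ENNReal.ofReal (max 1 ‖η‖ ^ (-s))) := by
        gcongr with η
        rw [lintegral_const_mul' _ _ (by finiteness), mul_left_comm]
        gcongr
        exact hA η
    _ = _ := by rw [lintegral_const_mul' _ _ ENNReal.coe_ne_top]

lemma exists_volume_image_inner_ne_zero [IsProbabilityMeasure μ] (hK : IsCompact K)
    (hμK : μ Kᶜ = 0) {A : ℝ≥0} (hA : ∀ N > 0,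
      ∫⁻ x, ENNReal.ofReal N * gaussianEnergy (μ.map (⟪x, ·⟫)) N ∂μ ≤ A) :
    ∃ x ∈ K, volume ((⟪x, ·⟫) '' K) ≠ 0 := by
  have hmeas : ∀ n : ℕ, Measurable fun x : V =>
      ENNReal.ofReal n * gaussianEnergy (μ.map (⟪x, ·⟫)) n := fun n =>
    (measurable_gaussianEnergy_map_inner n).const_mul _
  have hfatou : ∫⁻ x, liminf (fun n : ℕ => ENNReal.ofReal n *
      gaussianEnergy (μ.map (⟪x, ·⟫)) n) atTop ∂μ ≠ ∞ := by
    refine ne_top_of_le_ne_top (b := A) ENNReal.coe_ne_top ((lintegral_liminf_le hmeas).trans ?_)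
    exact liminf_le_of_frequently_le' <| Eventually.frequently <|
      (eventually_gt_atTop 0).mono fun n hn => hA n (Nat.cast_pos.2 hn)
  obtain ⟨x, hxK, hx⟩ :=
    ((ae_iff.2 hμK : ∀ᵐ x ∂μ, x ∈ K).and (ae_lt_top (.liminf hmeas) hfatou)).exists
  have hinner : Measurable fun y : V => ⟪x, y⟫ := by fun_prop
  have := Measure.isProbabilityMeasure_map (μ := μ) hinner.aemeasurable
  have hF : IsCompact ((⟪x, ·⟫) '' K) := hK.image (by fun_prop)
  refine ⟨x, hxK, volume_ne_zero_of_liminf_gaussianEnergy_ne_top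
    (IsProbabilityMeasure.ne_zero (μ.map (⟪x, ·⟫))) hF ?_ hx.ne⟩
  rw [Measure.map_apply hinner hF.measurableSet.compl]
  exact measure_mono_null (fun y hy hyK => hy (mem_image_of_mem _ hyK)) hμK

end Pinned

theorem dot_product_translated_sphere_general {V : Type*} [NormedAddCommGroup V]
    [InnerProductSpace ℝ V] [FiniteDimensional ℝ V] {a : V} {r : ℝ} {E : Set V}
    (hE : E ⊆ Metric.sphere a r) (hEc : IsCompact E)
    (hdim : (Module.finrank ℝ V : ℝ≥0∞) / 2 < dimH E) :
    (∃ x ∈ E, 0 < volume ((⟪x, ·⟫) '' E)) ∧ 0 < volume (image2 (⟪·, ·⟫) E E) := by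
  borelize V
  obtain ⟨s, hds, hsE⟩ := ENNReal.lt_iff_exists_nnreal_btwn.1 hdim
  have hs : (Module.finrank ℝ V : ℝ) < 2 * s := by
    rw [ENNReal.div_lt_iff (by simp) (by simp)] at hds
    rw [mul_comm]
    exact_mod_cast hds
  have hs0 : (0 : ℝ) < s := by linarith [(Module.finrank ℝ V).cast_nonneg (α := ℝ)]
  obtain ⟨K, hKE, hKc, hsK, c, hK⟩ := exists_isRadiallyTransversal_lt_dimH hE hEc hsE
  obtain ⟨μ, hμK, C, hμ⟩ := exists_isFrostman hKc hs0
    (by simp [hausdorffMeasure_of_lt_dimH hsK])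
  obtain ⟨A, hA⟩ :=
    hK.exists_lintegral_mul_gaussianEnergy_map_inner_le hKc.isBounded hμK hμ hs
  obtain ⟨x, hxK, hx⟩ := exists_volume_image_inner_ne_zero hKc hμK hA
  have hpin : 0 < volume ((⟪x, ·⟫) '' E) :=
    (pos_iff_ne_zero.2 hx).trans_le (measure_mono (image_mono hKE))
  exact ⟨⟨x, hKE hxK, hpin⟩,
    hpin.trans_le (measure_mono (image_subset_image2_right (hKE hxK)))⟩

/-- If `E` is a compact subset of a translated unit sphere `a + S^{d-1} ⊆ ℝ^d` with
Hausdorff dimension greater than `d/2`, then there is `x ∈ E` whose pinned dot product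
set has positive Lebesgue measure; in particular `Π(E)` has positive Lebesgue measure. -/
theorem dot_product_translated_sphere
    (d : ℕ) (hd : 2 ≤ d) (a : EuclideanSpace ℝ (Fin d))
    (E : Set (EuclideanSpace ℝ (Fin d)))
    (hEsub : E ⊆ (a + ·) '' Metric.sphere (0 : EuclideanSpace ℝ (Fin d)) 1)
    (hEcomp : IsCompact E)
    (hdim : (d : ℝ≥0∞) / 2 < dimH E) :
    (∃ x ∈ E, 0 < volume (pinnedDotSet x E)) ∧ 0 < volume (dotSet E) := by
  have hE : E ⊆ Metric.sphere a 1 := by simpa using hEsub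
  exact dot_product_translated_sphere_general hE hEcomp (by simpa using hdim)
end

section
/- Let d ≥ 2. For every ε > 0 there exists a compact subset F of the standard paraboloid P_d = {(x̄, |x̄|²) : x̄ ∈ ℝ^{d−1}} ⊆ ℝ^d such that the Hausdorff dimension of F is strictly greater than (d−1)/4 − ε and the dot product set Π(F) has one-dimensional Lebesgue measure zero. -/
/-!
Let `n = d - 1`. If all coordinates of `x, y ∈ [0, 1] ^ n` are within `δ` of `Q⁻¹ ℤ`, then
`(x, |x|²) · (y, |y|²) = x · y + |x|² |y|²` is within `O(δ)` of `Q⁻⁴ ℤ`, and it is bounded. So if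
the coordinates range over a set `S` for which this happens at a sequence of scales with
`Q ^ 4 δ → 0`, the dot products can be covered by `O(Q ^ 4)` intervals of length `O(δ)` and form
a null set.

For `S` take the numbers whose binary digits vanish outside the positions `e 0 < e 1 < ⋯`. If
`e (m + 1) ≥ 4 e m + k`, truncation after position `e m` gives `Q ≈ 2 ^ e m` and
`Q ^ 4 δ ≲ 2 ^ (-k)`. Such gaps are compatible with `e m ≤ (m + 1) / r` for every `r < 1 / 4`.
Reading the free digits of a point of `S` as an ordinary binary expansion is then an `r`-Hölder map
of `S` onto `[0, 1]`, because the digits at the positions skipped by `e` are zero and prevent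
carries from bringing points with different free digits close together. Hölder maps of exponent `r`
raise dimensions by a factor of at most `1 / r`, so `S ^ n`, and with it the lift of `S ^ n` to the
paraboloid, has dimension at least `n r`.
-/

open MeasureTheory
open scoped RealInnerProductSpace ENNReal

/-- The standard paraboloid `P_d = {(x̄, |x̄|²) : x̄ ∈ ℝ^{d-1}}` in `ℝ^d`. -/
def stdParaboloid (d : ℕ) : Set (EuclideanSpace ℝ (Fin d)) :=
  {p | ∃ x : EuclideanSpace ℝ (Fin (d - 1)),
    p = fun i : Fin d => if h : (i : ℕ) < d - 1 then x ⟨i, h⟩ else ‖x‖ ^ 2}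

open Filter Set Topology
open scoped NNReal

section Positions

/-- The position given to the `m`-th free digit of a sparse digit expansion. The last two terms
are constant between consecutive powers of `R`, and at `m = R ^ (k + 1)` they make the sequence
jump from about `R ^ (k + 1)` to `(D + 1) * R ^ (k + 1)`; the coefficient `(D + 1) ^ 2` absorbs
the terms of order `R ^ k`. The term `m / R` skips a position in every window of a fixed length.
All divisions round down. -/
def sparsePositions (D R m : ℕ) : ℕ :=
  m + m / R + D * R ^ Nat.log R m + (D + 1) ^ 2 * (R ^ Nat.log R m / R)

variable {D R : ℕ}

theorem sparsePositions_strictMono (hR : 0 < R) : StrictMono (sparsePositions D R) := by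
  refine strictMono_nat_of_lt_succ fun m => ?_
  have hdiv : m / R ≤ (m + 1) / R := Nat.div_le_div_right m.le_succ
  have hpow : R ^ Nat.log R m ≤ R ^ Nat.log R (m + 1) :=
    Nat.pow_le_pow_right hR (Nat.log_mono_right m.le_succ)
  have hD := Nat.mul_le_mul_left D hpow
  have hD2 := Nat.mul_le_mul_left ((D + 1) ^ 2) (Nat.div_le_div_right (c := R) hpow)
  unfold sparsePositions
  omega

theorem sparsePositions_add_lt (hR : 0 < R) (m : ℕ) :
    sparsePositions D R m + R < sparsePositions D R (m + R) := by
  have hlog : Nat.log R m ≤ Nat.log R (m + R) := Nat.log_mono_right (m.le_add_right R)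
  calc sparsePositions D R m + R
      < m + R + (m / R + 1) + D * R ^ Nat.log R m + (D + 1) ^ 2 * (R ^ Nat.log R m / R) := by
        unfold sparsePositions; omega
    _ ≤ sparsePositions D R (m + R) := by
        rw [← Nat.add_div_right m hR]
        unfold sparsePositions
        gcongr

theorem sparsePositions_le (m : ℕ) :
    (sparsePositions D R m : ℝ) ≤ (D + 1 + ((D + 1) ^ 2 + 1) / R) * (m + 1) := by
  have hpow : (R : ℝ) ^ Nat.log R m ≤ m + 1 := mod_cast Nat.pow_log_le_add_one R m
  calc (sparsePositions D R m : ℝ)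
      ≤ m + m / R + D * R ^ Nat.log R m + (D + 1) ^ 2 * (R ^ Nat.log R m / R) := by
        unfold sparsePositions
        push_cast
        gcongr
        · exact Nat.cast_div_le
        · exact_mod_cast (Nat.cast_div_le : ((R ^ Nat.log R m / R : ℕ) : ℝ) ≤ _)
    _ ≤ (m + 1) + (m + 1) / R + D * (m + 1) + (D + 1) ^ 2 * ((m + 1) / R) := by
        gcongr <;> linarith
    _ = (D + 1 + ((D + 1) ^ 2 + 1) / R) * (m + 1) := by ring

theorem sparsePositions_pow (hR : 1 < R) (k : ℕ) :
    sparsePositions D R (R ^ (k + 1)) =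
      R ^ (k + 1) + R ^ k + D * R ^ (k + 1) + (D + 1) ^ 2 * R ^ k := by
  rw [sparsePositions, Nat.log_pow hR, pow_succ R k, Nat.mul_div_cancel _ (by omega)]

theorem sparsePositions_pow_sub_one (hR : 1 < R) (k : ℕ) :
    sparsePositions D R (R ^ (k + 2) - 1) + 2 =
      R ^ (k + 2) + R ^ (k + 1) + D * R ^ (k + 1) + (D + 1) ^ 2 * R ^ k := by
  have hpos : 0 < R ^ (k + 1) := by positivity
  have hlt : R ^ (k + 1) < R ^ (k + 2) := Nat.pow_lt_pow_right hR (by omega)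
  have hlog : Nat.log R (R ^ (k + 2) - 1) = k + 1 :=
    Nat.log_eq_of_pow_le_of_lt_pow (by omega) (show _ < R ^ (k + 2) by omega)
  have hdiv : (R ^ (k + 2) - 1) / R = R ^ (k + 1) - 1 := by
    rw [pow_succ' R (k + 1), Nat.mul_sub_div 0 R _ (by positivity), Nat.zero_div]
  rw [sparsePositions, hlog, hdiv, pow_succ R k, Nat.mul_div_cancel _ (by omega), ← pow_succ]
  omega

theorem sparsePositions_gap (hR : (D + 1) ^ 3 < R) (k : ℕ) :
    ∃ m, (D + 1) * sparsePositions D R m + k ≤ sparsePositions D R (m + 1) := by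
  have hR1 : 1 < R := (Nat.one_le_pow _ _ D.succ_pos).trans_lt hR
  refine ⟨R ^ (k + 2) - 1, ?_⟩
  rw [Nat.sub_add_cancel (Nat.one_le_pow _ _ (by omega)), sparsePositions_pow hR1]
  calc (D + 1) * sparsePositions D R (R ^ (k + 2) - 1) + k
      ≤ (D + 1) * (sparsePositions D R (R ^ (k + 2) - 1) + 2) + R ^ k := by
        gcongr
        · omega
        · exact (Nat.lt_pow_self hR1).le
    _ = (D + 1) * R ^ (k + 2) + (D + 1) ^ 2 * R ^ (k + 1) + ((D + 1) ^ 3 + 1) * R ^ k := by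
        rw [sparsePositions_pow_sub_one hR1]
        ring
    _ ≤ (D + 1) * R ^ (k + 2) + (D + 1) ^ 2 * R ^ (k + 1) + R * R ^ k := by gcongr; exact hR
    _ = R ^ (k + 2) + R ^ (k + 1) + D * R ^ (k + 2) + (D + 1) ^ 2 * R ^ (k + 1) := by ring

theorem exists_notMem_range_of_add_lt {e : ℕ → ℕ} (he : StrictMono e) {L : ℕ}
    (hL : ∀ m, e m + L < e (m + L)) (p : ℕ) : ∃ i ≤ L, p + i ∉ range e := by
  by_contra! hrange
  obtain ⟨m, hm⟩ := hrange 0 L.zero_le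
  have hconsecutive : ∀ i ≤ L, e (m + i) = p + i := by
    intro i
    induction i with
    | zero => exact fun _ => hm
    | succ i ih =>
      intro hi
      obtain ⟨m', hm'⟩ := hrange (i + 1) hi
      have hlt : m + i < m' := he.lt_iff_lt.1 (by rw [ih (by omega), hm']; omega)
      have hle : e (m + (i + 1)) ≤ e m' := he.monotone hlt
      have hge : e (m + i) < e (m + (i + 1)) := he (by omega)
      rw [ih (by omega)] at hge
      omega
  have := hL m
  rw [hconsecutive L le_rfl] at this
  omega

theorem exists_strictMono_gap (hD : D ≠ 0) {r : ℝ} (hr : 0 < r) (hrD : r * D < 1) :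
    ∃ e : ℕ → ℕ, StrictMono e ∧ (∃ L, ∀ p, ∃ i ≤ L, p + i ∉ range e) ∧
      (∀ m, r * e m ≤ m + 1) ∧ ∀ k, ∃ m, D * e m + k ≤ e (m + 1) := by
  obtain ⟨t, rfl⟩ := Nat.exists_eq_succ_of_ne_zero hD
  rw [Nat.cast_succ] at hrD
  obtain ⟨R₀, hR₀⟩ := exists_nat_gt (r * (((t : ℝ) + 1) ^ 2 + 1) / (1 - r * (t + 1)))
  set R := max R₀ ((t + 1) ^ 3 + 1)
  have hR : (t + 1) ^ 3 < R := (Nat.lt_succ_self _).trans_le (le_max_right _ _)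
  have hR0 : 0 < R := (Nat.zero_le _).trans_lt hR
  have hslope : r * (t + 1 + ((t + 1) ^ 2 + 1) / R) ≤ 1 := by
    have hRR : r * (((t : ℝ) + 1) ^ 2 + 1) / (1 - r * (t + 1)) ≤ R :=
      hR₀.le.trans (mod_cast le_max_left _ _)
    rw [div_le_comm₀ (by linarith) (mod_cast hR0), mul_div_assoc] at hRR
    linarith
  have hmono := sparsePositions_strictMono (D := t) hR0
  refine ⟨sparsePositions t R, hmono,
    ⟨R, exists_notMem_range_of_add_lt hmono (sparsePositions_add_lt hR0)⟩, fun m => ?_,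
    sparsePositions_gap hR⟩
  calc r * sparsePositions t R m ≤ r * ((t + 1 + ((t + 1) ^ 2 + 1) / R) * (m + 1)) := by
        gcongr
        exact sparsePositions_le m
    _ ≤ m + 1 := by
        rw [← mul_assoc]
        exact mul_le_of_le_one_left (by positivity) hslope

end Positions

section Digits

variable {b : ℕ}

theorem ofDigits_eq_head_add_tail (a : ℕ → Fin b) :
    Real.ofDigits a = (a 0 + Real.ofDigits fun i => a (i + 1)) / b := by
  rw [Real.ofDigits_eq_sum_add_ofDigits a 1]
  simp only [Finset.sum_range_one, Real.ofDigitsTerm, zero_add, pow_one]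
  ring

theorem ofDigits_le_one_sub {p : ℕ} {a : ℕ → Fin b} (hp : (a p : ℕ) + 1 < b) :
    Real.ofDigits a ≤ 1 - ((b : ℝ) ^ (p + 1))⁻¹ := by
  have hb : (0 : ℝ) < b := mod_cast (a 0).pos
  rw [ofDigits_eq_head_add_tail, div_le_iff₀ hb]
  induction p generalizing a with
  | zero =>
    have hhead : (a 0 : ℝ) + 1 + 1 ≤ b := mod_cast hp
    have htail := Real.ofDigits_le_one fun i => a (i + 1)
    have : (1 - ((b : ℝ) ^ (0 + 1))⁻¹) * b = b - 1 := by field_simp; ring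
    linarith
  | succ p ih =>
    have hhead : (a 0 : ℝ) + 1 ≤ b := mod_cast (a 0).isLt
    have htail : Real.ofDigits (fun i => a (i + 1)) ≤ 1 - ((b : ℝ) ^ (p + 1))⁻¹ := by
      rw [ofDigits_eq_head_add_tail, div_le_iff₀ hb]
      exact ih (a := fun i => a (i + 1)) hp
    have : (1 - ((b : ℝ) ^ (p + 1 + 1))⁻¹) * b = b - ((b : ℝ) ^ (p + 1))⁻¹ := by
      rw [pow_succ _ (p + 1)]; field_simp
    linarith

theorem inv_pow_le_ofDigits_sub {x y : ℕ → Fin b} {n p : ℕ} (heq : ∀ i < n, x i = y i)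
    (hlt : y n < x n) (hp : (y (n + 1 + p) : ℕ) + 1 < b) :
    ((b : ℝ) ^ (n + 1 + p + 1))⁻¹ ≤ Real.ofDigits x - Real.ofDigits y := by
  have hb : (0 : ℝ) < b := mod_cast (x 0).pos
  have hprefix : ∑ i ∈ Finset.range n, Real.ofDigitsTerm x i =
      ∑ i ∈ Finset.range n, Real.ofDigitsTerm y i :=
    Finset.sum_congr rfl fun i hi => by rw [Real.ofDigitsTerm, heq i (Finset.mem_range.1 hi),
      Real.ofDigitsTerm]
  have hdigit : (y n : ℝ) + 1 ≤ x n := mod_cast hlt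
  have hx := Real.ofDigits_nonneg fun i => x (i + (n + 1))
  have hy : Real.ofDigits (fun i => y (i + (n + 1))) ≤ 1 - ((b : ℝ) ^ (p + 1))⁻¹ :=
    ofDigits_le_one_sub (by rwa [add_comm p])
  calc ((b : ℝ) ^ (n + 1 + p + 1))⁻¹ = ((b : ℝ) ^ (n + 1))⁻¹ * ((b : ℝ) ^ (p + 1))⁻¹ := by
        rw [add_assoc (n + 1), pow_add, mul_inv]
    _ ≤ ((b : ℝ) ^ (n + 1))⁻¹ * ((x n + Real.ofDigits fun i => x (i + (n + 1))) -
          (y n + Real.ofDigits fun i => y (i + (n + 1)))) := by gcongr; linarith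
    _ = Real.ofDigits x - Real.ofDigits y := by
        rw [Real.ofDigits_eq_sum_add_ofDigits x (n + 1),
          Real.ofDigits_eq_sum_add_ofDigits y (n + 1), Finset.sum_range_succ,
          Finset.sum_range_succ, hprefix, Real.ofDigitsTerm, Real.ofDigitsTerm]
        ring

theorem inv_pow_le_abs_ofDigits_sub {x y : ℕ → Fin b} {n L : ℕ} (heq : ∀ i < n, x i = y i)
    (hne : x n ≠ y n) (hx : ∃ i ≤ L, (x (n + 1 + i) : ℕ) + 1 < b)
    (hy : ∃ i ≤ L, (y (n + 1 + i) : ℕ) + 1 < b) :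
    ((b : ℝ) ^ (n + L + 2))⁻¹ ≤ |Real.ofDigits x - Real.ofDigits y| := by
  wlog hlt : y n < x n generalizing x y
  · rw [abs_sub_comm]
    exact this (fun i hi => (heq i hi).symm) hne.symm hy hx (hne.lt_or_gt.resolve_right hlt)
  obtain ⟨p, hpL, hp⟩ := hy
  have hb : (1 : ℝ) ≤ b := mod_cast (x 0).pos
  calc ((b : ℝ) ^ (n + L + 2))⁻¹ ≤ ((b : ℝ) ^ (n + 1 + p + 1))⁻¹ := by
        exact inv_anti₀ (by positivity) (pow_le_pow_right₀ hb (by omega))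
    _ ≤ Real.ofDigits x - Real.ofDigits y := inv_pow_le_ofDigits_sub heq hlt hp
    _ ≤ |Real.ofDigits x - Real.ofDigits y| := le_abs_self _

theorem exists_abs_ofDigits_sub_div_le [NeZero b] {a : ℕ → Fin b} {n n' : ℕ} (hnn' : n ≤ n')
    (hzero : ∀ i, n ≤ i → i < n' → a i = 0) :
    ∃ z : ℤ, |Real.ofDigits a - z / (b : ℝ) ^ n| ≤ ((b : ℝ) ^ n')⁻¹ := by
  have hb : (0 : ℝ) < b := mod_cast (a 0).pos
  have htrunc : ∑ i ∈ Finset.range n', Real.ofDigitsTerm a i =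
      ∑ i ∈ Finset.range n, Real.ofDigitsTerm a i := by
    refine (Finset.sum_subset (Finset.range_mono hnn') fun i hi hin => ?_).symm
    rw [Real.ofDigitsTerm, hzero i (by simpa using hin) (Finset.mem_range.1 hi)]
    simp only [Fin.val_zero, Nat.cast_zero, zero_mul]
  refine ⟨∑ i ∈ Finset.range n, (a i : ℤ) * b ^ (n - (i + 1)), ?_⟩
  have hz : ((∑ i ∈ Finset.range n, (a i : ℤ) * b ^ (n - (i + 1)) : ℤ) : ℝ) / (b : ℝ) ^ n =
      ∑ i ∈ Finset.range n, Real.ofDigitsTerm a i := by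
    push_cast
    rw [Finset.sum_div]
    refine Finset.sum_congr rfl fun i hi => ?_
    have hin : i + 1 ≤ n := Finset.mem_range.1 hi
    rw [Real.ofDigitsTerm, pow_sub₀ _ hb.ne' hin]
    field_simp
  rw [hz, ← htrunc, Real.ofDigits_eq_sum_add_ofDigits a n', add_sub_cancel_left,
    abs_of_nonneg (mul_nonneg (by positivity) (Real.ofDigits_nonneg _))]
  exact mul_le_of_le_one_right (by positivity) (Real.ofDigits_le_one _)

end Digits

section SparseReal

variable {b : ℕ} [NeZero b] {e : ℕ → ℕ}

/-- The real number in `[0, 1]` whose base `b` expansion has the digit `a m` at position `e m` for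
every `m` (position `0` being the first digit after the point), and zeros at the positions outside
`range e`. The map is meant for injective `e`. -/
noncomputable def sparseReal (e : ℕ → ℕ) (a : ℕ → Fin b) : ℝ :=
  Real.ofDigits (Function.extend e a 0)

theorem continuous_sparseReal (e : ℕ → ℕ) : Continuous (sparseReal e : (ℕ → Fin b) → ℝ) := by
  refine Real.continuous_ofDigits.comp (continuous_pi fun i => ?_)
  by_cases hi : ∃ m, e m = i
  · simp only [Function.extend, dif_pos hi]
    exact continuous_apply _
  · simp only [Function.extend, dif_neg hi]
    exact continuous_const

theorem inv_pow_le_abs_sparseReal_sub (hb : 1 < b) (he : StrictMono e) {L : ℕ}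
    (hfree : ∀ p, ∃ i ≤ L, p + i ∉ range e) {a a' : ℕ → Fin b} {m : ℕ}
    (heq : ∀ i < m, a i = a' i) (hne : a m ≠ a' m) :
    ((b : ℝ) ^ (e m + L + 2))⁻¹ ≤ |sparseReal e a - sparseReal e a'| := by
  have hzero : ∀ (c : ℕ → Fin b) {p : ℕ}, p ∉ range e → Function.extend e c 0 p = 0 :=
    fun c p hp => Function.extend_apply' c (0 : ℕ → Fin b) p hp
  obtain ⟨i, hiL, hi⟩ := hfree (e m + 1)
  refine inv_pow_le_abs_ofDigits_sub (fun p hp => ?_) ?_ ⟨i, hiL, ?_⟩ ⟨i, hiL, ?_⟩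
  · by_cases hpe : p ∈ range e
    · obtain ⟨j, rfl⟩ := hpe
      rw [he.injective.extend_apply, he.injective.extend_apply, heq j (he.lt_iff_lt.1 hp)]
    · rw [hzero a hpe, hzero a' hpe]
  · rwa [he.injective.extend_apply, he.injective.extend_apply]
  all_goals
    rw [hzero _ hi, Fin.val_zero]
    exact hb

theorem abs_ofDigits_sub_le_mul_rpow (hb : 1 < b) (he : StrictMono e) {L : ℕ}
    (hfree : ∀ p, ∃ i ≤ L, p + i ∉ range e) {r : ℝ} (hr : 0 ≤ r)
    (hre : ∀ m, r * e m ≤ m + 1) (a a' : ℕ → Fin b) :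
    |Real.ofDigits a - Real.ofDigits a'| ≤
      (b : ℝ) ^ (1 + r * (L + 2)) * |sparseReal e a - sparseReal e a'| ^ r := by
  rcases eq_or_ne a a' with rfl | hne
  · rw [sub_self, abs_zero]
    positivity
  have hb0 : (0 : ℝ) < b := mod_cast zero_lt_one.trans hb
  set m := PiNat.firstDiff a a'
  have hprefix : ∀ i < m, a i = a' i := fun i hi => PiNat.apply_eq_of_lt_firstDiff hi
  calc |Real.ofDigits a - Real.ofDigits a'|
      ≤ ((b : ℝ) ^ m)⁻¹ := Real.abs_ofDigits_sub_ofDigits_le hprefix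
    _ = (b : ℝ) ^ (-(m : ℝ)) := by rw [Real.rpow_neg hb0.le, Real.rpow_natCast]
    _ ≤ (b : ℝ) ^ (1 + r * (L + 2) + -((e m + L + 2 : ℕ) : ℝ) * r) := by
        gcongr
        · exact_mod_cast hb.le
        · push_cast
          linarith [hre m]
    _ = (b : ℝ) ^ (1 + r * (L + 2)) * (((b : ℝ) ^ (e m + L + 2))⁻¹) ^ r := by
        rw [Real.rpow_add hb0, Real.rpow_mul hb0.le, Real.rpow_neg hb0.le, Real.rpow_natCast]
    _ ≤ (b : ℝ) ^ (1 + r * (L + 2)) * |sparseReal e a - sparseReal e a'| ^ r := by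
        gcongr
        exact inv_pow_le_abs_sparseReal_sub hb he hfree hprefix (PiNat.apply_firstDiff_ne hne)

theorem exists_holderOnWith_sparseReal (hb : 1 < b) (he : StrictMono e) {L : ℕ}
    (hfree : ∀ p, ∃ i ≤ L, p + i ∉ range e) {r : ℝ≥0} (hr : 0 < r)
    (hre : ∀ m, r * (e m : ℝ) ≤ m + 1) :
    ∃ (C : ℝ≥0) (f : ℝ → ℝ), HolderOnWith C r f (range (sparseReal (b := b) e)) ∧
      ∀ a : ℕ → Fin b, f (sparseReal e a) = Real.ofDigits a := by
  have hholder := abs_ofDigits_sub_le_mul_rpow hb he hfree r.coe_nonneg hre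
  have hfactor : Function.FactorsThrough Real.ofDigits (sparseReal (b := b) e) := by
    intro a a' heq
    have h := hholder a a'
    rw [heq, sub_self, abs_zero, Real.zero_rpow (by positivity), mul_zero] at h
    exact sub_eq_zero.1 (abs_nonpos_iff.1 h)
  have hf := hfactor.extend_apply 0
  refine ⟨(b : ℝ≥0) ^ (1 + (r : ℝ) * (L + 2)), _, ?_, hf⟩
  rintro _ ⟨a, rfl⟩ _ ⟨a', rfl⟩
  rw [hf, hf, edist_dist, edist_dist, ENNReal.ofReal_rpow_of_nonneg dist_nonneg r.coe_nonneg,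
    ← ENNReal.ofReal_coe_nnreal, ← ENNReal.ofReal_mul NNReal.zero_le_coe]
  exact ENNReal.ofReal_le_ofReal (hholder a a')

end SparseReal

section UniformlyApproximable

/-- There are denominators `Q` such that every point of `S` lies within `η / Q ^ D` of `Q⁻¹ ℤ`, for
arbitrarily small `η > 0`. The same `Q` has to serve all points of `S`. -/
def UniformlyApproximable (D : ℕ) (S : Set ℝ) : Prop :=
  ∀ η > (0 : ℝ), ∃ Q : ℕ, 0 < Q ∧ ∀ x ∈ S, ∃ z : ℤ, |x - z / Q| * Q ^ D ≤ η

theorem volume_le_of_forall_exists_int_div {T : Set ℝ} {M N r : ℝ} (hM : 0 ≤ M) (hN : 1 ≤ N)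
    (hr : 0 ≤ r) (hT : ∀ t ∈ T, ∃ p : ℤ, |(p : ℝ) / N| ≤ M ∧ |t - p / N| * N ≤ r) :
    volume T ≤ ENNReal.ofReal ((2 * M + 1) * (2 * r)) := by
  have hN0 : 0 < N := zero_lt_one.trans_le hN
  have hcover :
      T ⊆ ⋃ p ∈ Finset.Icc (-⌊M * N⌋) ⌊M * N⌋, Metric.closedBall ((p : ℝ) / N) (r / N) := by
    intro t ht
    obtain ⟨p, hpM, hpt⟩ := hT t ht
    rw [abs_div, abs_of_pos hN0, div_le_iff₀ hN0, abs_le] at hpM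
    refine mem_iUnion₂.2 ⟨p, Finset.mem_Icc.2 ⟨?_, Int.le_floor.2 hpM.2⟩, ?_⟩
    · rw [neg_le, Int.le_floor]
      push_cast
      linarith
    · rwa [Metric.mem_closedBall, Real.dist_eq, le_div_iff₀ hN0]
  have hcard : ((Finset.Icc (-⌊M * N⌋) ⌊M * N⌋).card : ℝ) ≤ 2 * M * N + 1 := by
    have hfloor : 0 ≤ ⌊M * N⌋ := Int.floor_nonneg.2 (by positivity)
    rw [← Int.cast_natCast, Int.card_Icc_of_le _ _ (by omega)]
    push_cast
    linarith [Int.floor_le (M * N)]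
  calc volume T
      ≤ ∑ p ∈ Finset.Icc (-⌊M * N⌋) ⌊M * N⌋, volume (Metric.closedBall ((p : ℝ) / N) (r / N)) :=
        (measure_mono hcover).trans (measure_biUnion_finset_le _ _)
    _ = ENNReal.ofReal ((Finset.Icc (-⌊M * N⌋) ⌊M * N⌋).card * (2 * (r / N))) := by
        simp only [Real.volume_closedBall, Finset.sum_const, nsmul_eq_mul]
        rw [ENNReal.ofReal_mul (Nat.cast_nonneg _), ENNReal.ofReal_natCast]
    _ ≤ ENNReal.ofReal ((2 * M * N + N) * (2 * (r / N))) := by gcongr; linarith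
    _ = ENNReal.ofReal ((2 * M + 1) * (2 * r)) := by congr 1; field_simp

theorem volume_image_le_of_lipschitzOnWith {X : Type*} [PseudoMetricSpace X] {Φ : X → ℝ}
    {A K : Set X} {C : ℝ≥0} {M N η : ℝ} (hΦ : LipschitzOnWith C Φ K) (hM : 0 ≤ M)
    (hΦM : ∀ v ∈ K, |Φ v| ≤ M) (hN : 1 ≤ N) (hη : 0 ≤ η) (hAK : A ⊆ K)
    (hA : ∀ w ∈ A, ∃ v ∈ K, (∃ p : ℤ, Φ v = p / N) ∧ dist w v * N ≤ η) :
    volume (Φ '' A) ≤ ENNReal.ofReal ((2 * M + 1) * (2 * (C * η))) := by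
  refine volume_le_of_forall_exists_int_div hM hN (by positivity) ?_
  rintro _ ⟨w, hw, rfl⟩
  obtain ⟨v, hv, ⟨p, hp⟩, hwv⟩ := hA w hw
  refine ⟨p, hp ▸ hΦM v hv, ?_⟩
  calc |Φ w - p / N| * N = dist (Φ w) (Φ v) * N := by rw [← hp, Real.dist_eq]
    _ ≤ C * dist w v * N := by gcongr; exact hΦ.dist_le_mul w (hAK hw) v hv
    _ ≤ C * η := by rw [mul_assoc]; gcongr

namespace UniformlyApproximable

variable {ι : Type*} [Fintype ι] {D : ℕ} {S : Set ℝ}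

theorem exists_dist_int_div_mul_pow_le (hS : UniformlyApproximable D S) {η : ℝ} (hη : 0 < η) :
    ∃ Q : ℕ, 0 < Q ∧ ∀ w ∈ univ.pi fun _ : ι => S, ∃ z : ι → ℤ,
      dist w (fun i => z i / Q) * Q ^ D ≤ η := by
  obtain ⟨Q, hQ, happrox⟩ := hS η hη
  refine ⟨Q, hQ, fun w hw => ?_⟩
  choose z hz using fun i => happrox (w i) (hw i (mem_univ i))
  have hQD : 0 < (Q : ℝ) ^ D := by positivity
  refine ⟨z, ?_⟩
  rw [← le_div_iff₀ hQD, dist_pi_le_iff (by positivity)]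
  exact fun i => (le_div_iff₀ hQD).2 (hz i)

theorem volume_image_pi_eq_zero (hS : UniformlyApproximable D S) (hbdd : Bornology.IsBounded S)
    {Φ : (ι → ℝ) → ℝ} (hΦ : LocallyLipschitz Φ)
    (hint : ∀ Q : ℕ, 0 < Q → ∀ z : ι → ℤ, ∃ p : ℤ, Φ (fun i => z i / Q) = p / (Q : ℝ) ^ D) :
    volume (Φ '' univ.pi fun _ => S) = 0 := by
  set A : Set (ι → ℝ) := univ.pi fun _ => S
  have hK : IsCompact (Metric.cthickening 1 A) :=
    Metric.isCompact_of_isClosed_isBounded Metric.isClosed_cthickening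
      (Bornology.IsBounded.pi fun _ => hbdd).cthickening
  obtain ⟨C, hC⟩ := hΦ.locallyLipschitzOn.exists_lipschitzOnWith_of_compact hK
  obtain ⟨M, hM⟩ := hK.exists_bound_of_continuousOn hΦ.continuous.continuousOn
  have hscale : ∀ η ∈ Ioc (0 : ℝ) 1,
      volume (Φ '' A) ≤ ENNReal.ofReal ((2 * max M 0 + 1) * (2 * (C * η))) := by
    rintro η ⟨hη, hη1⟩
    obtain ⟨Q, hQ, happrox⟩ := hS.exists_dist_int_div_mul_pow_le (ι := ι) hη
    have hN : 1 ≤ (Q : ℝ) ^ D := one_le_pow₀ (mod_cast hQ)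
    refine volume_image_le_of_lipschitzOnWith hC (le_max_right M 0)
      (fun v hv => (hM v hv).trans (le_max_left M 0)) hN hη.le
      (Metric.self_subset_cthickening A) fun w hw => ?_
    obtain ⟨z, hz⟩ := happrox w hw
    refine ⟨_, Metric.mem_cthickening_of_dist_le _ w 1 A hw ?_, hint Q hQ z, hz⟩
    rw [dist_comm]
    exact (le_mul_of_one_le_right dist_nonneg hN).trans (hz.trans hη1)
  have hlim : Tendsto (fun η : ℝ => ENNReal.ofReal ((2 * max M 0 + 1) * (2 * (C * η))))
      (𝓝[>] 0) (𝓝 0) := by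
    refine Tendsto.mono_left (Continuous.tendsto' ?_ 0 0 ?_) nhdsWithin_le_nhds
    · exact ENNReal.continuous_ofReal.comp (by fun_prop)
    · simp only [mul_zero, ENNReal.ofReal_zero]
  exact nonpos_iff_eq_zero.1
    (ge_of_tendsto hlim (eventually_of_mem (Ioc_mem_nhdsGT one_pos) hscale))

end UniformlyApproximable

theorem uniformlyApproximable_range_sparseReal {b : ℕ} [NeZero b] (hb : 1 < b) {e : ℕ → ℕ}
    (he : StrictMono e) {D : ℕ} (hgap : ∀ k, ∃ m, D * e m + k ≤ e (m + 1)) :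
    UniformlyApproximable D (range (sparseReal (b := b) e)) := by
  intro η hη
  obtain ⟨k, hk⟩ := exists_pow_lt_of_lt_one hη (inv_lt_one_of_one_lt₀ (mod_cast hb : (1 : ℝ) < b))
  obtain ⟨m, hm⟩ := hgap (D + k)
  refine ⟨b ^ (e m + 1), by positivity, ?_⟩
  rintro _ ⟨a, rfl⟩
  have hzero : ∀ i, e m + 1 ≤ i → i < e (m + 1) → Function.extend e a 0 i = 0 := by
    intro i hmi him
    refine Function.extend_apply' a (0 : ℕ → Fin b) i ?_
    rintro ⟨j, rfl⟩
    have hmj := he.lt_iff_lt.1 (Nat.lt_of_succ_le hmi)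
    have hjm := he.lt_iff_lt.1 him
    omega
  obtain ⟨z, hz⟩ := exists_abs_ofDigits_sub_div_le (he m.lt_succ_self) hzero
  refine ⟨z, ?_⟩
  push_cast
  calc |sparseReal e a - z / (b : ℝ) ^ (e m + 1)| * ((b : ℝ) ^ (e m + 1)) ^ D
      ≤ ((b : ℝ) ^ e (m + 1))⁻¹ * ((b : ℝ) ^ (e m + 1)) ^ D := by gcongr; exact hz
    _ ≤ ((b : ℝ) ^ (D * e m + (D + k)))⁻¹ * ((b : ℝ) ^ (e m + 1)) ^ D := by
        gcongr
        exact_mod_cast hb.le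
    _ = (b : ℝ)⁻¹ ^ k := by
        rw [← pow_mul, inv_pow, add_one_mul, mul_comm (e m) D, ← add_assoc, pow_add _ _ k]
        field_simp
    _ ≤ η := hk.le

end UniformlyApproximable

section Dimension

variable {ι : Type*} [Fintype ι]

theorem card_mul_le_dimH_pi {C r : ℝ≥0} (hr : 0 < r) {f : ℝ → ℝ} {S : Set ℝ}
    (hf : HolderOnWith C r f S) (hne : (interior (f '' S)).Nonempty) :
    (Fintype.card ι : ℝ≥0∞) * r ≤ dimH (univ.pi fun _ : ι => S) := by
  have hpi : HolderOnWith C r (Pi.map fun _ : ι => f) (univ.pi fun _ => S) := by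
    intro x hx y hy
    refine edist_pi_le_iff.2 fun i => (hf.edist_le (hx i (mem_univ i)) (hy i (mem_univ i))).trans ?_
    gcongr
    exact edist_le_pi_edist x y i
  have hcube : dimH ((Pi.map fun _ : ι => f) '' univ.pi fun _ => S) = Fintype.card ι := by
    rw [Real.dimH_of_nonempty_interior, Module.finrank_fintype_fun_eq_card]
    rw [piMap_image_univ_pi, interior_pi_set finite_univ]
    exact univ_pi_nonempty_iff.2 fun _ => hne
  exact ENNReal.mul_le_of_le_div (hcube ▸ hpi.dimH_image_le hr)

theorem exists_compact_uniformlyApproximable {D : ℕ} (hD : D ≠ 0) {r : ℝ≥0} (hr : 0 < r)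
    (hrD : r * D < 1) :
    ∃ S : Set ℝ, IsCompact S ∧ UniformlyApproximable D S ∧
      (Fintype.card ι : ℝ≥0∞) * r ≤ dimH (univ.pi fun _ : ι => S) := by
  obtain ⟨e, he, ⟨L, hfree⟩, hgrowth, hgap⟩ :=
    exists_strictMono_gap hD (NNReal.coe_pos.2 hr) (mod_cast hrD)
  obtain ⟨C, f, hf, hdigits⟩ := exists_holderOnWith_sparseReal one_lt_two he hfree hr hgrowth
  refine ⟨range (sparseReal (b := 2) e), isCompact_range (continuous_sparseReal e),
    uniformlyApproximable_range_sparseReal one_lt_two he hgap, card_mul_le_dimH_pi hr hf ?_⟩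
  have himage : Icc 0 1 ⊆ f '' range (sparseReal (b := 2) e) := by
    intro x hx
    obtain ⟨a, -, rfl⟩ := Real.ofDigits_SurjOn one_lt_two hx
    exact ⟨_, mem_range_self a, hdigits a⟩
  refine Nonempty.mono (interior_mono himage) ?_
  rw [interior_Icc]
  exact nonempty_Ioo.2 one_pos

theorem exists_compact_uniformlyApproximable_lt_dimH_pi [Nonempty ι] {D : ℕ} (hD : D ≠ 0) {x : ℝ}
    (hx : x < Fintype.card ι / D) :
    ∃ S : Set ℝ, IsCompact S ∧ UniformlyApproximable D S ∧
      ENNReal.ofReal x < dimH (univ.pi fun _ : ι => S) := by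
  have hcard : (0 : ℝ) < Fintype.card ι := mod_cast Fintype.card_pos
  have hD0 : (0 : ℝ) < D := mod_cast Nat.pos_of_ne_zero hD
  have hlt : max (x / Fintype.card ι) 0 < (D : ℝ)⁻¹ :=
    max_lt (by rwa [div_lt_iff₀' hcard, ← div_eq_mul_inv]) (by positivity)
  obtain ⟨r, hr, hrD⟩ := exists_between hlt
  obtain ⟨hxr, hr0⟩ := max_lt_iff.1 hr
  lift r to ℝ≥0 using hr0.le
  obtain ⟨S, hScompact, hSapprox, hSdim⟩ :=
    exists_compact_uniformlyApproximable (ι := ι) hD (NNReal.coe_pos.1 hr0)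
      (mod_cast (lt_inv_mul_iff₀' hD0).1 (by simpa using hrD))
  refine ⟨S, hScompact, hSapprox, lt_of_lt_of_le ?_ hSdim⟩
  calc ENNReal.ofReal x < ENNReal.ofReal (Fintype.card ι * r) :=
        (ENNReal.ofReal_lt_ofReal_iff (by positivity)).2 ((div_lt_iff₀' hcard).1 hxr)
    _ = Fintype.card ι * r := by
        rw [ENNReal.ofReal_mul hcard.le, ENNReal.ofReal_natCast, ENNReal.ofReal_coe_nnreal]

end Dimension

section Paraboloid

variable {n : ℕ}

/-- The point `(x, |x|²)` of the standard paraboloid in `ℝ ^ (n + 1)`, for `x ∈ ℝ ^ n`. Here `x`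
lives in `Fin n → ℝ`, so that product sets are available as `Set.pi`; `|x|²` is therefore written
as a sum. -/
noncomputable def paraboloidLift (x : Fin n → ℝ) : EuclideanSpace ℝ (Fin (n + 1)) :=
  WithLp.toLp 2 (Fin.snoc x (∑ i, x i ^ 2))

theorem paraboloidLift_castSucc (x : Fin n → ℝ) (i : Fin n) :
    paraboloidLift x i.castSucc = x i :=
  Fin.snoc_castSucc (α := fun _ => ℝ) _ _ i

theorem paraboloidLift_last (x : Fin n → ℝ) :
    paraboloidLift x (Fin.last n) = ∑ i, x i ^ 2 :=
  Fin.snoc_last (α := fun _ => ℝ) _ _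

theorem continuous_paraboloidLift : Continuous (paraboloidLift (n := n)) := by
  have hlast : Continuous fun x : Fin n → ℝ => ∑ i, x i ^ 2 := by fun_prop
  exact (PiLp.continuous_toLp 2 _).comp
    (Continuous.finSnoc (A := fun _ : Fin (n + 1) => ℝ) continuous_id hlast)

theorem paraboloidLift_mem_stdParaboloid (x : Fin n → ℝ) :
    paraboloidLift x ∈ stdParaboloid (n + 1) := by
  refine ⟨WithLp.toLp 2 x, funext fun i => ?_⟩
  refine i.lastCases ?_ fun j => ?_
  · simp [paraboloidLift_last, EuclideanSpace.real_norm_sq_eq]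
  · simp [paraboloidLift_castSucc]

theorem inner_paraboloidLift (x y : Fin n → ℝ) :
    ⟪paraboloidLift x, paraboloidLift y⟫ =
      ∑ i, x i * y i + (∑ i, x i ^ 2) * ∑ i, y i ^ 2 := by
  simp only [PiLp.inner_apply, Fin.sum_univ_castSucc, paraboloidLift_castSucc, paraboloidLift_last,
    Real.inner_apply]

theorem dimH_le_dimH_image_paraboloidLift (A : Set (Fin n → ℝ)) :
    dimH A ≤ dimH (paraboloidLift '' A) := by
  have hlip : LipschitzWith 1
      fun (p : EuclideanSpace ℝ (Fin (n + 1))) (i : Fin n) => p i.castSucc :=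
    LipschitzWith.of_dist_le_mul fun p q => by
      rw [NNReal.coe_one, one_mul, dist_pi_le_iff dist_nonneg]
      exact fun i => PiLp.dist_apply_le p q i.castSucc
  have himage := hlip.dimH_image_le (paraboloidLift '' A)
  simpa only [image_image, paraboloidLift_castSucc, image_id'] using himage

theorem exists_inner_paraboloidLift_int_div (Q : ℕ) (z w : Fin n → ℤ) :
    ∃ p : ℤ, ⟪paraboloidLift fun i => z i / (Q : ℝ), paraboloidLift fun i => w i / (Q : ℝ)⟫ =
      p / (Q : ℝ) ^ 4 := by
  refine ⟨(∑ i, z i * w i) * Q ^ 2 + (∑ i, z i ^ 2) * ∑ i, w i ^ 2, ?_⟩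
  simp only [inner_paraboloidLift, div_mul_div_comm, div_pow, ← Finset.sum_div]
  push_cast
  field_simp

theorem volume_dotSet_image_paraboloidLift {S : Set ℝ} (hS : UniformlyApproximable 4 S)
    (hbdd : Bornology.IsBounded S) :
    volume (dotSet (paraboloidLift '' univ.pi fun _ : Fin n => S)) = 0 := by
  let Φ : (Fin n ⊕ Fin n → ℝ) → ℝ := fun w =>
    ⟪paraboloidLift fun i => w (.inl i), paraboloidLift fun i => w (.inr i)⟫
  have hΦ : LocallyLipschitz Φ := by
    refine ContDiff.locallyLipschitz (𝕂 := ℝ) ?_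
    simp only [Φ, inner_paraboloidLift]
    fun_prop
  refine measure_mono_null ?_ (hS.volume_image_pi_eq_zero hbdd hΦ fun Q _ z =>
    exists_inner_paraboloidLift_int_div Q _ _)
  rintro _ ⟨_, ⟨x, hx, rfl⟩, _, ⟨y, hy, rfl⟩, rfl⟩
  exact ⟨Sum.elim x y, by rintro (i | i) -; exacts [hx i trivial, hy i trivial], rfl⟩

end Paraboloid

/-- For `d ≥ 2` and every `ε > 0` there is a compact subset `F` of the standard
paraboloid `P_d` with Hausdorff dimension greater than `(d-1)/4 - ε` whose dot product
set has Lebesgue measure zero. -/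
theorem paraboloid_counterexample_quarter
    (d : ℕ) (hd : 2 ≤ d) (ε : ℝ) (hε : 0 < ε) :
    ∃ F : Set (EuclideanSpace ℝ (Fin d)), F ⊆ stdParaboloid d ∧ IsCompact F ∧
      ENNReal.ofReal (((d : ℝ) - 1) / 4 - ε) < dimH F ∧ volume (dotSet F) = 0 := by
  obtain ⟨n, rfl⟩ : ∃ n, d = n + 1 := ⟨d - 1, by omega⟩
  have : Nonempty (Fin n) := ⟨⟨0, by omega⟩⟩
  have hdim : ((n + 1 : ℕ) - 1 : ℝ) / 4 - ε < Fintype.card (Fin n) / (4 : ℕ) := by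
    rw [Fintype.card_fin]
    push_cast
    linarith
  obtain ⟨S, hScompact, hSapprox, hSdim⟩ :=
    exists_compact_uniformlyApproximable_lt_dimH_pi four_ne_zero hdim
  refine ⟨paraboloidLift '' univ.pi fun _ => S, ?_,
    (isCompact_univ_pi fun _ => hScompact).image continuous_paraboloidLift,
    hSdim.trans_le (dimH_le_dimH_image_paraboloidLift _),
    volume_dotSet_image_paraboloidLift hSapprox hScompact.isBounded⟩
  rintro _ ⟨x, -, rfl⟩
  exact paraboloidLift_mem_stdParaboloid x
end
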